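/- arXiv:1504.00173 — 2 statements merged into one kernel-verified Lean document; each statement's English description precedes it below -/
import Mathlib

section
/- In a 3-connected finite planar graph, if C is a cycle that is induced and non-separating, then in every planar embedding C bounds a face. -/
open SimpleGraph

/-- A topological embedding of a graph `G` in the plane: vertices are points, edges are
arcs meeting only at common endpoints and avoiding other vertices. -/
structure PlanarEmbedding {V : Type*} (G : SimpleGraph V) where
  vpos : V → ℝ × ℝ
  vinj : Function.Injective vpos
  arc : ∀ ⦃u v : V⦄, G.Adj u v → Set (ℝ × ℝ)
  arc_isArc : ∀ ⦃u v : V⦄ (h : G.Adj u v),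
    ∃ f : Path (vpos u) (vpos v), Function.Injective f ∧ Set.range f = arc h
  arc_symm : ∀ ⦃u v : V⦄ (h : G.Adj u v), arc h.symm = arc h
  arc_inter : ∀ ⦃u v u' v' : V⦄ (h : G.Adj u v) (h' : G.Adj u' v'),
    s(u, v) ≠ s(u', v') → arc h ∩ arc h' ⊆ vpos '' (({u, v} : Set V) ∩ {u', v'})
  arc_vertex : ∀ ⦃u v : V⦄ (h : G.Adj u v) (w : V), vpos w ∈ arc h → w = u ∨ w = v

/-- The point set of the embedded graph. -/
def PlanarEmbedding.image {V : Type*} {G : SimpleGraph V} (emb : PlanarEmbedding G) :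
    Set (ℝ × ℝ) :=
  Set.range emb.vpos ∪ ⋃ (u : V) (v : V) (h : G.Adj u v), emb.arc h

/-- A face of the embedding: a connected component of the complement of the image. -/
def PlanarEmbedding.IsFace {V : Type*} {G : SimpleGraph V} (emb : PlanarEmbedding G)
    (F : Set (ℝ × ℝ)) : Prop :=
  ∃ x ∈ emb.imageᶜ, F = connectedComponentIn emb.imageᶜ x

/-- The boundary of a face: the set of edges whose arcs lie in the closure of the face. -/
def PlanarEmbedding.boundaryEdges {V : Type*} {G : SimpleGraph V} (emb : PlanarEmbedding G)
    (F : Set (ℝ × ℝ)) : Set (Sym2 V) :=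
  {e | ∃ (u v : V) (h : G.Adj u v), e = s(u, v) ∧ emb.arc h ⊆ closure F}

/-- A peripheral cycle: a cycle that is induced (chordless) and non-separating. -/
def IsPeripheral {V : Type*} (G : SimpleGraph V) {v : V} (w : G.Walk v v) : Prop :=
  w.IsCycle ∧ (∀ a ∈ w.support, ∀ b ∈ w.support, G.Adj a b → s(a, b) ∈ w.edges) ∧
    ({x | x ∉ w.support} = (∅ : Set V) ∨ (G.induce {x | x ∉ w.support}).Connected)

/-- A 3-connected graph: more than 3 vertices, and removing any at most 2 vertices leaves
it connected. -/
def ThreeConnected {V : Type*} (G : SimpleGraph V) : Prop :=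
  (3 < Nat.card V ∨ Infinite V) ∧
    ∀ s : Set V, s.Finite → s.ncard ≤ 2 → (G.induce sᶜ).Connected

/-- A locally finite graph has exactly one end. -/
def OneEnded {V : Type*} (G : SimpleGraph V) : Prop :=
  ∀ K : Finset V, ∃! C : G.ComponentCompl (K : Set V), C.supp.Infinite


open scoped unitInterval in
theorem exp_homotopy_lift {A : Type*} [TopologicalSpace A] (H : I × A → ℂ) (hc : Continuous H)
    (h0 : ∀ x, H x ≠ 0) (h1 : ∀ a, H (0, a) = 1) :
    ∃ L : I × A → ℂ, Continuous L ∧ (∀ a, L (0, a) = 0) ∧ ∀ x, Complex.exp (L x) = H x := by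
  let H' : C(I × A, {z : ℂ // z ≠ 0}) := ⟨fun x => ⟨H x, h0 x⟩, by fun_prop⟩
  let f : C(A, ℂ) := .const A 0
  have H0 : ∀ a, H' (0, a) = (fun z : ℂ ↦ (⟨_, z.exp_ne_zero⟩ : {z : ℂ // z ≠ 0})) (f a) := by
    intro a; apply Subtype.ext; simp [H', f, h1]
  refine ⟨Complex.isCoveringMap_exp.liftHomotopy H' f H0, ContinuousMap.continuous _,
    Complex.isCoveringMap_exp.liftHomotopy_zero H' f H0, fun x => ?_⟩
  have := congr_fun (Complex.isCoveringMap_exp.liftHomotopy_lifts H' f H0) x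
  exact congrArg Subtype.val this

/-- Every nonvanishing continuous function on `K` has a continuous logarithm. -/
def HasLog {X : Type*} [TopologicalSpace X] (K : Set X) : Prop :=
  ∀ φ : X → ℂ, ContinuousOn φ K → (∀ z ∈ K, φ z ≠ 0) →
    ∃ L : X → ℂ, ContinuousOn L K ∧ ∀ z ∈ K, Complex.exp (L z) = φ z

theorem HasLog.singleton {X : Type*} [TopologicalSpace X] (c : X) : HasLog ({c} : Set X) := by
  intro φ _ h0
  refine ⟨fun _ => Complex.log (φ c), continuousOn_const, ?_⟩
  rintro z rfl
  exact Complex.exp_log (h0 _ rfl)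

theorem HasLog.union {X : Type*} [TopologicalSpace X] {K₁ K₂ : Set X} (h₁ : HasLog K₁)
    (h₂ : HasLog K₂) (c₁ : IsClosed K₁) (c₂ : IsClosed K₂) {c : X} (hc1 : c ∈ K₁) (hc2 : c ∈ K₂)
    (hc : K₁ ∩ K₂ ⊆ {c}) : HasLog (K₁ ∪ K₂) := by
  classical
  intro φ hφ h0
  obtain ⟨L₁, hL₁, e₁⟩ := h₁ φ (hφ.mono Set.subset_union_left) (fun z hz => h0 z (Or.inl hz))
  obtain ⟨L₂, hL₂, e₂⟩ := h₂ φ (hφ.mono Set.subset_union_right) (fun z hz => h0 z (Or.inr hz))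
  let L : X → ℂ := fun z => if z ∈ K₁ then L₁ z else L₂ z + (L₁ c - L₂ c)
  have E1 : ∀ z ∈ K₁, L z = L₁ z := fun z hz => if_pos hz
  have E2 : ∀ z ∈ K₂, L z = L₂ z + (L₁ c - L₂ c) := by
    intro z hz
    by_cases h : z ∈ K₁
    · have : z = c := hc ⟨h, hz⟩
      subst this
      rw [E1 _ h]; ring
    · exact if_neg h
  refine ⟨L, ?_, ?_⟩
  · apply ContinuousOn.union_of_isClosed _ _ c₁ c₂
    · exact hL₁.congr E1
    · exact (hL₂.add continuousOn_const).congr E2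
  · rintro z (hz | hz)
    · rw [E1 z hz, e₁ z hz]
    · rw [E2 z hz, Complex.exp_add, Complex.exp_sub, e₁ c hc1, e₂ c hc2, e₂ z hz,
        div_self (h0 c (Or.inl hc1)), mul_one]

open scoped unitInterval in
theorem HasLog.arc {X : Type*} [TopologicalSpace X] [T2Space X] {f : I → X} (hf : Continuous f)
    (hi : Function.Injective f) {s s' : I} (hs : s ≤ s') : HasLog (f '' Set.Icc s s') := by
  intro φ hφ h0
  let c : I → I := fun t => max s (min s' t)
  have cc : Continuous c := by fun_prop
  have cm : ∀ t, c t ∈ Set.Icc s s' := fun t => ⟨le_max_left _ _, max_le hs (min_le_left _ _)⟩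
  have ce : ∀ t ∈ Set.Icc s s', c t = t := fun t ht => by
    simp [c, ht.1, ht.2]
  have hψ : Continuous (fun t => φ (f (c t))) :=
    hφ.comp_continuous (hf.comp cc) (fun t => Set.mem_image_of_mem _ (cm t))
  have hψ0 : ∀ t, φ (f (c t)) ≠ 0 := fun t => h0 _ (Set.mem_image_of_mem _ (cm t))
  obtain ⟨L, hL, -, hLe⟩ := exp_homotopy_lift (A := Unit)
    (fun x => φ (f (c x.1)) / φ (f (c 0)))
    ((hψ.comp continuous_fst).div_const _) (fun x => div_ne_zero (hψ0 _) (hψ0 _))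
    (fun a => div_self (hψ0 _))
  have hemb : Topology.IsClosedEmbedding f := hf.isClosedEmbedding hi
  let M : I → ℂ := fun t => L (t, ()) + Complex.log (φ (f (c 0)))
  have hM : Continuous M := by fun_prop
  have key : ∀ t, (M ∘ Function.invFun f) (f t) = M t := fun t => by
    simp [Function.leftInverse_invFun hi t]
  refine ⟨M ∘ Function.invFun f, ?_, ?_⟩
  · apply ContinuousOn.mono _ (Set.image_subset_range _ _)
    rw [← Set.image_univ]
    apply (hemb.isInducing.continuousOn_image_iff).2
    rw [continuousOn_univ]
    exact hM.congr (fun t => (key t).symm)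
  · rintro _ ⟨t, ht, rfl⟩
    rw [key, Complex.exp_add, hLe, Complex.exp_log (hψ0 _), ce t ht, div_mul_cancel₀ _ (hψ0 _)]

/-- `z - a` has no continuous log on a circle about `a`. -/
theorem no_log_circle (a : ℂ) {r : ℝ} (hr : 0 < r) (L : ℂ → ℂ)
    (hL : ContinuousOn L (Metric.sphere a r))
    (he : ∀ z ∈ Metric.sphere a r, Complex.exp (L z) = z - a) : False := by
  let g : ℝ → ℂ := fun θ => L (circleMap a r θ) - θ * Complex.I
  have hm : ∀ θ, circleMap a r θ ∈ Metric.sphere a r := fun θ => circleMap_mem_sphere a hr.le θ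
  have hg : Continuous g := by
    apply Continuous.sub
    · exact hL.comp_continuous (continuous_circleMap a r) hm
    · fun_prop
  have hge : ∀ θ, Complex.exp (g θ) = r := by
    intro θ
    simp only [g]
    rw [Complex.exp_sub, he _ (hm θ), circleMap_sub_center, circleMap_zero]
    field_simp [Complex.exp_ne_zero]
  have hconst : g 0 = g (2 * Real.pi) := by
    exact Complex.isCoveringMap_exp.const_of_comp hg
      (fun x y => Subtype.ext ((hge x).trans (hge y).symm)) 0 (2 * Real.pi)
  have hper : circleMap a r (2 * Real.pi) = circleMap a r 0 := by
    simpa using periodic_circleMap a r 0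
  simp only [g, hper] at hconst
  have : (2 * Real.pi : ℂ) * Complex.I = 0 := by
    have h := sub_right_injective hconst
    simpa using h.symm
  simp [Real.pi_ne_zero] at this

open scoped unitInterval in
theorem entire_log {f : ℂ → ℂ} (hf : Continuous f) (h0 : ∀ z, f z ≠ 0) :
    ∃ L : ℂ → ℂ, Continuous L ∧ ∀ z, Complex.exp (L z) = f z := by
  obtain ⟨L, hL, -, hLe⟩ := exp_homotopy_lift (A := ℂ)
    (fun x => f (((x.1 : ℝ) : ℂ) * x.2) / f 0)
    (by fun_prop) (fun x => div_ne_zero (h0 _) (h0 _))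
    (fun a => by simp [h0])
  refine ⟨fun z => L (1, z) + Complex.log (f 0), by fun_prop, fun z => ?_⟩
  rw [Complex.exp_add, hLe, Complex.exp_log (h0 _)]
  simp [h0]

/-- A relatively closed piece: the frontier of a component of an open set is outside the set. -/
theorem closure_component_inter {X : Type*} [TopologicalSpace X] [LocallyConnectedSpace X]
    {U : Set X} {x z : X} (hz : z ∈ closure (connectedComponentIn U x)) (hzU : z ∈ U) :
    z ∈ connectedComponentIn U x := by
  by_cases hx : x ∈ U
  · have hp : IsPreconnected (insert z (connectedComponentIn U x)) := by
      apply isPreconnected_connectedComponentIn.subset_closure (Set.subset_insert _ _)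
      intro y hy
      rcases hy with rfl | hy
      · exact hz
      · exact subset_closure hy
    apply hp.subset_connectedComponentIn (Or.inr (mem_connectedComponentIn hx))
      (Set.insert_subset hzU (connectedComponentIn_subset _ _))
    exact Or.inl rfl
  · rw [connectedComponentIn_eq_empty hx] at hz
    simp at hz

theorem HasLog.component_unbounded {K : Set ℂ} (hK : IsCompact K) (h : HasLog K) {a : ℂ}
    (ha : a ∈ Kᶜ) (R : ℝ) : ¬ connectedComponentIn Kᶜ a ⊆ Metric.ball a R := by
  classical
  intro hb
  set U := connectedComponentIn Kᶜ a with hU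
  have haU : a ∈ U := mem_connectedComponentIn ha
  have hUo : IsOpen U := hK.isClosed.isOpen_compl.connectedComponentIn
  have hR : 0 < R := by simpa using hb haU
  obtain ⟨g, hg, hge⟩ := h (fun z => z - a) (by fun_prop)
    (fun z hz => sub_ne_zero.2 (fun e => ha (e ▸ hz)))
  obtain ⟨G, hG⟩ := ContinuousMap.exists_restrict_eq (Y := ℂ) hK.isClosed
    ⟨K.domRestrict g, continuousOn_iff_continuous_domRestrict.1 hg⟩
  have hGK : ∀ z ∈ K, G z = g z := fun z hz => by
    exact DFunLike.congr_fun hG ⟨z, hz⟩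
  let f : ℂ → ℂ := fun z => if z ∈ U then Complex.exp (G z) else z - a
  have hfr : ∀ z ∈ frontier U, z ∈ K := by
    intro z hz
    by_contra hzK
    rw [hUo.frontier_eq] at hz
    exact hz.2 (closure_component_inter hz.1 hzK)
  have hf : Continuous f := by
    apply Continuous.if
    · intro z hz
      have := hfr z hz
      rw [hGK z this, hge z this]
    · fun_prop
    · fun_prop
  have hf0 : ∀ z, f z ≠ 0 := by
    intro z
    by_cases hz : z ∈ U
    · simp only [f, if_pos hz]; exact Complex.exp_ne_zero _
    · simp only [f, if_neg hz]
      exact sub_ne_zero.2 (fun e => hz (e ▸ haU))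
  obtain ⟨L, hL, hLe⟩ := entire_log hf hf0
  refine no_log_circle a hR L hL.continuousOn fun z hz => ?_
  have : z ∉ U := fun h => by
    have := hb h
    rw [Metric.mem_ball] at this
    rw [Metric.mem_sphere] at hz
    linarith
  rw [hLe]
  exact if_neg this

theorem isPreconnected_norm_ge {R : ℝ} (hR : 0 < R) : IsPreconnected {z : ℂ | R ≤ ‖z‖} := by
  have : {z : ℂ | R ≤ ‖z‖} = Complex.exp '' {z | Real.log R ≤ z.re} := by
    ext z
    constructor
    · intro hz
      have hz0 : z ≠ 0 := by
        rintro rfl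
        simp at hz; linarith
      refine ⟨Complex.log z, ?_, Complex.exp_log hz0⟩
      simp only [Set.mem_ofPred_eq, Complex.log_re]
      exact Real.log_le_log hR hz
    · rintro ⟨y, hy, rfl⟩
      simp only [Set.mem_ofPred_eq, Complex.norm_exp] at *
      rwa [← Real.log_le_iff_le_exp hR]
  rw [this]
  apply IsPreconnected.image
  · exact (convex_halfSpace_re_ge _).isPreconnected
  · exact Complex.continuous_exp.continuousOn

theorem HasLog.compl_preconnected {K : Set ℂ} (hK : IsCompact K) (h : HasLog K) :
    IsPreconnected Kᶜ := by
  obtain ⟨R, hR, hKR⟩ : ∃ R : ℝ, 0 < R ∧ ∀ z ∈ K, ‖z‖ < R := by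
    obtain ⟨R, hR⟩ := hK.isBounded.exists_norm_le
    refine ⟨max R 0 + 1, by positivity, fun z hz => ?_⟩
    have := hR z hz
    have := le_max_left R 0
    linarith
  set O := {z : ℂ | R ≤ ‖z‖} with hO
  have hOp := isPreconnected_norm_ge hR
  have hOK : O ⊆ Kᶜ := fun z hz hzK => by
    have := hKR z hzK
    simp only [hO, Set.mem_ofPred_eq] at hz
    linarith
  have hR0 : (R : ℂ) ∈ O := by simp [hO, abs_of_pos hR]
  apply isPreconnected_of_forall (R : ℂ)
  intro x hx
  obtain ⟨y, hy, hy'⟩ := Set.not_subset.1 (h.component_unbounded hK hx (R + ‖x‖))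
  have hyO : y ∈ O := by
    simp only [Metric.mem_ball, dist_eq_norm, not_lt, hO, Set.mem_ofPred_eq] at *
    have := norm_sub_le y x
    linarith
  refine ⟨connectedComponentIn Kᶜ x ∪ O, Set.union_subset (connectedComponentIn_subset _ _) hOK,
    Or.inr hR0, Or.inl (mem_connectedComponentIn hx), ?_⟩
  exact IsPreconnected.union y hy hyO isPreconnected_connectedComponentIn hOp

open scoped unitInterval in
theorem log_off_path {p q : ℂ} (α : Path p q) :
    ∃ L : ℂ → ℂ, ContinuousOn L (Set.range α)ᶜ ∧
      ∀ z ∈ (Set.range α)ᶜ, Complex.exp (L z) = (z - q) / (z - p) := by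
  have hne : ∀ (z : ((Set.range α)ᶜ : Set ℂ)) (t : I), (z : ℂ) - α t ≠ 0 := fun z t =>
    sub_ne_zero.2 (fun e => z.2 ⟨t, e.symm⟩)
  obtain ⟨L, hL, -, hLe⟩ := exp_homotopy_lift (A := ((Set.range α)ᶜ : Set ℂ))
    (fun x => ((x.2 : ℂ) - α x.1) / ((x.2 : ℂ) - α 0))
    (by
      apply Continuous.div
      · fun_prop
      · fun_prop
      · exact fun x => hne x.2 0)
    (fun x => div_ne_zero (hne _ _) (hne _ _))
    (fun a => div_self (hne _ _))
  classical
  refine ⟨fun z => if hz : z ∈ (Set.range α)ᶜ then L (1, ⟨z, hz⟩) else 0, ?_, ?_⟩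
  · rw [continuousOn_iff_continuous_domRestrict]
    have : Continuous (fun z : ((Set.range α)ᶜ : Set ℂ) => L (1, z)) := by fun_prop
    convert this using 2 with z
    have := z.2
    simp only [Set.domRestrict_apply]
    rw [dif_pos this]
  · intro z hz
    simp only [dif_pos hz]
    rw [hLe]
    simp

theorem jordan_separation {p q : ℂ} (hpq : p ≠ q) (α β : Path p q)
    (hαβ : Set.range α ∩ Set.range β ⊆ {p, q}) :
    ¬ IsPreconnected (Set.range α ∪ Set.range β)ᶜ := by
  classical
  intro hpre
  obtain ⟨L, hL, hLe⟩ := log_off_path α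
  obtain ⟨M, hM, hMe⟩ := log_off_path β
  have hoA : IsOpen (Set.range α)ᶜ := (isCompact_range α.continuous).isClosed.isOpen_compl
  have hoB : IsOpen (Set.range β)ᶜ := (isCompact_range β.continuous).isClosed.isOpen_compl
  -- the difference is constant
  obtain ⟨c, hc, hc1⟩ : ∃ c : ℂ, (∀ z ∈ (Set.range α ∪ Set.range β)ᶜ, L z - M z = c) ∧
      Complex.exp c = 1 := by
    have he : ∀ z ∈ (Set.range α ∪ Set.range β)ᶜ, Complex.exp (L z - M z) = 1 := by
      intro z hz
      rw [Set.compl_union] at hz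
      rw [Complex.exp_sub, hLe z hz.1, hMe z hz.2]
      apply div_self
      apply div_ne_zero
      · exact sub_ne_zero.2 (fun e => hz.1 ⟨1, by simp [e]⟩)
      · exact sub_ne_zero.2 (fun e => hz.1 ⟨0, by simp [e]⟩)
    rcases Set.eq_empty_or_nonempty (Set.range α ∪ Set.range β)ᶜ with h | ⟨z₀, hz₀⟩
    · exact ⟨0, by simp [h], by simp⟩
    · refine ⟨L z₀ - M z₀, fun z hz => ?_, he z₀ hz₀⟩
      have := isPreconnected_iff_preconnectedSpace.1 hpre
      let g : ((Set.range α ∪ Set.range β)ᶜ : Set ℂ) → ℂ := fun z => L z - M z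
      have hg : Continuous g := by
        have h1 : ContinuousOn (fun z => L z - M z) (Set.range α ∪ Set.range β)ᶜ := by
          rw [Set.compl_union]
          exact (hL.mono Set.inter_subset_left).sub (hM.mono Set.inter_subset_right)
        exact continuousOn_iff_continuous_domRestrict.1 h1
      exact Complex.isCoveringMap_exp.const_of_comp hg
        (fun x y => Subtype.ext ((he x x.2).trans (he y y.2).symm)) ⟨z, hz⟩ ⟨z₀, hz₀⟩
  let N : ℂ → ℂ := fun z => if z ∈ (Set.range α)ᶜ then L z else M z + c
  have N1 : ∀ z ∈ (Set.range α)ᶜ, N z = L z := fun z hz => if_pos hz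
  have N2 : ∀ z ∈ (Set.range β)ᶜ, N z = M z + c := by
    intro z hz
    by_cases h : z ∈ (Set.range α)ᶜ
    · rw [N1 z h, ← hc z (by rw [Set.compl_union]; exact ⟨h, hz⟩)]; ring
    · exact if_neg h
  have hN : ContinuousOn N ((Set.range α)ᶜ ∪ (Set.range β)ᶜ) :=
    ContinuousOn.union_of_isOpen (hL.congr N1) ((hM.add continuousOn_const).congr N2) hoA hoB
  have hNe : ∀ z ∈ (Set.range α)ᶜ ∪ (Set.range β)ᶜ, Complex.exp (N z) = (z - q) / (z - p) := by
    rintro z (hz | hz)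
    · rw [N1 z hz, hLe z hz]
    · rw [N2 z hz, Complex.exp_add, hMe z hz, hc1, mul_one]
  have hd : 0 < dist p q := dist_pos.2 hpq
  have hmem : ∀ z ∈ Metric.sphere p (dist p q / 2), z ∈ (Set.range α)ᶜ ∪ (Set.range β)ᶜ := by
    intro z hz
    rw [← Set.compl_inter]
    intro h
    rw [Metric.mem_sphere] at hz
    rcases hαβ h with rfl | h
    · rw [_root_.dist_self] at hz; linarith
    · rw [Set.mem_singleton_iff] at h
      subst h
      rw [_root_.dist_comm] at hz
      linarith
  have hpq' : p - q ≠ 0 := sub_ne_zero.2 hpq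
  have hslit : ∀ z ∈ Metric.sphere p (dist p q / 2), (z - q) / (p - q) ∈ Complex.slitPlane := by
    intro z hz
    have : (z - q) / (p - q) = 1 + (z - p) / (p - q) := by field_simp; ring
    rw [this]
    apply Complex.mem_slitPlane_of_norm_lt_one
    rw [norm_div, ← dist_eq_norm, ← dist_eq_norm, Metric.mem_sphere.1 hz, div_lt_one hd]
    linarith
  refine no_log_circle p (r := dist p q / 2) (by positivity)
    (fun z => Complex.log ((z - q) / (p - q)) + Complex.log (p - q) - N z) ?_ ?_
  · apply ContinuousOn.sub
    · apply ContinuousOn.add _ continuousOn_const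
      apply ContinuousOn.clog
      · fun_prop
      · exact hslit
    · exact hN.mono hmem
  · intro z hz
    have hzq : (z - q) / (p - q) ≠ 0 := Complex.slitPlane_ne_zero (hslit z hz)
    have hzq' : z - q ≠ 0 := fun h => hzq (by simp [h])
    have hzp : z - p ≠ 0 := by
      intro h
      have := sub_eq_zero.1 h
      subst this
      rw [Metric.mem_sphere, _root_.dist_self] at hz
      linarith
    rw [Complex.exp_sub, Complex.exp_add, Complex.exp_log hzq, Complex.exp_log hpq', hNe z (hmem z hz)]
    field_simp

/-- Transfer to `ℝ × ℝ`. -/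
theorem HasLog.compl_preconnected' {K : Set (ℝ × ℝ)} (hK : IsCompact K) (h : HasLog K) :
    IsPreconnected Kᶜ := by
  let e : ℝ × ℝ ≃ₜ ℂ := Complex.equivRealProdCLM.symm.toHomeomorph
  have h' : HasLog (e '' K) := by
    intro φ hφ h0
    obtain ⟨L, hL, hLe⟩ := h (φ ∘ e) (hφ.comp e.continuous.continuousOn (Set.mapsTo_image _ _))
      (fun z hz => h0 _ (Set.mem_image_of_mem _ hz))
    refine ⟨L ∘ e.symm, hL.comp e.symm.continuous.continuousOn ?_, ?_⟩
    · rintro _ ⟨z, hz, rfl⟩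
      simpa using hz
    · rintro _ ⟨z, hz, rfl⟩
      simpa using hLe z hz
  have := h'.compl_preconnected (hK.image e.continuous)
  rw [← e.image_compl] at this
  exact e.isPreconnected_image.1 this

theorem jordan_separation' {p q : ℝ × ℝ} (hpq : p ≠ q) (α β : Path p q)
    (hαβ : Set.range α ∩ Set.range β ⊆ {p, q}) :
    ¬ IsPreconnected (Set.range α ∪ Set.range β)ᶜ := by
  let e : ℝ × ℝ ≃ₜ ℂ := Complex.equivRealProdCLM.symm.toHomeomorph
  intro h
  have hr : ∀ γ : Path p q, Set.range (γ.map e.continuous) = e '' Set.range γ := fun γ => by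
    rw [← Set.range_comp]; rfl
  refine jordan_separation (e.injective.ne hpq) (α.map e.continuous) (β.map e.continuous) ?_ ?_
  · rw [hr, hr, ← Set.image_inter e.injective]
    rintro _ ⟨z, hz, rfl⟩
    rcases hαβ hz with rfl | rfl
    · simp
    · simp
  · rw [hr, hr, ← Set.image_union, ← e.image_compl]
    exact e.isPreconnected_image.2 h

/-! ## Graph part -/

theorem PlanarEmbedding.arc_congr {V : Type*} {G : SimpleGraph V} (emb : PlanarEmbedding G)
    {u v u' v' : V} (h : G.Adj u v) (h' : G.Adj u' v') (he : s(u, v) = s(u', v')) :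
    emb.arc h = emb.arc h' := by
  rcases Sym2.eq_iff.1 he with ⟨rfl, rfl⟩ | ⟨rfl, rfl⟩
  · rfl
  · exact emb.arc_symm h'

/-- The point set of a walk. -/
def walkSet {V : Type*} {G : SimpleGraph V} (emb : PlanarEmbedding G) :
    {u v : V} → G.Walk u v → Set (ℝ × ℝ)
  | u, _, .nil => {emb.vpos u}
  | _, _, .cons h p => emb.arc h ∪ walkSet emb p

section
variable {V : Type*} {G : SimpleGraph V} (emb : PlanarEmbedding G)

theorem left_mem_arc {u v : V} (h : G.Adj u v) : emb.vpos u ∈ emb.arc h := by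
  obtain ⟨f, -, hr⟩ := emb.arc_isArc h
  rw [← hr]; exact ⟨0, f.source⟩

theorem right_mem_arc {u v : V} (h : G.Adj u v) : emb.vpos v ∈ emb.arc h := by
  obtain ⟨f, -, hr⟩ := emb.arc_isArc h
  rw [← hr]; exact ⟨1, f.target⟩

theorem start_mem_walkSet {u v : V} (p : G.Walk u v) : emb.vpos u ∈ walkSet emb p := by
  cases p with
  | nil => simp [walkSet]
  | cons h p => exact Or.inl (left_mem_arc emb h)

theorem end_mem_walkSet {u v : V} (p : G.Walk u v) : emb.vpos v ∈ walkSet emb p := by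
  induction p with
  | nil => simp [walkSet]
  | cons h p ih => exact Or.inr ih

theorem mem_walkSet {u v : V} (p : G.Walk u v) (x : ℝ × ℝ) :
    x ∈ walkSet emb p ↔ x = emb.vpos v ∨
      ∃ (a b : V) (h : G.Adj a b), s(a, b) ∈ p.edges ∧ x ∈ emb.arc h := by
  induction p with
  | nil => simp [walkSet]
  | cons h p ih =>
    simp only [walkSet, Set.mem_union, ih, Walk.edges_cons, List.mem_cons]
    constructor
    · rintro (hx | hx | ⟨a, b, h', he, hx⟩)
      · exact Or.inr ⟨_, _, h, Or.inl rfl, hx⟩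
      · exact Or.inl hx
      · exact Or.inr ⟨a, b, h', Or.inr he, hx⟩
    · rintro (hx | ⟨a, b, h', he | he, hx⟩)
      · exact Or.inr (Or.inl hx)
      · left; rwa [emb.arc_congr h h' he.symm]
      · exact Or.inr (Or.inr ⟨a, b, h', he, hx⟩)

theorem exists_path_walkSet {u v : V} (p : G.Walk u v) :
    ∃ f : _root_.Path (emb.vpos u) (emb.vpos v), Set.range f = walkSet emb p := by
  induction p with
  | nil => exact ⟨_root_.Path.refl _, by simp [walkSet]⟩
  | cons h p ih =>
    obtain ⟨f, -, hf⟩ := emb.arc_isArc h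
    obtain ⟨g, hg⟩ := ih
    exact ⟨f.trans g, by rw [_root_.Path.trans_range, hf, hg]; rfl⟩

theorem isCompact_walkSet {u v : V} (p : G.Walk u v) : IsCompact (walkSet emb p) := by
  obtain ⟨f, hf⟩ := exists_path_walkSet emb p
  rw [← hf]; exact isCompact_range f.continuous

theorem isCompact_arc {u v : V} (h : G.Adj u v) : IsCompact (emb.arc h) := by
  obtain ⟨f, -, hf⟩ := emb.arc_isArc h
  rw [← hf]; exact isCompact_range f.continuous

/-- An arc meets the set of a walk not using its edge only in common vertices. -/
theorem arc_inter_walkSet {u v a b : V} (h : G.Adj a b) (p : G.Walk u v)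
    (hn : s(a, b) ∉ p.edges) {x : ℝ × ℝ} (hx : x ∈ emb.arc h) (hxp : x ∈ walkSet emb p) :
    ∃ c, (c = a ∨ c = b) ∧ c ∈ p.support ∧ x = emb.vpos c := by
  rcases (mem_walkSet emb p x).1 hxp with rfl | ⟨a', b', h', he, hx'⟩
  · exact ⟨v, emb.arc_vertex h v hx, p.end_mem_support, rfl⟩
  · obtain ⟨c, ⟨hc1, hc2⟩, rfl⟩ := emb.arc_inter h h' (fun e => hn (e ▸ he)) ⟨hx, hx'⟩
    refine ⟨c, hc1, ?_, rfl⟩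
    rcases hc2 with rfl | hc2
    · exact p.fst_mem_support_of_mem_edges he
    · rw [Set.mem_singleton_iff] at hc2
      subst hc2
      exact p.snd_mem_support_of_mem_edges he

theorem vpos_mem_walkSet {u v c : V} (p : G.Walk u v) (h : emb.vpos c ∈ walkSet emb p) :
    c ∈ p.support := by
  rcases (mem_walkSet emb p _).1 h with h | ⟨a, b, h', he, hx⟩
  · rw [emb.vinj h]; exact p.end_mem_support
  · rcases emb.arc_vertex h' c hx with rfl | rfl
    · exact p.fst_mem_support_of_mem_edges he
    · exact p.snd_mem_support_of_mem_edges he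

theorem hasLog_walkSet {u v : V} (p : G.Walk u v) (hp : p.IsPath) : HasLog (walkSet emb p) := by
  induction p with
  | nil => exact HasLog.singleton _
  | @cons u v w h p ih =>
    rw [Walk.cons_isPath_iff] at hp
    obtain ⟨f, hi, hf⟩ := emb.arc_isArc h
    have hlog : HasLog (emb.arc h) := by
      have := HasLog.arc f.continuous hi (s := 0) (s' := 1) zero_le_one
      rwa [show Set.Icc (0 : unitInterval) 1 = Set.univ from Set.Icc_bot_top, Set.image_univ,
        hf] at this
    refine hlog.union (ih hp.1) (isCompact_arc emb h).isClosed (isCompact_walkSet emb p).isClosed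
      (right_mem_arc emb h) (start_mem_walkSet emb p) ?_
    rintro x ⟨hx, hxp⟩
    obtain ⟨c, hc, hcp, rfl⟩ := arc_inter_walkSet emb h p
      (fun he => hp.2 (p.fst_mem_support_of_mem_edges he)) hx hxp
    rcases hc with rfl | rfl
    · exact absurd hcp hp.2
    · rfl

theorem split_at_edge {u v : V} (p : G.Walk u v) {e : Sym2 V} (he : e ∈ p.edges) :
    ∃ (a b : V) (h : G.Adj a b) (p₁ : G.Walk u a) (p₂ : G.Walk b v),
      e = s(a, b) ∧ p = p₁.append (Walk.cons h p₂) := by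
  induction p with
  | nil => simp at he
  | cons h p ih =>
    rw [Walk.edges_cons, List.mem_cons] at he
    rcases he with rfl | he
    · exact ⟨_, _, h, Walk.nil, p, rfl, rfl⟩
    · obtain ⟨a, b, h', p₁, p₂, rfl, rfl⟩ := ih he
      exact ⟨a, b, h', Walk.cons h p₁, p₂, rfl, rfl⟩

/-- Removing an edge from a cycle leaves a path. -/
theorem cycle_split {v : V} (w : G.Walk v v) (hw : w.IsCycle) {e : Sym2 V} (he : e ∈ w.edges) :
    ∃ (a b : V) (h : G.Adj a b) (r : G.Walk b a), e = s(a, b) ∧ r.IsPath ∧ s(a, b) ∉ r.edges ∧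
      ∀ e', e' ∈ w.edges ↔ e' = s(a, b) ∨ e' ∈ r.edges := by
  obtain ⟨a, b, h, p, q, rfl, rfl⟩ := split_at_edge w he
  refine ⟨a, b, h, q.append p, rfl, ?_, ?_, ?_⟩
  · rw [Walk.isPath_def, Walk.support_append]
    have := hw.support_nodup
    rw [Walk.tail_support_append, Walk.support_cons, List.tail_cons] at this
    exact (List.perm_append_comm.nodup_iff).1 this
  · have := hw.edges_nodup
    rw [Walk.edges_append, Walk.edges_cons] at this
    rw [Walk.edges_append, List.mem_append]
    have h2 := List.nodup_middle.1 this
    rw [List.nodup_cons, List.mem_append] at h2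
    tauto
  · intro e'
    simp only [Walk.edges_append, Walk.edges_cons, List.mem_append, List.mem_cons]
    tauto

theorem walkSet_cycle_eq {v a b : V} (w : G.Walk v v) (hw : w.IsCycle) (h : G.Adj a b)
    (r : G.Walk b a) (hr : ∀ e', e' ∈ w.edges ↔ e' = s(a, b) ∨ e' ∈ r.edges) :
    walkSet emb w = emb.arc h ∪ walkSet emb r := by
  ext x
  rw [Set.mem_union, mem_walkSet, mem_walkSet]
  constructor
  · intro hx
    have : ∃ (a b : V) (h : G.Adj a b), s(a, b) ∈ w.edges ∧ x ∈ emb.arc h := by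
      rcases hx with rfl | hx
      · cases w with
        | nil => simp at hw
        | cons h' p => exact ⟨_, _, h', by simp, left_mem_arc emb h'⟩
      · exact hx
    obtain ⟨a', b', h', he, hx⟩ := this
    rcases (hr _).1 he with he | he
    · left; rwa [emb.arc_congr h h' he.symm]
    · exact Or.inr (Or.inr ⟨a', b', h', he, hx⟩)
  · rintro (hx | rfl | ⟨a', b', h', he, hx⟩)
    · exact Or.inr ⟨a, b, h, (hr _).2 (Or.inl rfl), hx⟩
    · exact Or.inr ⟨a, b, h, (hr _).2 (Or.inl rfl), left_mem_arc emb h⟩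
    · exact Or.inr ⟨a', b', h', (hr _).2 (Or.inr he), hx⟩

theorem cycle_not_preconnected {v : V} (w : G.Walk v v) (hw : w.IsCycle) :
    ¬ IsPreconnected (walkSet emb w)ᶜ := by
  obtain ⟨e, he⟩ : ∃ e, e ∈ w.edges := by
    cases w with
    | nil => simp at hw
    | cons h p => exact ⟨_, by rw [Walk.edges_cons]; exact List.mem_cons_self⟩
  obtain ⟨a, b, h, r, rfl, hr, hn, hwe⟩ := cycle_split w hw he
  rw [walkSet_cycle_eq emb w hw h r hwe]
  obtain ⟨f, -, hf⟩ := emb.arc_isArc h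
  obtain ⟨g, hg⟩ := exists_path_walkSet emb r
  have := jordan_separation' (fun e => h.ne (emb.vinj e)) f g.symm (by
    rw [_root_.Path.symm_range, hf, hg]
    rintro x ⟨hx, hxr⟩
    obtain ⟨c, hc, -, rfl⟩ := arc_inter_walkSet emb h r hn hx hxr
    rcases hc with rfl | rfl
    · left; rfl
    · right; rfl)
  rwa [_root_.Path.symm_range, hf, hg] at this

/-- Every component of the complement of the cycle has the whole cycle in its closure. -/
theorem arc_subset_closure {v : V} (w : G.Walk v v) (hw : w.IsCycle) {y : ℝ × ℝ}
    (hy : y ∈ (walkSet emb w)ᶜ) {a b : V} (h : G.Adj a b) (he : s(a, b) ∈ w.edges) :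
    emb.arc h ⊆ closure (connectedComponentIn (walkSet emb w)ᶜ y) := by
  obtain ⟨a', b', h', r, he', hr, hn, hwe⟩ := cycle_split w hw he
  rw [emb.arc_congr h h' he']
  have hJ := walkSet_cycle_eq emb w hw h' r hwe
  set J := walkSet emb w with hJdef
  set D := connectedComponentIn Jᶜ y with hD
  have hJc : IsClosed J := (isCompact_walkSet emb w).isClosed
  have hDo : IsOpen D := hJc.isOpen_compl.connectedComponentIn
  obtain ⟨f, hi, hf⟩ := emb.arc_isArc h'
  by_contra hcon
  have hcon' : ¬ ∀ t ∈ Set.Ioo (0 : unitInterval) 1, f t ∈ closure D := by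
    intro hall
    apply hcon
    rw [← hf]
    rintro _ ⟨t, rfl⟩
    have hcl : IsClosed (f ⁻¹' closure D) := isClosed_closure.preimage f.continuous
    have hsub : closure (Set.Ioo (0 : unitInterval) 1) ⊆ f ⁻¹' closure D :=
      hcl.closure_subset_iff.2 hall
    rw [closure_Ioo (zero_ne_one)] at hsub
    exact hsub ⟨bot_le, le_top⟩
  push Not at hcon'
  obtain ⟨t, ⟨ht0, ht1⟩, ht⟩ := hcon'
  have hopen : IsOpen (f ⁻¹' (closure D)ᶜ) := isClosed_closure.isOpen_compl.preimage f.continuous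
  have hnh : f ⁻¹' (closure D)ᶜ ∈ nhds t := hopen.mem_nhds ht
  obtain ⟨s, s', ⟨hs, hs'⟩, hss⟩ := (mem_nhds_iff_exists_Ioo_subset' ⟨0, ht0⟩ ⟨1, ht1⟩).1 hnh
  -- the remaining arc
  set K : Set (ℝ × ℝ) := (walkSet emb r ∪ f '' Set.Icc 0 s) ∪ f '' Set.Icc s' 1 with hK
  have hfr : ∀ x, x ∈ Set.range f → x ∈ walkSet emb r → x = f 0 ∨ x = f 1 := by
    intro x hx hxr
    obtain ⟨c, hc, -, rfl⟩ := arc_inter_walkSet emb h' r hn (hf ▸ hx) hxr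
    rcases hc with rfl | rfl
    · left; exact f.source.symm
    · right; exact f.target.symm
  have hf0 : f 0 ∈ walkSet emb r := by rw [f.source]; exact end_mem_walkSet emb r
  have hf1 : f 1 ∈ walkSet emb r := by rw [f.target]; exact start_mem_walkSet emb r
  have hst : s < s' := hs.trans hs'
  have c1 : IsCompact (f '' Set.Icc 0 s) := isCompact_Icc.image f.continuous
  have c2 : IsCompact (f '' Set.Icc s' 1) := isCompact_Icc.image f.continuous
  have cr := isCompact_walkSet emb r
  have hKcomp : IsCompact K := (cr.union c1).union c2
  have hKlog : HasLog K := by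
    have l1 : HasLog (walkSet emb r ∪ f '' Set.Icc 0 s) := by
      refine (hasLog_walkSet emb r hr).union (HasLog.arc f.continuous hi bot_le) cr.isClosed
        c1.isClosed hf0 ⟨0, ⟨le_rfl, bot_le⟩, rfl⟩ ?_
      rintro _ ⟨hx, ⟨z, hz, rfl⟩⟩
      rcases hfr _ ⟨z, rfl⟩ hx with h | h
      · exact h
      · have := hi h
        subst this
        exact absurd hz.2 (not_le.2 (hs.trans ht1))
    refine l1.union (HasLog.arc f.continuous hi le_top) (cr.union c1).isClosed
        c2.isClosed (Or.inl hf1) ⟨1, ⟨le_top, le_rfl⟩, rfl⟩ ?_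
    rintro _ ⟨hx | ⟨z', hz', hzz⟩, ⟨z, hz, rfl⟩⟩
    · rcases hfr _ ⟨z, rfl⟩ hx with h | h
      · have := hi h
        subst this
        exact absurd hz.1 (not_le.2 (ht0.trans hs'))
      · exact h
    · have := hi hzz
      subst this
      exact absurd (hz.1.trans hz'.2) (not_le.2 hst)
  have hKJ : K ⊆ J := by
    rw [hJ, ← hf]
    rintro x ((hx | ⟨z, -, rfl⟩) | ⟨z, -, rfl⟩)
    · exact Or.inr hx
    · exact Or.inl ⟨z, rfl⟩
    · exact Or.inl ⟨z, rfl⟩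
  have hclJ : ∀ x ∈ closure D, x ∈ J → x ∈ K := by
    intro x hx hxJ
    rw [hJ, ← hf] at hxJ
    rcases hxJ with ⟨z, rfl⟩ | hxr
    · by_cases h1 : z ≤ s
      · exact Or.inl (Or.inr ⟨z, ⟨bot_le, h1⟩, rfl⟩)
      · by_cases h2 : s' ≤ z
        · exact Or.inr ⟨z, ⟨h2, le_top⟩, rfl⟩
        · exact absurd hx (hss ⟨not_le.1 h1, not_le.1 h2⟩)
    · exact Or.inl (Or.inl hxr)
  have hftJ : f t ∈ J := by rw [hJ, ← hf]; exact Or.inl ⟨t, rfl⟩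
  have hftK : f t ∉ K := by
    rintro ((hx | ⟨z, hz, hzz⟩) | ⟨z, hz, hzz⟩)
    · rcases hfr _ ⟨t, rfl⟩ hx with h | h
      · exact ht0.ne' (hi h)
      · exact ht1.ne (hi h)
    · have := hi hzz
      subst this
      exact absurd hz.2 (not_le.2 hs)
    · have := hi hzz
      subst this
      exact absurd hz.1 (not_le.2 hs')
  have hpre := hKlog.compl_preconnected' hKcomp
  have hDJ : D ⊆ Jᶜ := connectedComponentIn_subset _ _
  have hyD : y ∈ D := mem_connectedComponentIn hy
  have hyK : y ∈ Kᶜ := fun h => hy (hKJ h)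
  -- D is clopen in Kᶜ
  obtain ⟨x, hxK, hxD, hxc⟩ := hpre D (closure D)ᶜ hDo isClosed_closure.isOpen_compl
    (by
      intro x hx
      by_cases hxc : x ∈ closure D
      · left
        exact closure_component_inter hxc (fun hxJ => hx (hclJ x hxc hxJ))
      · exact Or.inr hxc)
    ⟨y, hyK, hyD⟩ ⟨f t, hftK, ht⟩
  exact hxc (subset_closure hxD)

theorem arc_minus_end {u v : V} (h : G.Adj u v) {U : Set (ℝ × ℝ)}
    (hU : ∀ x ∈ emb.arc h, x ≠ emb.vpos v → x ∈ U) {x : ℝ × ℝ} (hx : x ∈ emb.arc h)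
    (hxv : x ≠ emb.vpos v) : x ∈ connectedComponentIn U (emb.vpos u) := by
  obtain ⟨f, hi, hf⟩ := emb.arc_isArc h
  have hpre : IsPreconnected (f '' Set.Iio 1) :=
    (Set.ordConnected_Iio.isPreconnected).image _ f.continuous.continuousOn
  refine hpre.subset_connectedComponentIn ⟨0, Set.mem_Iio.2 zero_lt_one, f.source⟩ ?_ ?_
  · rintro _ ⟨t, ht, rfl⟩
    refine hU _ (hf ▸ ⟨t, rfl⟩) ?_
    exact fun e => (Set.mem_Iio.1 ht).ne (hi (e.trans f.target.symm))
  · rw [← hf] at hx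
    obtain ⟨t, rfl⟩ := hx
    refine ⟨t, Set.mem_Iio.2 (lt_of_le_of_ne le_top ?_), rfl⟩
    rintro rfl
    exact hxv f.target

end

theorem main_aux {V : Type*} (G : SimpleGraph V)
    {v : V} (w : G.Walk v v) (hper : IsPeripheral G w) (emb : PlanarEmbedding G) :
    ∃ F : Set (ℝ × ℝ),
      emb.IsFace F ∧ emb.boundaryEdges F = {e | e ∈ w.edges} := by
  obtain ⟨hw, hind, hsep⟩ := hper
  set J := walkSet emb w with hJ
  have hJc : IsClosed J := (isCompact_walkSet emb w).isClosed
  have hJsub : J ⊆ emb.image := by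
    intro x hx
    rcases (mem_walkSet emb w x).1 hx with rfl | ⟨a, b, h, -, hx⟩
    · exact Or.inl ⟨v, rfl⟩
    · exact Or.inr (by simp only [Set.mem_iUnion]; exact ⟨a, b, h, hx⟩)
  have hvJ : ∀ c, c ∉ w.support → emb.vpos c ∉ J := fun c hc h =>
    hc (vpos_mem_walkSet emb w h)
  -- points of an arc from an outside vertex
  have hout : ∀ (a b : V) (h : G.Adj a b), a ∉ w.support → ∀ x ∈ emb.arc h, x ∈ J →
      x = emb.vpos b := by
    intro a b h ha x hx hxJ
    obtain ⟨c, hc, hcw, rfl⟩ := arc_inter_walkSet emb h w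
      (fun he => ha (w.fst_mem_support_of_mem_edges he)) hx hxJ
    rcases hc with rfl | rfl
    · exact absurd hcw ha
    · rfl
  -- Choose the component
  obtain ⟨y, hy, hyS⟩ : ∃ y ∈ Jᶜ, ∀ x ∈ connectedComponentIn Jᶜ y, x ∉ emb.image := by
    have hnp := cycle_not_preconnected emb w hw
    have hvert : ∀ c, c ∈ w.support → emb.vpos c ∈ J := by
      intro c hc
      have hnil : ¬ w.Nil := hw.not_nil
      obtain ⟨e, he, hce⟩ := (Walk.mem_support_iff_exists_mem_edges_of_not_nil hnil).1 hc
      induction e with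
      | _ a b =>
      have hab := w.adj_of_mem_edges he
      rw [Sym2.mem_iff] at hce
      refine (mem_walkSet emb w _).2 (Or.inr ⟨a, b, hab, he, ?_⟩)
      rcases hce with rfl | rfl
      · exact left_mem_arc emb hab
      · exact right_mem_arc emb hab
    rcases hsep with hempty | hconn
    · have hall : ∀ c, c ∈ w.support := by
        intro c
        by_contra hc
        have : c ∈ {x | x ∉ w.support} := hc
        rw [hempty] at this
        exact this
      have hne : (Jᶜ).Nonempty := by
        by_contra h
        rw [Set.not_nonempty_iff_eq_empty] at h
        apply hnp
        rw [h]
        exact isPreconnected_empty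
      obtain ⟨y, hy⟩ := hne
      refine ⟨y, hy, fun x hx himg => ?_⟩
      have hxJ : x ∉ J := connectedComponentIn_subset _ _ hx
      rcases himg with ⟨c, rfl⟩ | himg
      · exact hxJ (hvert c (hall c))
      · simp only [Set.mem_iUnion] at himg
        obtain ⟨a, b, h, hx'⟩ := himg
        exact hxJ ((mem_walkSet emb w _).2
          (Or.inr ⟨a, b, h, hind a (hall a) b (hall b) h, hx'⟩))
    · obtain ⟨x₀⟩ := hconn.nonempty
      set C := connectedComponentIn Jᶜ (emb.vpos x₀) with hC
      have hx₀ : emb.vpos x₀ ∈ Jᶜ := hvJ _ x₀.2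
      have hedge : ∀ (a b : V) (h : G.Adj a b), a ∉ w.support → emb.vpos a ∈ C →
          ∀ x ∈ emb.arc h, x ∉ J → x ∈ C := by
        intro a b h ha haC x hx hxJ
        by_cases hxb : x = emb.vpos b
        · subst hxb
          have hb : b ∉ w.support := fun hb => hxJ (hvert b hb)
          have hsub : emb.arc h ⊆ Jᶜ := fun z hz hzJ => by
            have := hout a b h ha z hz hzJ
            subst this
            exact hxJ hzJ
          obtain ⟨f, -, hf⟩ := emb.arc_isArc h
          have hp : IsPreconnected (emb.arc h) := by
            rw [← hf]; exact isPreconnected_range f.continuous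
          have := hp.subset_connectedComponentIn (left_mem_arc emb h) hsub hx
          rwa [hC, connectedComponentIn_eq haC]
        · have := arc_minus_end emb h (U := Jᶜ)
            (fun z hz hzb hzJ => hzb (hout a b h ha z hz hzJ)) hx hxb
          rwa [hC, connectedComponentIn_eq haC]
      have hverts : ∀ c : {x | x ∉ w.support}, emb.vpos c ∈ C := by
        intro c
        obtain ⟨p⟩ := hconn.preconnected x₀ c
        have : ∀ {a b : {x | x ∉ w.support}} (p : (G.induce {x | x ∉ w.support}).Walk a b),
            emb.vpos a ∈ C → emb.vpos b ∈ C := by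
          intro a b p
          induction p with
          | nil => exact id
          | @cons a b c h p ih =>
            intro ha
            apply ih
            have hab : G.Adj a b := h
            exact hedge a b hab a.2 ha _ (right_mem_arc emb hab) (hvJ _ b.2)
        exact this p (mem_connectedComponentIn hx₀)
      have hS : ∀ x ∈ emb.image, x ∉ J → x ∈ C := by
        intro x himg hxJ
        rcases himg with ⟨c, rfl⟩ | himg
        · exact hverts ⟨c, fun hc => hxJ (hvert c hc)⟩
        · simp only [Set.mem_iUnion] at himg
          obtain ⟨a, b, h, hx'⟩ := himg
          by_cases ha : a ∈ w.support
          · by_cases hb : b ∈ w.support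
            · exact absurd ((mem_walkSet emb w _).2
                (Or.inr ⟨a, b, h, hind a ha b hb h, hx'⟩)) hxJ
            · exact hedge b a h.symm hb (hverts ⟨b, hb⟩) x (by rwa [emb.arc_symm h]) hxJ
          · exact hedge a b h ha (hverts ⟨a, ha⟩) x hx' hxJ
      obtain ⟨y, hy, hyC⟩ : ∃ y ∈ Jᶜ, y ∉ C := by
        by_contra hcon
        push Not at hcon
        apply hnp
        have : Jᶜ = C := Set.Subset.antisymm hcon (connectedComponentIn_subset _ _)
        rw [this]
        exact isPreconnected_connectedComponentIn
      refine ⟨y, hy, fun x hx himg => ?_⟩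
      have hxC := hS x himg (connectedComponentIn_subset _ _ hx)
      apply hyC
      rw [hC, connectedComponentIn_eq hxC, ← connectedComponentIn_eq hx]
      exact mem_connectedComponentIn hy
  set D := connectedComponentIn Jᶜ y with hD
  have hyD : y ∈ D := mem_connectedComponentIn hy
  refine ⟨D, ⟨y, hyS y hyD, ?_⟩, ?_⟩
  · apply Set.Subset.antisymm
    · exact isPreconnected_connectedComponentIn.subset_connectedComponentIn hyD hyS
    · exact connectedComponentIn_mono y (Set.compl_subset_compl.2 hJsub)
  · ext e
    constructor
    · rintro ⟨a, b, h, rfl, hsub⟩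
      by_contra he
      obtain ⟨f, hi, hf⟩ := emb.arc_isArc h
      obtain ⟨t, ht0, ht1⟩ := exists_between (zero_lt_one : (0 : unitInterval) < 1)
      have hta : f t ∈ emb.arc h := hf ▸ ⟨t, rfl⟩
      have htJ : f t ∉ J := by
        intro htJ
        obtain ⟨c, hc, -, hc'⟩ := arc_inter_walkSet emb h w he hta htJ
        rcases hc with rfl | rfl
        · exact ht0.ne' (hi (hc'.trans f.source.symm))
        · exact ht1.ne (hi (hc'.trans f.target.symm))
      refine hyS _ (closure_component_inter (hsub hta) htJ) ?_
      exact Or.inr (by simp only [Set.mem_iUnion]; exact ⟨a, b, h, hta⟩)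
    · intro he
      induction e with
      | _ a b =>
      have hab := w.adj_of_mem_edges he
      exact ⟨a, b, hab, rfl, arc_subset_closure emb w hw hy hab he⟩

/-- In a 3-connected finite planar graph, every induced non-separating (i.e. peripheral)
cycle bounds a face in every planar embedding. -/
theorem peripheral_cycle_bounds_face
    {V : Type*} [Fintype V] (G : SimpleGraph V) (h3 : ThreeConnected G)
    {v : V} (w : G.Walk v v) (hper : IsPeripheral G w) :
    ∀ emb : PlanarEmbedding G, ∃ F : Set (ℝ × ℝ),
      emb.IsFace F ∧ emb.boundaryEdges F = {e | e ∈ w.edges} := by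
  exact fun emb => main_aux G w hper emb
end

section
/- Let G be a 3-connected planar graph (finite) with two embeddings in the sphere. Then every automorphism of G maps the boundary of each face to the boundary of a face; equivalently, every automorphism maps facial paths to facial paths. -/
open SimpleGraph

namespace WhitneyAux

/-- The plane. -/
abbrev Pl := ℝ × ℝ

/-- Identification of the plane with the complex numbers. -/
noncomputable def cx : Pl ≃ₜ ℂ := Complex.equivRealProdCLM.symm.toHomeomorph

lemma cx_sub_ne {p z : Pl} (h : z ≠ p) : cx z - cx p ≠ 0 := by
  intro h0
  exact h (cx.injective (sub_eq_zero.mp h0))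

/-- `f` has a continuous logarithm on `K`. -/
def HasLog (K : Set Pl) (f : Pl → ℂ) : Prop :=
  ∃ l : Pl → ℂ, ContinuousOn l K ∧ ∀ z ∈ K, Complex.exp (l z) = f z

lemma HasLog.mono {K L : Set Pl} {f : Pl → ℂ} (h : HasLog L f) (hKL : K ⊆ L) : HasLog K f := by
  obtain ⟨l, hl, he⟩ := h
  exact ⟨l, hl.mono hKL, fun z hz => he z (hKL hz)⟩

lemma HasLog.congr {K : Set Pl} {f g : Pl → ℂ} (h : HasLog K f) (hfg : ∀ z ∈ K, f z = g z) :
    HasLog K g := by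
  obtain ⟨l, hl, he⟩ := h
  exact ⟨l, hl, fun z hz => (he z hz).trans (hfg z hz)⟩

lemma HasLog.mul {K : Set Pl} {f g : Pl → ℂ} (hf : HasLog K f) (hg : HasLog K g) :
    HasLog K (fun z => f z * g z) := by
  obtain ⟨l, hl, he⟩ := hf
  obtain ⟨l', hl', he'⟩ := hg
  exact ⟨fun z => l z + l' z, hl.add hl', fun z hz => by rw [Complex.exp_add, he z hz, he' z hz]⟩

lemma HasLog.inv {K : Set Pl} {f : Pl → ℂ} (hf : HasLog K f) :
    HasLog K (fun z => (f z)⁻¹) := by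
  obtain ⟨l, hl, he⟩ := hf
  exact ⟨fun z => - l z, hl.neg, fun z hz => by rw [Complex.exp_neg, he z hz]⟩

lemma hasLog_of_slit {K : Set Pl} {f : Pl → ℂ} (hf : ContinuousOn f K)
    (h : ∀ z ∈ K, f z ∈ Complex.slitPlane) : HasLog K f :=
  ⟨fun z => Complex.log (f z), hf.clog h, fun z hz =>
    Complex.exp_log (Complex.slitPlane_ne_zero (h z hz))⟩

/-- Homotopy lifting for the exponential. -/
lemma exists_log_homotopy {X : Type*} [TopologicalSpace X] (H : unitInterval × X → ℂ)
    (hH : Continuous H) (h0 : ∀ a, H a ≠ 0) (f : X → ℂ) (hf : Continuous f)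
    (hf0 : ∀ x, Complex.exp (f x) = H (0, x)) :
    ∃ l : unitInterval × X → ℂ, Continuous l ∧ (∀ a, Complex.exp (l a) = H a) ∧
      ∀ x, l (0, x) = f x := by
  let H' : C(unitInterval × X, {z : ℂ // z ≠ 0}) := ⟨fun a => ⟨H a, h0 a⟩, by fun_prop⟩
  let f' : C(X, ℂ) := ⟨f, hf⟩
  have H_0 : ∀ a, H' (0, a) = (⟨_, (f' a).exp_ne_zero⟩ : {z : ℂ // z ≠ 0}) := by
    intro a
    apply Subtype.ext
    exact (hf0 a).symm
  refine ⟨Complex.isCoveringMap_exp.liftHomotopy H' f' H_0, by fun_prop, ?_, ?_⟩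
  · intro a
    have := congrFun (Complex.isCoveringMap_exp.liftHomotopy_lifts H' f' H_0) a
    exact congrArg Subtype.val this
  · intro x
    exact Complex.isCoveringMap_exp.liftHomotopy_zero H' f' H_0 x

/-- Path lifting for the exponential. -/
lemma exists_log_path (g : unitInterval → ℂ) (hg : Continuous g) (h0 : ∀ t, g t ≠ 0) :
    ∃ l : unitInterval → ℂ, Continuous l ∧ ∀ t, Complex.exp (l t) = g t := by
  obtain ⟨l, hl, he, -⟩ := exists_log_homotopy (X := Unit) (fun a => g a.1) (by fun_prop)
    (fun a => h0 _) (fun _ => Complex.log (g 0)) (by fun_prop)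
    (fun _ => Complex.exp_log (h0 0))
  exact ⟨fun t => l (t, ()), by fun_prop, fun t => he _⟩

/-- Continuous nowhere zero functions on the plane have logarithms. -/
lemma hasLog_univ (g : Pl → ℂ) (hg : Continuous g) (h0 : ∀ z, g z ≠ 0) : HasLog Set.univ g := by
  obtain ⟨l, hl, he, -⟩ := exists_log_homotopy (X := Pl)
    (fun a => g ((a.1 : ℝ) • a.2)) (by fun_prop)
    (fun a => h0 _) (fun _ => Complex.log (g 0)) (by fun_prop)
    (fun _ => by simp [Complex.exp_log (h0 0)])
  refine ⟨fun z => l (1, z), by fun_prop, fun z _ => ?_⟩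
  rw [he]; simp

/-- If a path joins `q` to `p` outside `S` then `(z-p)/(z-q)` has a logarithm on `S`. -/
lemma hasLog_of_path {S : Set Pl} {p q : Pl} (γ : Path q p) (hγ : ∀ t, γ t ∉ S) :
    HasLog S (fun z => (cx z - cx p) * (cx z - cx q)⁻¹) := by
  have hne : ∀ (t) (x : S), cx x.1 - cx (γ t) ≠ 0 := fun t x => cx_sub_ne (by
    rintro h; exact hγ t (h ▸ x.2))
  have hne0 : ∀ (x : S), cx x.1 - cx q ≠ 0 := fun x => by simpa using hne 0 x
  obtain ⟨l, hl, he, -⟩ := exists_log_homotopy (X := S)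
    (fun a => (cx a.2.1 - cx (γ a.1)) * (cx a.2.1 - cx q)⁻¹) (by
      have := cx.continuous
      apply Continuous.mul
      · fun_prop
      · apply Continuous.inv₀ (by fun_prop)
        exact fun a => hne0 a.2)
    (fun a => mul_ne_zero (hne _ _) (inv_ne_zero (hne0 _))) (fun _ => 0) (by fun_prop)
    (fun x => by simp [hne0 x])
  classical
  refine ⟨fun z => if h : z ∈ S then l (1, ⟨z, h⟩) else 0, ?_, ?_⟩
  · rw [continuousOn_iff_continuous_domRestrict]
    have : S.domRestrict (fun z => if h : z ∈ S then l (1, ⟨z, h⟩) else 0) = fun x => l (1, x) := by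
      ext x; simp [Set.domRestrict]
    rw [this]; fun_prop
  · intro z hz
    simp only [hz, dif_pos]
    rw [he]; simp

lemma exp_eq_const {S : Set Pl} (hS : IsPreconnected S) {l l' : Pl → ℂ} (hl : ContinuousOn l S)
    (hl' : ContinuousOn l' S) (he : ∀ z ∈ S, Complex.exp (l z) = Complex.exp (l' z)) :
    ∃ n : ℤ, ∀ z ∈ S, l z = l' z + n * (2 * Real.pi * Complex.I) := by
  rcases S.eq_empty_or_nonempty with rfl | ⟨z0, hz0⟩
  · exact ⟨0, by simp⟩
  have key : ∀ z ∈ S, ∃ n : ℤ, l z = l' z + n * (2 * Real.pi * Complex.I) := fun z hz =>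
    Complex.exp_eq_exp_iff_exists_int.mp (he z hz)
  choose! n hn using key
  have hcont : ContinuousOn (fun z => (n z : ℝ)) S := by
    have h1 : ContinuousOn (fun z => ((l z - l' z) / (2 * Real.pi * Complex.I)).re) S := by
      apply Complex.continuous_re.comp_continuousOn
      exact (hl.sub hl').div_const _
    refine h1.congr fun z hz => ?_
    beta_reduce
    rw [hn z hz]
    have : (2 * Real.pi * Complex.I : ℂ) ≠ 0 := Complex.two_pi_I_ne_zero
    simp only [add_sub_cancel_left]
    rw [mul_div_cancel_right₀ _ this]; simp
  have hcont' : ContinuousOn n S := by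
    rw [Int.isClosedEmbedding_coe_real.isInducing.continuousOn_iff]
    exact hcont
  refine ⟨n z0, fun z hz => ?_⟩
  rw [← hS.constant hcont' hz hz0]
  exact hn z hz

/-- Gluing logarithms. -/
lemma HasLog.union_aux {S T : Set Pl} {f : Pl → ℂ} (hS : HasLog S f) (hT : HasLog T f)
    (hc : IsPreconnected (S ∩ T))
    (hST : (IsOpen S ∧ IsOpen T) ∨ (IsClosed S ∧ IsClosed T)) : HasLog (S ∪ T) f := by
  obtain ⟨l, hl, he⟩ := hS
  obtain ⟨l', hl', he'⟩ := hT
  obtain ⟨n, hn⟩ := exp_eq_const hc (hl.mono Set.inter_subset_left)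
    (hl'.mono Set.inter_subset_right) (fun z hz => (he z hz.1).trans (he' z hz.2).symm)
  classical
  set m : Pl → ℂ := fun z => if z ∈ S then l z else l' z + n * (2 * Real.pi * Complex.I) with hm
  have hmS : ∀ z ∈ S, m z = l z := fun z hz => by simp [hm, hz]
  have hmT : ∀ z ∈ T, m z = l' z + n * (2 * Real.pi * Complex.I) := fun z hz => by
    by_cases h : z ∈ S
    · rw [hmS z h, hn z ⟨h, hz⟩]
    · simp [hm, h]
  have cS : ContinuousOn m S := hl.congr hmS
  have cT : ContinuousOn m T := (hl'.add continuousOn_const).congr hmT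
  refine ⟨m, ?_, ?_⟩
  · rcases hST with ⟨a, b⟩ | ⟨a, b⟩
    · exact cS.union_of_isOpen cT a b
    · exact cS.union_of_isClosed cT a b
  · rintro z (hz | hz)
    · rw [hmS z hz, he z hz]
    · rw [hmT z hz, Complex.exp_add, Complex.exp_int_mul_two_pi_mul_I, mul_one, he' z hz]

/-- No nonzero power of `z - p` has a logarithm on a circle around `p`. -/
lemma not_hasLog_circle (p : Pl) (r : ℝ) (hr : 0 < r) (n : ℤ) (hn : n ≠ 0) (K : Set Pl)
    (hK : ∀ z, ‖cx z - cx p‖ = r → z ∈ K) : ¬ HasLog K (fun z => (cx z - cx p) ^ n) := by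
  rintro ⟨l, hl, he⟩
  let c : ℝ → Pl := fun t => cx.symm (cx p + r * Complex.exp (t * Complex.I))
  have hc : Continuous c := by
    have := cx.symm.continuous
    fun_prop
  have hcc : ∀ t, cx (c t) - cx p = r * Complex.exp (t * Complex.I) := by
    intro t; simp [c]
  have hcK : ∀ t, c t ∈ K := fun t => hK _ (by
    rw [hcc, norm_mul, Complex.norm_exp_ofReal_mul_I]; simp [abs_of_pos hr])
  have hlc : Continuous (fun t => l (c t)) := hl.comp_continuous hc hcK
  let L : ℝ → ℂ := fun t => n * (Complex.log r + t * Complex.I)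
  have hL : ∀ t, Complex.exp (L t) = Complex.exp (l (c t)) := by
    intro t
    rw [he _ (hcK t)]
    beta_reduce
    rw [hcc, Complex.exp_int_mul, Complex.exp_add, Complex.exp_log (by
      exact_mod_cast hr.ne')]
  have : ∀ t, ∃ k : ℤ, L t = l (c t) + k * (2 * Real.pi * Complex.I) := fun t =>
    Complex.exp_eq_exp_iff_exists_int.mp (hL t)
  choose k hk using this
  have hkc : Continuous (fun t => (k t : ℝ)) := by
    have h1 : Continuous (fun t => ((L t - l (c t)) / (2 * Real.pi * Complex.I)).re) := by
      apply Complex.continuous_re.comp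
      apply Continuous.div_const
      apply Continuous.sub _ hlc
      fun_prop
    refine h1.congr fun z => ?_
    rw [hk z]
    have : (2 * Real.pi * Complex.I : ℂ) ≠ 0 := Complex.two_pi_I_ne_zero
    simp only [add_sub_cancel_left]
    rw [mul_div_cancel_right₀ _ this]; simp
  have hkc' : Continuous k := by
    rw [Int.isClosedEmbedding_coe_real.isInducing.continuous_iff]
    exact hkc
  have e1 : k (2 * Real.pi) = k 0 :=
    isPreconnected_univ.constant hkc'.continuousOn (Set.mem_univ _) (Set.mem_univ _)
  have e2 : c (2 * Real.pi) = c 0 := by simp [c]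
  have h1 := hk (2 * Real.pi)
  have h2 := hk 0
  rw [e1, e2, ← h2] at h1
  simp only [L] at h1
  have h3 := mul_left_cancel₀ (by exact_mod_cast hn) h1
  have h4 := add_left_cancel h3
  push_cast at h4
  rw [zero_mul] at h4
  exact Complex.two_pi_I_ne_zero h4

end WhitneyAux

namespace WhitneyAux

/-- Component of the complement of `K` containing `p`. -/
def cmp (K : Set Pl) (p : Pl) : Set Pl := connectedComponentIn Kᶜ p

lemma mem_cmp {K : Set Pl} {p : Pl} (h : p ∉ K) : p ∈ cmp K p := mem_connectedComponentIn h

lemma cmp_eq {K : Set Pl} {p q : Pl} (h : q ∈ cmp K p) : cmp K p = cmp K q :=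
  connectedComponentIn_eq h

lemma cmp_not_mem {K : Set Pl} {p q : Pl} (h : q ∈ cmp K p) : q ∉ K :=
  connectedComponentIn_subset Kᶜ p h

lemma subset_cmp {K S : Set Pl} {p : Pl} (hS : IsPreconnected S) (hp : p ∈ S)
    (hd : ∀ z ∈ S, z ∉ K) : S ⊆ cmp K p :=
  hS.subset_connectedComponentIn hp hd

lemma cmp_preconn {K : Set Pl} {p : Pl} : IsPreconnected (cmp K p) :=
  isPreconnected_connectedComponentIn

lemma cmp_open {K : Set Pl} (hK : IsClosed K) {p : Pl} : IsOpen (cmp K p) :=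
  hK.isOpen_compl.connectedComponentIn

lemma cmp_eq_of_mem {K : Set Pl} {p q z : Pl} (hp : z ∈ cmp K p) (hq : z ∈ cmp K q) :
    cmp K p = cmp K q := (cmp_eq hp).trans (cmp_eq hq).symm

lemma cmp_mono {K L : Set Pl} (h : K ⊆ L) (p : Pl) : cmp L p ⊆ cmp K p :=
  connectedComponentIn_mono p (Set.compl_subset_compl.mpr h)

/-- a set in the closure of a component and off `K` is in the component -/
lemma mem_cmp_of_closure {K : Set Pl} (hK : IsClosed K) {p z : Pl} (hz : z ∈ closure (cmp K p))
    (hzK : z ∉ K) : z ∈ cmp K p := by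
  obtain ⟨y, hy1, hy2⟩ := mem_closure_iff.mp hz _ (cmp_open hK) (mem_cmp hzK)
  rw [cmp_eq_of_mem hy2 hy1]
  exact mem_cmp hzK

lemma exists_extension {K : Set Pl} (hK : IsClosed K) {l : Pl → ℂ} (hl : ContinuousOn l K) :
    ∃ L : Pl → ℂ, Continuous L ∧ ∀ z ∈ K, L z = l z := by
  obtain ⟨g, hg⟩ := ContinuousMap.exists_restrict_eq hK
    (⟨K.domRestrict l, continuousOn_iff_continuous_domRestrict.mp hl⟩ : C(K, ℂ))
  refine ⟨g, g.continuous, fun z hz => ?_⟩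
  exact congrArg (fun f : C(K, ℂ) => f ⟨z, hz⟩) hg

lemma continuousOn_zpow_sub {S : Set Pl} {p : Pl} (n : ℤ) (h : p ∉ S) :
    ContinuousOn (fun z => (cx z - cx p) ^ n) S := by
  apply ContinuousOn.zpow₀
  · exact (cx.continuous.sub continuous_const).continuousOn
  · intro z hz
    exact Or.inl (cx_sub_ne (fun e => h (e ▸ hz)))

lemma not_hasLog_of_bounded {K : Set Pl} (hK : IsClosed K) {p : Pl} (hp : p ∉ K)
    (hb : Bornology.IsBounded (cmp K p)) {n : ℤ} (hn : n ≠ 0) {g : Pl → ℂ}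
    (hg : ContinuousOn g (closure (cmp K p))) (hg0 : ∀ z ∈ closure (cmp K p), g z ≠ 0) :
    ¬ HasLog K (fun z => (cx z - cx p) ^ n * g z) := by
  rintro ⟨l, hl, he⟩
  obtain ⟨L, hL, hLl⟩ := exists_extension hK hl
  have hUo : IsOpen (cmp K p) := cmp_open hK
  have hpU : p ∈ cmp K p := mem_cmp hp
  classical
  set h : Pl → ℂ := fun z => if z ∈ cmp K p then Complex.exp (L z) / g z else (cx z - cx p) ^ n
    with hh
  have h1 : ∀ z ∈ closure (cmp K p), h z = Complex.exp (L z) / g z := by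
    intro z hz
    by_cases hzU : z ∈ cmp K p
    · simp [hh, hzU]
    · have hzK : z ∈ K := by
        by_contra hc
        exact hzU (mem_cmp_of_closure hK hz hc)
      simp only [hh, hzU, if_false]
      rw [hLl z hzK, he z hzK, mul_div_cancel_right₀ _ (hg0 z hz)]
  have h2 : ∀ z ∈ (cmp K p)ᶜ, h z = (cx z - cx p) ^ n := by
    intro z hz
    simp [hh, show z ∉ cmp K p from hz]
  have c1 : ContinuousOn h (closure (cmp K p)) := by
    refine ContinuousOn.congr ?_ h1
    exact (Complex.continuous_exp.comp hL).continuousOn.div hg hg0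
  have c2 : ContinuousOn h (cmp K p)ᶜ :=
    (continuousOn_zpow_sub n (by simpa using hpU)).congr h2
  have huniv : closure (cmp K p) ∪ (cmp K p)ᶜ = Set.univ := by
    ext z
    by_cases hz : z ∈ cmp K p
    · simp [hz, subset_closure hz]
    · simp [hz]
  have hc : Continuous h := by
    rw [← continuousOn_univ, ← huniv]
    exact c1.union_of_isClosed c2 isClosed_closure hUo.isClosed_compl
  have h0 : ∀ z, h z ≠ 0 := by
    intro z
    by_cases hz : z ∈ cmp K p
    · rw [h1 z (subset_closure hz)]
      exact div_ne_zero (Complex.exp_ne_zero _) (hg0 z (subset_closure hz))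
    · rw [h2 z hz]
      exact zpow_ne_zero _ (cx_sub_ne (fun e => hz (e ▸ hpU)))
  obtain ⟨r, hr⟩ := hb.isCompact_closure.exists_bound_of_continuousOn
    (f := fun z => cx z - cx p) (cx.continuous.sub continuous_const).continuousOn
  have hr0 : 0 ≤ r := (norm_nonneg _).trans (hr p (subset_closure hpU))
  refine not_hasLog_circle p (r + 1) (by linarith) n hn (cmp K p)ᶜ ?_
    (((hasLog_univ h hc h0).mono (Set.subset_univ _)).congr h2)
  intro z hz hzU
  have := hr z (subset_closure hzU)
  linarith

lemma outside_preconn (R : ℝ) (hR : 0 ≤ R) : IsPreconnected {z : Pl | R < ‖cx z‖} := by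
  have h1 : IsPreconnected ((Set.Ioi R) ×ˢ (Set.univ : Set ℝ)) :=
    isPreconnected_Ioi.prod isPreconnected_univ
  have hc : Continuous (fun a : ℝ × ℝ => cx.symm (a.1 * Complex.exp (a.2 * Complex.I))) := by
    have := cx.symm.continuous
    fun_prop
  have := h1.image _ hc.continuousOn
  convert this using 1
  ext z
  simp only [Set.mem_ofPred_eq, Set.mem_image, Set.mem_prod, Set.mem_Ioi, Set.mem_univ, and_true,
    Prod.exists]
  constructor
  · intro h
    refine ⟨‖cx z‖, (cx z).arg, h, ?_⟩
    rw [Complex.norm_mul_exp_arg_mul_I]; simp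
  · rintro ⟨r, t, h, rfl⟩
    simp only [Homeomorph.apply_symm_apply, norm_mul, Complex.norm_exp_ofReal_mul_I, mul_one,
      Complex.norm_real, Real.norm_eq_abs]
    exact h.trans_le (le_abs_self _)

lemma unbounded_unique {K : Set Pl} (hK : IsCompact K) {p q : Pl}
    (hp : ¬ Bornology.IsBounded (cmp K p)) (hq : ¬ Bornology.IsBounded (cmp K q)) :
    cmp K p = cmp K q := by
  obtain ⟨R, hR⟩ := hK.exists_bound_of_continuousOn (f := fun z => cx z) cx.continuous.continuousOn
  have hO := outside_preconn (max R 0) (le_max_right _ _)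
  have hOK : ∀ z ∈ {z : Pl | max R 0 < ‖cx z‖}, z ∉ K := by
    intro z hz hzK
    have := hR z hzK
    have h2 := le_max_left R 0
    simp only [Set.mem_ofPred_eq] at hz
    linarith
  have key : ∀ p, ¬ Bornology.IsBounded (cmp K p) →
      ∃ z ∈ cmp K p, z ∈ {z : Pl | max R 0 < ‖cx z‖} := by
    intro p hp
    by_contra! hc
    apply hp
    have : IsCompact (cx.symm '' Metric.closedBall 0 (max R 0)) :=
      (isCompact_closedBall _ _).image cx.symm.continuous
    refine this.isBounded.subset fun z hz => ⟨cx z, ?_, by simp⟩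
    have := hc z hz
    simp only [Set.mem_ofPred_eq, not_lt] at this
    simpa using this
  obtain ⟨z, hz, hzO⟩ := key p hp
  obtain ⟨w, hw, hwO⟩ := key q hq
  rw [cmp_eq hz, cmp_eq hw]
  have := subset_cmp hO hzO hOK hwO
  exact cmp_eq this

/-- Eilenberg's criterion, hard direction. -/
lemma cmp_eq_of_hasLog {K : Set Pl} (hK : IsCompact K) {p q : Pl} (hp : p ∉ K) (hq : q ∉ K)
    (h : HasLog K (fun z => (cx z - cx p) * (cx z - cx q)⁻¹)) : cmp K p = cmp K q := by
  have key : ∀ p q : Pl, p ∉ K → q ∉ K → HasLog K (fun z => (cx z - cx p) * (cx z - cx q)⁻¹) →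
      Bornology.IsBounded (cmp K p) → cmp K p = cmp K q := by
    intro p q hp hq h hb
    by_contra hne
    have hq' : q ∉ closure (cmp K p) := fun hc => hne (cmp_eq (mem_cmp_of_closure hK.isClosed hc hq))
    refine not_hasLog_of_bounded hK.isClosed hp hb one_ne_zero (g := fun z => (cx z - cx q) ^ (-1:ℤ))
      (continuousOn_zpow_sub _ hq') ?_ ?_
    · intro z hz
      exact zpow_ne_zero _ (cx_sub_ne (fun e => hq' (e ▸ hz)))
    · simpa using h
  by_cases hb : Bornology.IsBounded (cmp K p)
  · exact key p q hp hq h hb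
  by_cases hb' : Bornology.IsBounded (cmp K q)
  · refine (key q p hq hp (h.inv.congr fun z hz => ?_) hb').symm
    simp [mul_comm]
  · exact unbounded_unique hK hb hb'

/-- Eilenberg's criterion, easy direction. -/
lemma hasLog_of_cmp_eq {K : Set Pl} (hK : IsClosed K) {p q : Pl} (hp : p ∉ K) (hq : q ∉ K)
    (h : cmp K p = cmp K q) : HasLog K (fun z => (cx z - cx p) * (cx z - cx q)⁻¹) := by
  have hc : IsConnected (cmp K q) := ⟨⟨q, mem_cmp hq⟩, cmp_preconn⟩
  have hpc := (cmp_open hK).isConnected_iff_isPathConnected.mp hc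
  obtain ⟨γ, hγ⟩ := hpc.joinedIn q (mem_cmp hq) p (h ▸ mem_cmp hp)
  exact hasLog_of_path γ (fun t => cmp_not_mem (hγ t))

/-- Janiszewski's theorem. -/
lemma janiszewski {K L : Set Pl} (hK : IsCompact K) (hL : IsCompact L)
    (hc : IsPreconnected (K ∩ L)) {p q : Pl} (hp : p ∉ K ∪ L) (hq : q ∉ K ∪ L)
    (h1 : cmp K p = cmp K q) (h2 : cmp L p = cmp L q) : cmp (K ∪ L) p = cmp (K ∪ L) q := by
  simp only [Set.mem_union, not_or] at hp hq
  refine cmp_eq_of_hasLog (hK.union hL) (by simp [hp]) (by simp [hq]) ?_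
  exact (hasLog_of_cmp_eq hK.isClosed hp.1 hq.1 h1).union_aux
    (hasLog_of_cmp_eq hL.isClosed hp.2 hq.2 h2) hc (Or.inr ⟨hK.isClosed, hL.isClosed⟩)

/-- All nowhere zero functions have logs. -/
def AllLog (K : Set Pl) : Prop :=
  ∀ f : Pl → ℂ, ContinuousOn f K → (∀ z ∈ K, f z ≠ 0) → HasLog K f

lemma AllLog.union {K L : Set Pl} (hK : AllLog K) (hL : AllLog L) (cK : IsClosed K)
    (cL : IsClosed L) (h : IsPreconnected (K ∩ L)) : AllLog (K ∪ L) := by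
  intro f hf h0
  exact (hK f (hf.mono Set.subset_union_left) (fun z hz => h0 z (Or.inl hz))).union_aux
    (hL f (hf.mono Set.subset_union_right) (fun z hz => h0 z (Or.inr hz))) h (Or.inr ⟨cK, cL⟩)

lemma AllLog.cmp_eq {K : Set Pl} (hK : AllLog K) (cK : IsCompact K) {p q : Pl} (hp : p ∉ K)
    (hq : q ∉ K) : cmp K p = cmp K q := by
  refine cmp_eq_of_hasLog cK hp hq (hK _ ?_ ?_)
  · have := (continuousOn_zpow_sub 1 hp).mul (continuousOn_zpow_sub (-1) hq)
    exact this.congr fun z _ => by simp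
  · intro z hz
    exact mul_ne_zero (cx_sub_ne fun e => hp (e ▸ hz)) (inv_ne_zero (cx_sub_ne fun e => hq (e ▸ hz)))

lemma exists_log_real (g : ℝ → ℂ) (hg : Continuous g) (h0 : ∀ t, g t ≠ 0) :
    ∃ l : ℝ → ℂ, Continuous l ∧ ∀ t, Complex.exp (l t) = g t := by
  obtain ⟨l, hl, he, -⟩ := exists_log_homotopy (X := ℝ)
    (fun a => g ((a.1 : ℝ) * a.2)) (by fun_prop)
    (fun a => h0 _) (fun _ => Complex.log (g 0)) (by fun_prop)
    (fun _ => by simp [Complex.exp_log (h0 0)])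
  refine ⟨fun z => l (1, z), by fun_prop, fun z => ?_⟩
  rw [he]; simp

lemma allLog_image {f : ℝ → Pl} (hf : Continuous f) {s t : ℝ} (hst : s ≤ t)
    (hi : Set.InjOn f (Set.Icc s t)) : AllLog (f '' Set.Icc s t) := by
  intro F hF h0
  have hcl : ∀ x, max s (min x t) ∈ Set.Icc s t := fun x =>
    ⟨le_max_left _ _, max_le hst (min_le_right _ _)⟩
  obtain ⟨l, hl, he⟩ := exists_log_real (fun x => F (f (max s (min x t))))
    (hF.comp_continuous (by fun_prop) (fun x => ⟨_, hcl x, rfl⟩)) (fun x => h0 _ ⟨_, hcl x, rfl⟩)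
  let φ : Set.Icc s t → Pl := fun x => f x
  have hφ : Continuous φ := by fun_prop
  have hφi : Function.Injective φ := fun x y h => Subtype.ext (hi x.2 y.2 h)
  have hemb := hφ.isClosedEmbedding hφi
  let e := hemb.toIsEmbedding.toHomeomorph
  have hr : Set.range φ = f '' Set.Icc s t := by
    ext z; simp [φ]
  rw [← hr]
  classical
  refine ⟨fun z => if h : z ∈ Set.range φ then l (e.symm ⟨z, h⟩).1 else 0, ?_, ?_⟩
  · rw [continuousOn_iff_continuous_domRestrict]
    have : (Set.range φ).domRestrict
        (fun z => if h : z ∈ Set.range φ then l (e.symm ⟨z, h⟩).1 else 0)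
        = fun x => l (e.symm x).1 := by
      ext x
      have := x.2
      simp only [Set.domRestrict, this, dif_pos]
    rw [this]
    have := e.symm.continuous
    fun_prop
  · intro z hz
    simp only [hz, dif_pos]
    rw [he]
    set y := e.symm ⟨z, hz⟩ with hy
    have h1 : max s (min y.1 t) = y.1 := by
      rw [min_eq_left y.2.2, max_eq_right y.2.1]
    rw [h1]
    have h2 : e y = ⟨z, hz⟩ := by simp [hy]
    have h3 : φ y = z := congrArg Subtype.val h2
    exact congrArg F h3

end WhitneyAux

namespace WhitneyAux

/-- `A` is an arc from `a` to `b`. -/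
def IsArc (A : Set Pl) (a b : Pl) : Prop :=
  ∃ f : ℝ → Pl, Continuous f ∧ Set.InjOn f (Set.Icc 0 1) ∧ f 0 = a ∧ f 1 = b ∧
    f '' Set.Icc 0 1 = A

lemma IsArc.of_path {a b : Pl} (f : Path a b) (hf : Function.Injective f) :
    IsArc (Set.range f) a b := by
  refine ⟨f.extend, f.continuous_extend, ?_, by simp, by simp, ?_⟩
  · intro x hx y hy h
    rw [f.extend_apply hx, f.extend_apply hy] at h
    exact congrArg Subtype.val (hf h)
  · ext z
    constructor
    · rintro ⟨x, hx, rfl⟩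
      exact ⟨⟨x, hx⟩, (f.extend_apply hx).symm⟩
    · rintro ⟨x, rfl⟩
      exact ⟨x, x.2, f.extend_apply x.2⟩

lemma IsArc.symm {A : Set Pl} {a b : Pl} (h : IsArc A a b) : IsArc A b a := by
  obtain ⟨f, hf, hi, h0, h1, hA⟩ := h
  refine ⟨fun t => f (1 - t), by fun_prop, ?_, by simpa, by simpa, ?_⟩
  · intro x hx y hy h
    have := hi (x₁ := 1 - x) (by constructor <;> linarith [hx.1, hx.2])
      (x₂ := 1 - y) (by constructor <;> linarith [hy.1, hy.2]) h
    linarith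
  · rw [← hA]
    ext z
    constructor
    · rintro ⟨x, hx, rfl⟩
      exact ⟨1 - x, by constructor <;> linarith [hx.1, hx.2], rfl⟩
    · rintro ⟨x, hx, rfl⟩
      exact ⟨1 - x, by constructor <;> linarith [hx.1, hx.2], by simp⟩

lemma IsArc.trans {A B : Set Pl} {a b c : Pl} (hA : IsArc A a b) (hB : IsArc B b c)
    (hAB : A ∩ B ⊆ {b}) : IsArc (A ∪ B) a c := by
  obtain ⟨f, hf, fi, f0, f1, rfl⟩ := hA
  obtain ⟨g, hg, gi, g0, g1, rfl⟩ := hB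
  set h : ℝ → Pl := fun t => if t ≤ 1/2 then f (2 * t) else g (2 * t - 1) with hh
  have hl : ∀ t, t ≤ 1/2 → h t = f (2 * t) := fun t ht => by simp only [hh, ht, if_true]
  have hr : ∀ t, 1/2 < t → h t = g (2 * t - 1) := fun t ht => by
    simp only [hh, not_le.mpr ht, if_false]
  have cross : ∀ x y, 0 ≤ x → x ≤ 1/2 → 1/2 < y → y ≤ 1 → h x = h y → x = y := by
    intro x y hx0 hx hy hy1 e
    rw [hl x hx, hr y hy] at e
    have h1 : f (2 * x) ∈ f '' Set.Icc 0 1 ∩ g '' Set.Icc 0 1 :=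
      ⟨⟨_, ⟨by linarith, by linarith⟩, rfl⟩, ⟨2 * y - 1, ⟨by linarith, by linarith⟩, e.symm⟩⟩
    have h2 := hAB h1
    simp only [Set.mem_singleton_iff] at h2
    have := gi (x₁ := 2 * y - 1) ⟨by linarith, by linarith⟩ (x₂ := 0) ⟨by linarith, by linarith⟩
      (by rw [← e, h2, g0])
    linarith
  refine ⟨h, ?_, ?_, ?_, ?_, ?_⟩
  · apply Continuous.if_le (by fun_prop) (by fun_prop) (by fun_prop) (by fun_prop)
    intro x hx
    rw [hx]; norm_num [f1, g0]
  · intro x hx y hy e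
    rcases le_or_gt x (1/2) with hx2 | hx2 <;> rcases le_or_gt y (1/2) with hy2 | hy2
    · rw [hl x hx2, hl y hy2] at e
      have := fi (x₁ := 2 * x) ⟨by linarith [hx.1], by linarith⟩
        (x₂ := 2 * y) ⟨by linarith [hy.1], by linarith⟩ e
      linarith
    · exact cross x y hx.1 hx2 hy2 hy.2 e
    · exact (cross y x hy.1 hy2 hx2 hx.2 e.symm).symm
    · rw [hr x hx2, hr y hy2] at e
      have := gi (x₁ := 2 * x - 1) ⟨by linarith, by linarith [hx.2]⟩
        (x₂ := 2 * y - 1) ⟨by linarith, by linarith [hy.2]⟩ e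
      linarith
  · rw [hl 0 (by norm_num)]; simpa
  · rw [hr 1 (by norm_num)]; norm_num [g1]
  · ext z
    constructor
    · rintro ⟨x, hx, rfl⟩
      rcases le_or_gt x (1/2) with hx2 | hx2
      · rw [hl x hx2]
        exact Or.inl ⟨_, ⟨by linarith [hx.1], by linarith⟩, rfl⟩
      · rw [hr x hx2]
        exact Or.inr ⟨_, ⟨by linarith, by linarith [hx.2]⟩, rfl⟩
    · rintro (⟨x, hx, rfl⟩ | ⟨x, hx, rfl⟩)
      · refine ⟨x / 2, ⟨by linarith [hx.1], by linarith [hx.2]⟩, ?_⟩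
        rw [hl _ (by linarith [hx.2])]
        congr 1; ring
      · rcases eq_or_lt_of_le hx.1 with h0 | h0
        · refine ⟨1/2, ⟨by norm_num, by norm_num⟩, ?_⟩
          rw [hl _ le_rfl, ← h0, g0, ← f1]; norm_num
        · refine ⟨(x + 1) / 2, ⟨by linarith [hx.1], by linarith [hx.2]⟩, ?_⟩
          rw [hr _ (by linarith)]
          congr 1; ring

lemma IsArc.compact {A : Set Pl} {a b : Pl} (h : IsArc A a b) : IsCompact A := by
  obtain ⟨f, hf, hi, h0, h1, rfl⟩ := h
  exact isCompact_Icc.image hf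

lemma IsArc.left_mem {A : Set Pl} {a b : Pl} (h : IsArc A a b) : a ∈ A := by
  obtain ⟨f, hf, hi, rfl, h1, rfl⟩ := h
  exact ⟨0, by simp, rfl⟩

lemma IsArc.right_mem {A : Set Pl} {a b : Pl} (h : IsArc A a b) : b ∈ A := h.symm.left_mem

lemma IsArc.ne {A : Set Pl} {a b : Pl} (h : IsArc A a b) : a ≠ b := by
  obtain ⟨f, hf, hi, rfl, rfl, rfl⟩ := h
  intro e
  have := hi (by simp) (by simp) e
  norm_num at this

lemma IsArc.preconn {A : Set Pl} {a b : Pl} (h : IsArc A a b) : IsPreconnected A := by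
  obtain ⟨f, hf, hi, h0, h1, rfl⟩ := h
  exact isPreconnected_Icc.image _ hf.continuousOn

lemma IsArc.allLog {A : Set Pl} {a b : Pl} (h : IsArc A a b) : AllLog A := by
  obtain ⟨f, hf, hi, h0, h1, rfl⟩ := h
  exact allLog_image hf zero_le_one hi

/-- The interior of an arc is connected, nonempty and dense. -/
lemma IsArc.interior {A : Set Pl} {a b : Pl} (h : IsArc A a b) :
    IsPreconnected (A \ {a, b}) ∧ (A \ {a, b}).Nonempty ∧ A ⊆ closure (A \ {a, b}) ∧
      IsPreconnected (A \ {b}) := by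
  obtain ⟨f, hf, hi, rfl, rfl, rfl⟩ := h
  have e : f '' Set.Icc 0 1 \ {f 0, f 1} = f '' Set.Ioo 0 1 := by
    ext z
    constructor
    · rintro ⟨⟨x, hx, rfl⟩, hz⟩
      simp only [Set.mem_insert_iff, Set.mem_singleton_iff, not_or] at hz
      exact ⟨x, ⟨lt_of_le_of_ne hx.1 fun e => hz.1 (by rw [e]),
        lt_of_le_of_ne hx.2 fun e => hz.2 (by rw [e])⟩, rfl⟩
    · rintro ⟨x, hx, rfl⟩
      refine ⟨⟨x, Set.Ioo_subset_Icc_self hx, rfl⟩, ?_⟩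
      simp only [Set.mem_insert_iff, Set.mem_singleton_iff, not_or]
      exact ⟨fun e => hx.1.ne' (hi (Set.Ioo_subset_Icc_self hx) (by simp) e),
        fun e => hx.2.ne (hi (Set.Ioo_subset_Icc_self hx) (by simp) e)⟩
  have e' : f '' Set.Icc 0 1 \ {f 1} = f '' Set.Ico 0 1 := by
    ext z
    constructor
    · rintro ⟨⟨x, hx, rfl⟩, hz⟩
      simp only [Set.mem_singleton_iff] at hz
      exact ⟨x, ⟨hx.1, lt_of_le_of_ne hx.2 fun e => hz (by rw [e])⟩, rfl⟩
    · rintro ⟨x, hx, rfl⟩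
      refine ⟨⟨x, Set.Ico_subset_Icc_self hx, rfl⟩, ?_⟩
      simp only [Set.mem_singleton_iff]
      exact fun e => hx.2.ne (hi (Set.Ico_subset_Icc_self hx) (by simp) e)
  rw [e, e']
  refine ⟨isPreconnected_Ioo.image _ hf.continuousOn, ⟨f (1/2), 1/2, by norm_num, rfl⟩, ?_,
    isPreconnected_Ico.image _ hf.continuousOn⟩
  rw [← closure_Ioo (zero_ne_one (α := ℝ))]
  exact image_closure_subset_closure_image hf

lemma IsArc.hasLog_compl {A : Set Pl} {a b : Pl} (h : IsArc A a b) :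
    HasLog Aᶜ (fun z => (cx z - cx b) * (cx z - cx a)⁻¹) := by
  obtain ⟨f, hf, hi, rfl, rfl, rfl⟩ := h
  let γ : Path (f 0) (f 1) := ⟨⟨fun t => f t, by fun_prop⟩, by simp, by simp⟩
  exact hasLog_of_path γ (fun t ht => ht ⟨t, t.2, rfl⟩)

/-- Jordan curve theorem: separation. -/
lemma jordan_sep {A B : Set Pl} {a b : Pl} (hA : IsArc A a b) (hB : IsArc B a b)
    (hAB : A ∩ B ⊆ {a, b}) : ¬ IsPreconnected (A ∪ B)ᶜ := by
  intro hc
  have h := hA.hasLog_compl.union_aux hB.hasLog_compl (by rwa [← Set.compl_union])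
    (Or.inl ⟨hA.compact.isClosed.isOpen_compl, hB.compact.isClosed.isOpen_compl⟩)
  have hab := hA.ne
  set r := ‖cx b - cx a‖ / 2 with hr
  have hr0 : 0 < r := by
    have := norm_pos_iff.mpr (cx_sub_ne hab.symm)
    linarith
  refine not_hasLog_circle b r hr0 1 one_ne_zero {z | ‖cx z - cx b‖ = r} (fun z hz => hz) ?_
  have h1 : HasLog {z | ‖cx z - cx b‖ = r} (fun z => (cx z - cx b) * (cx z - cx a)⁻¹) := by
    apply h.mono
    intro z hz
    rw [← Set.compl_inter]
    intro hz2
    have hz' : ‖cx z - cx b‖ = r := hz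
    rcases hAB hz2 with e | e
    · rw [e, norm_sub_rev] at hz'; linarith
    · rw [Set.mem_singleton_iff] at e
      rw [e] at hz'; simp at hz'; linarith
  have hne : cx b - cx a ≠ 0 := cx_sub_ne hab.symm
  have h2 : HasLog {z | ‖cx z - cx b‖ = r} (fun z => (cx z - cx a) / (cx b - cx a)) := by
    apply hasLog_of_slit
    · exact ((cx.continuous.sub continuous_const).div_const _).continuousOn
    · intro z hz
      have hz' : ‖cx z - cx b‖ = r := hz
      left
      have e : (cx z - cx a) / (cx b - cx a) = 1 + (cx z - cx b) / (cx b - cx a) := by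
        field_simp; ring
      rw [e]
      have hn : ‖(cx z - cx b) / (cx b - cx a)‖ = 1 / 2 := by
        rw [norm_div, hz', hr]
        have := norm_ne_zero_iff.mpr hne
        field_simp
      have := (Complex.abs_re_le_norm ((cx z - cx b) / (cx b - cx a)))
      rw [hn] at this
      have := (abs_le.mp this).1
      simp only [Complex.add_re, Complex.one_re]
      linarith
  have h3 : HasLog {z | ‖cx z - cx b‖ = r} (fun _ => cx b - cx a) :=
    ⟨fun _ => Complex.log (cx b - cx a), continuousOn_const, fun z _ => Complex.exp_log hne⟩
  refine ((h1.mul h2).mul h3).congr ?_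
  intro z hz
  have hz' : ‖cx z - cx b‖ = r := hz
  have hza : cx z - cx a ≠ 0 := by
    apply cx_sub_ne
    rintro rfl
    rw [norm_sub_rev] at hz'; linarith
  simp only [zpow_one]
  field_simp

lemma jordan_two {A B : Set Pl} {a b : Pl} (hA : IsArc A a b) (hB : IsArc B a b)
    (hAB : A ∩ B ⊆ {a, b}) (p : Pl) : ∃ q, q ∉ A ∪ B ∧ p ∉ cmp (A ∪ B) q := by
  by_contra! hc
  apply jordan_sep hA hB hAB
  by_cases hp : p ∈ A ∪ B
  · have : (A ∪ B)ᶜ = ∅ := by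
      ext q
      simp only [Set.mem_empty_iff_false, iff_false]
      intro hq
      exact cmp_not_mem (hc q hq) hp
    rw [this]; exact isPreconnected_empty
  · have : (A ∪ B)ᶜ = cmp (A ∪ B) p := by
      ext q
      constructor
      · intro hq
        rw [← cmp_eq (hc q hq)]; exact mem_cmp hq
      · intro hq; exact cmp_not_mem hq
    rw [this]; exact cmp_preconn

/-- Every component of the complement of a Jordan curve has the whole curve in its closure. -/
lemma jordan_full {A B : Set Pl} {a b : Pl} (hA : IsArc A a b) (hB : IsArc B a b)
    (hAB : A ∩ B ⊆ {a, b}) {p : Pl} (hp : p ∉ A ∪ B) : A ⊆ closure (cmp (A ∪ B) p) := by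
  have hJ : IsCompact (A ∪ B) := hA.compact.union hB.compact
  have hBc := hB.compact
  have hBl := hB.allLog
  have haB := hB.left_mem
  have hbB := hB.right_mem
  obtain ⟨f, hf, hi, rfl, rfl, rfl⟩ := hA
  have hcl : f '' Set.Icc 0 1 ⊆ closure (f '' Set.Ioo 0 1) := by
    rw [← closure_Ioo (zero_ne_one (α := ℝ))]
    exact image_closure_subset_closure_image hf
  refine hcl.trans (closure_minimal ?_ isClosed_closure)
  rintro _ ⟨x, hx, rfl⟩
  by_contra hxc
  set D := cmp (f '' Set.Icc 0 1 ∪ B) p with hD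
  have hU : IsOpen (f ⁻¹' (closure D)ᶜ ∩ Set.Ioo 0 1) :=
    (isClosed_closure.isOpen_compl.preimage hf).inter isOpen_Ioo
  obtain ⟨ε, hε, hball⟩ := Metric.isOpen_iff.mp hU x ⟨hxc, hx⟩
  set s := x - ε / 2
  set t := x + ε / 2
  have hsub : Set.Icc s t ⊆ f ⁻¹' (closure D)ᶜ ∩ Set.Ioo 0 1 := by
    intro y hy
    apply hball
    rw [Metric.mem_ball, Real.dist_eq, abs_lt]
    constructor <;> simp only [s, t, Set.mem_Icc] at hy <;> linarith [hy.1, hy.2]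
  have hst : s < t := by simp only [s, t]; linarith
  have hs0 : 0 < s := (hsub ⟨le_rfl, hst.le⟩).2.1
  have ht1 : t < 1 := (hsub ⟨hst.le, le_rfl⟩).2.2
  have hs1 : s < 1 := hst.trans ht1
  have ht0 : 0 < t := hs0.trans hst
  -- the set K
  have i1 : Set.InjOn f (Set.Icc 0 s) := hi.mono (Set.Icc_subset_Icc le_rfl hs1.le)
  have i2 : Set.InjOn f (Set.Icc t 1) := hi.mono (Set.Icc_subset_Icc ht0.le le_rfl)
  have c1 : IsCompact (f '' Set.Icc 0 s) := isCompact_Icc.image hf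
  have c2 : IsCompact (f '' Set.Icc t 1) := isCompact_Icc.image hf
  have inter1 : f '' Set.Icc 0 s ∩ B = {f 0} := by
    apply Set.Subset.antisymm
    · rintro _ ⟨⟨y, hy, rfl⟩, hyB⟩
      rcases hAB ⟨⟨y, ⟨hy.1, hy.2.trans hs1.le⟩, rfl⟩, hyB⟩ with e | e
      · exact e
      · have := hi (x₁ := y) ⟨hy.1, hy.2.trans hs1.le⟩ (x₂ := 1) (by simp) e
        linarith [hy.2]
    · rintro _ rfl
      exact ⟨⟨0, ⟨le_rfl, hs0.le⟩, rfl⟩, haB⟩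
  have inter2 : (f '' Set.Icc 0 s ∪ B) ∩ f '' Set.Icc t 1 = {f 1} := by
    apply Set.Subset.antisymm
    · rintro _ ⟨h1, ⟨y, hy, rfl⟩⟩
      rcases h1 with ⟨w, hw, e⟩ | hyB
      · have := hi (x₁ := w) ⟨hw.1, hw.2.trans hs1.le⟩ (x₂ := y) ⟨ht0.le.trans hy.1, hy.2⟩ e
        linarith [hw.2, hy.1]
      rcases hAB ⟨⟨y, ⟨ht0.le.trans hy.1, hy.2⟩, rfl⟩, hyB⟩ with e | e
      · have := hi (x₁ := y) ⟨ht0.le.trans hy.1, hy.2⟩ (x₂ := 0) (by simp) e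
        linarith [hy.1]
      · exact e
    · rintro _ rfl
      exact ⟨Or.inr hbB, ⟨1, ⟨ht1.le, le_rfl⟩, rfl⟩⟩
  have hKl : AllLog ((f '' Set.Icc 0 s ∪ B) ∪ f '' Set.Icc t 1) := by
    refine AllLog.union (AllLog.union (allLog_image hf hs0.le i1) hBl c1.isClosed hBc.isClosed ?_)
      (allLog_image hf ht1.le i2) (c1.union hBc).isClosed c2.isClosed ?_
    · rw [inter1]; exact isPreconnected_singleton
    · rw [inter2]; exact isPreconnected_singleton
  set K := (f '' Set.Icc 0 s ∪ B) ∪ f '' Set.Icc t 1 with hKdef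
  have hKc : IsCompact K := (c1.union hBc).union c2
  have hKJ : K ⊆ f '' Set.Icc 0 1 ∪ B := by
    rintro z ((⟨y, hy, rfl⟩ | hz) | ⟨y, hy, rfl⟩)
    · exact Or.inl ⟨y, ⟨hy.1, hy.2.trans hs1.le⟩, rfl⟩
    · exact Or.inr hz
    · exact Or.inl ⟨y, ⟨ht0.le.trans hy.1, hy.2⟩, rfl⟩
  have hJK : ∀ z ∈ f '' Set.Icc 0 1 ∪ B, z ∉ K → z ∉ closure D := by
    rintro z (⟨y, hy, rfl⟩ | hz) hzK
    · have hy' : y ∈ Set.Icc s t := by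
        constructor
        · by_contra! hlt
          exact hzK (Or.inl (Or.inl ⟨y, ⟨hy.1, hlt.le⟩, rfl⟩))
        · by_contra! hlt
          exact hzK (Or.inr ⟨y, ⟨hlt.le, hy.2⟩, rfl⟩)
      exact (hsub hy').1
    · exact absurd (Or.inl (Or.inr hz)) hzK
  have hpK : p ∉ K := fun h => hp (hKJ h)
  have hxs : x ∈ Set.Icc s t := by simp only [s, t]; constructor <;> linarith
  have hxK : f x ∉ K := by
    rintro ((⟨y, hy, e⟩ | hz) | ⟨y, hy, e⟩)
    · have := hi (x₁ := y) ⟨hy.1, hy.2.trans hs1.le⟩ (x₂ := x) (Set.Ioo_subset_Icc_self hx) e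
      simp only [s] at hy; linarith [hy.2]
    · rcases hAB ⟨⟨x, Set.Ioo_subset_Icc_self hx, rfl⟩, hz⟩ with e | e
      · have := hi (x₁ := x) (Set.Ioo_subset_Icc_self hx) (x₂ := 0) (by simp) e
        linarith [hx.1]
      · have := hi (x₁ := x) (Set.Ioo_subset_Icc_self hx) (x₂ := 1) (by simp) e
        linarith [hx.2]
    · have := hi (x₁ := y) ⟨ht0.le.trans hy.1, hy.2⟩ (x₂ := x) (Set.Ioo_subset_Icc_self hx) e
      simp only [t] at hy; linarith [hy.1]
  have heq := hKl.cmp_eq hKc hpK hxK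
  have hDo : IsOpen D := cmp_open hJ.isClosed
  have hpre : IsPreconnected (cmp K p) := cmp_preconn
  obtain ⟨z, hzK, hz1, hz2⟩ := hpre D (closure D)ᶜ hDo isClosed_closure.isOpen_compl (by
      intro z hz
      by_cases hzc : z ∈ closure D
      · left
        have hzK := cmp_not_mem hz
        apply mem_cmp_of_closure hJ.isClosed hzc
        intro hzJ
        exact hJK z hzJ hzK hzc
      · exact Or.inr hzc)
    ⟨p, mem_cmp hpK, mem_cmp hp⟩ ⟨f x, heq ▸ mem_cmp hxK, hxc⟩
  exact hz2 (subset_closure hz1)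

end WhitneyAux

namespace WhitneyAux

lemma hasLog_glue {S T : Set Pl} {f : Pl → ℂ} {l l' : Pl → ℂ} (hl : ContinuousOn l S)
    (he : ∀ z ∈ S, Complex.exp (l z) = f z) (hl' : ContinuousOn l' T)
    (he' : ∀ z ∈ T, Complex.exp (l' z) = f z) (hS : IsClosed S) (hT : IsClosed T)
    (hn : ∀ z ∈ S ∩ T, l z = l' z) : HasLog (S ∪ T) f := by
  classical
  set m : Pl → ℂ := fun z => if z ∈ S then l z else l' z with hm
  have hmS : ∀ z ∈ S, m z = l z := fun z hz => by simp [hm, hz]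
  have hmT : ∀ z ∈ T, m z = l' z := fun z hz => by
    by_cases h : z ∈ S
    · rw [hmS z h, hn z ⟨h, hz⟩]
    · simp [hm, h]
  refine ⟨m, (hl.congr hmS).union_of_isClosed (hl'.congr hmT) hS hT, ?_⟩
  rintro z (hz | hz)
  · rw [hmS z hz, he z hz]
  · rw [hmT z hz, he' z hz]

lemma jordan_relation {A B : Set Pl} {a b : Pl} (hA : IsArc A a b) (hB : IsArc B a b)
    (hAB : A ∩ B ⊆ {a, b}) {f g : Pl → ℂ} (hf : ContinuousOn f (A ∪ B))
    (hf0 : ∀ z ∈ A ∪ B, f z ≠ 0) (hg : ContinuousOn g (A ∪ B)) (hg0 : ∀ z ∈ A ∪ B, g z ≠ 0) :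
    ∃ m n : ℤ, (m ≠ 0 ∨ n ≠ 0) ∧ HasLog (A ∪ B) (fun z => f z ^ m * g z ^ n) := by
  have sA : A ⊆ A ∪ B := Set.subset_union_left
  have sB : B ⊆ A ∪ B := Set.subset_union_right
  obtain ⟨f1, cf1, ef1⟩ := hA.allLog f (hf.mono sA) (fun z hz => hf0 z (sA hz))
  obtain ⟨f2, cf2, ef2⟩ := hB.allLog f (hf.mono sB) (fun z hz => hf0 z (sB hz))
  obtain ⟨g1, cg1, eg1⟩ := hA.allLog g (hg.mono sA) (fun z hz => hg0 z (sA hz))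
  obtain ⟨g2, cg2, eg2⟩ := hB.allLog g (hg.mono sB) (fun z hz => hg0 z (sB hz))
  have haA := hA.left_mem
  have haB := hB.left_mem
  have hbA := hA.right_mem
  have hbB := hB.right_mem
  obtain ⟨α, hα⟩ := Complex.exp_eq_exp_iff_exists_int.mp ((ef1 a haA).trans (ef2 a haB).symm)
  obtain ⟨β, hβ⟩ := Complex.exp_eq_exp_iff_exists_int.mp ((ef1 b hbA).trans (ef2 b hbB).symm)
  obtain ⟨α', hα'⟩ := Complex.exp_eq_exp_iff_exists_int.mp ((eg1 a haA).trans (eg2 a haB).symm)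
  obtain ⟨β', hβ'⟩ := Complex.exp_eq_exp_iff_exists_int.mp ((eg1 b hbA).trans (eg2 b hbB).symm)
  have hmn : ∃ m n : ℤ, (m ≠ 0 ∨ n ≠ 0) ∧ m * α + n * α' = m * β + n * β' := by
    by_cases h : α - β = 0
    · exact ⟨1, 0, by simp, by linarith⟩
    · exact ⟨-(α' - β'), α - β, Or.inr h, by ring⟩
  obtain ⟨m, n, hne, hmn⟩ := hmn
  refine ⟨m, n, hne, ?_⟩
  refine hasLog_glue (l := fun z => m * f1 z + n * g1 z)
    (l' := fun z => m * f2 z + n * g2 z + (m * α + n * α' : ℤ) * (2 * Real.pi * Complex.I))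
    (by fun_prop) ?_ (by fun_prop) ?_ hA.compact.isClosed hB.compact.isClosed ?_
  · intro z hz
    rw [Complex.exp_add, Complex.exp_int_mul, Complex.exp_int_mul, ef1 z hz, eg1 z hz]
  · intro z hz
    rw [Complex.exp_add, Complex.exp_int_mul_two_pi_mul_I, mul_one, Complex.exp_add,
      Complex.exp_int_mul, Complex.exp_int_mul, ef2 z hz, eg2 z hz]
  · intro z hz
    rcases hAB hz with rfl | e
    · simp only [hα, hα']
      push_cast; ring
    · rw [Set.mem_singleton_iff] at e
      subst e
      rw [hmn, hβ, hβ']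
      push_cast; ring

/-- A Jordan curve has at most one bounded complementary component. -/
lemma jordan_bounded_unique {A B : Set Pl} {a b : Pl} (hA : IsArc A a b) (hB : IsArc B a b)
    (hAB : A ∩ B ⊆ {a, b}) {p q : Pl} (hp : p ∉ A ∪ B) (hq : q ∉ A ∪ B)
    (bp : Bornology.IsBounded (cmp (A ∪ B) p)) (bq : Bornology.IsBounded (cmp (A ∪ B) q)) :
    cmp (A ∪ B) p = cmp (A ∪ B) q := by
  by_contra hne
  have hJ : IsClosed (A ∪ B) := (hA.compact.union hB.compact).isClosed
  have hpq : p ∉ closure (cmp (A ∪ B) q) := fun hc => hne (cmp_eq (mem_cmp_of_closure hJ hc hp)).symm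
  have hqp : q ∉ closure (cmp (A ∪ B) p) := fun hc => hne (cmp_eq (mem_cmp_of_closure hJ hc hq))
  have cf : ∀ p : Pl, ContinuousOn (fun z => cx z - cx p) (A ∪ B) := fun p =>
    (cx.continuous.sub continuous_const).continuousOn
  obtain ⟨m, n, hmn, hlog⟩ := jordan_relation hA hB hAB (cf p)
    (fun z hz => cx_sub_ne (fun e => hp (e ▸ hz))) (cf q)
    (fun z hz => cx_sub_ne (fun e => hq (e ▸ hz)))
  rcases hmn with h | h
  · exact not_hasLog_of_bounded hJ hp bp h (continuousOn_zpow_sub n hqp)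
      (fun z hz => zpow_ne_zero _ (cx_sub_ne (fun e => hqp (e ▸ hz)))) hlog
  · refine not_hasLog_of_bounded hJ hq bq h (continuousOn_zpow_sub m hpq)
      (fun z hz => zpow_ne_zero _ (cx_sub_ne (fun e => hpq (e ▸ hz)))) (hlog.congr ?_)
    intro z _
    exact mul_comm _ _

/-- Jordan curve theorem: at most two components. -/
lemma jordan_le_two {A B : Set Pl} {a b : Pl} (hA : IsArc A a b) (hB : IsArc B a b)
    (hAB : A ∩ B ⊆ {a, b}) {p q r : Pl} (hp : p ∉ A ∪ B) (hq : q ∉ A ∪ B) (hr : r ∉ A ∪ B)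
    (hpq : cmp (A ∪ B) p ≠ cmp (A ∪ B) q) (hpr : cmp (A ∪ B) p ≠ cmp (A ∪ B) r) :
    cmp (A ∪ B) q = cmp (A ∪ B) r := by
  have hJ := hA.compact.union hB.compact
  by_contra hqr
  by_cases bp : Bornology.IsBounded (cmp (A ∪ B) p)
  · by_cases bq : Bornology.IsBounded (cmp (A ∪ B) q)
    · exact hpq (jordan_bounded_unique hA hB hAB hp hq bp bq)
    · by_cases br : Bornology.IsBounded (cmp (A ∪ B) r)
      · exact hpr (jordan_bounded_unique hA hB hAB hp hr bp br)
      · exact hqr (unbounded_unique hJ bq br)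
  · by_cases bq : Bornology.IsBounded (cmp (A ∪ B) q)
    · by_cases br : Bornology.IsBounded (cmp (A ∪ B) r)
      · exact hqr (jordan_bounded_unique hA hB hAB hq hr bq br)
      · exact hpr (unbounded_unique hJ bp br)
    · exact hpq (unbounded_unique hJ bp bq)

/-- Theta lemma. -/
lemma theta {A B C : Set Pl} {a b : Pl} (hA : IsArc A a b) (hB : IsArc B a b) (hC : IsArc C a b)
    (hAB : A ∩ B ⊆ {a, b}) (hAC : A ∩ C ⊆ {a, b}) (hBC : B ∩ C ⊆ {a, b}) {p : Pl}
    (pA : p ∉ A) (pB : p ∉ B) (pC : p ∉ C) :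
    (∀ z ∈ C, z ∉ cmp (A ∪ B) p) ∨ (∀ z ∈ B, z ∉ cmp (A ∪ C) p) ∨
      (∀ z ∈ A, z ∉ cmp (B ∪ C) p) := by
  by_contra! hcon
  obtain ⟨⟨z3, hz3, hz3'⟩, ⟨z2, hz2, hz2'⟩, ⟨z1, hz1, hz1'⟩⟩ := hcon
  have haA := hA.left_mem
  have haB := hB.left_mem
  have haC := hC.left_mem
  have hbA := hA.right_mem
  have hbB := hB.right_mem
  have hbC := hC.right_mem
  have hJ : IsClosed (A ∪ B) := (hA.compact.union hB.compact).isClosed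
  have int_of : ∀ {X Y : Set Pl} {z : Pl}, a ∈ Y → b ∈ Y → z ∈ X → z ∉ Y → z ∈ X \ {a, b} := by
    intro X Y z ha hb hX hY
    refine ⟨hX, ?_⟩
    rintro (e | e)
    · exact hY (e ▸ ha)
    · exact hY (e ▸ hb)
  obtain ⟨q, hq, hqz⟩ := jordan_two hA hB hAB z3
  set E := cmp (A ∪ B) q with hE
  have hqE : q ∈ E := mem_cmp hq
  -- E is disjoint from C
  have hEC : ∀ y ∈ E, y ∉ C := by
    intro y hyE hyC
    have hyAB := cmp_not_mem hyE
    have hsub := subset_cmp (K := A ∪ B) hC.interior.1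
      (int_of (Or.inl haA) (Or.inl hbA) hyC hyAB) (by
        rintro z ⟨hzC, hz⟩ (h | h)
        · exact hz (hAC ⟨h, hzC⟩)
        · exact hz (hBC ⟨h, hzC⟩))
    have h3 := hsub (int_of (Or.inl haA) (Or.inl hbA) hz3 (cmp_not_mem hz3'))
    rw [← cmp_eq hyE] at h3
    exact hqz h3
  have hpq : q ∉ cmp (A ∪ B) p := by
    intro h
    rw [cmp_eq h] at hz3'
    exact hqz hz3'
  have hqA : q ∉ A := fun h => hq (Or.inl h)
  have hqB : q ∉ B := fun h => hq (Or.inr h)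
  have hqC : q ∉ C := hEC q hqE
  -- off A ∪ C
  have k2 : cmp (A ∪ C) p = cmp (A ∪ C) q := by
    have hfull : B ⊆ closure E := by
      have := jordan_full hB hA (by rwa [Set.inter_comm]) (p := q) (by rwa [Set.union_comm])
      rwa [Set.union_comm B A] at this
    have hS : IsPreconnected (E ∪ B \ {a, b}) :=
      IsPreconnected.subset_closure cmp_preconn Set.subset_union_left
        (Set.union_subset subset_closure (Set.sdiff_subset.trans hfull))
    have hsub := subset_cmp (K := A ∪ C) hS (Or.inl hqE) (by
      rintro z (hz | ⟨hzB, hz⟩) (h | h)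
      · exact cmp_not_mem hz (Or.inl h)
      · exact hEC z hz h
      · exact hz (hAB ⟨h, hzB⟩)
      · exact hz (hBC ⟨hzB, h⟩))
    exact cmp_eq_of_mem hz2' (hsub (Or.inr (int_of (Or.inl haA) (Or.inl hbA) hz2 (cmp_not_mem hz2'))))
  have k1 : cmp (B ∪ C) p = cmp (B ∪ C) q := by
    have hfull : A ⊆ closure E := jordan_full hA hB hAB hq
    have hS : IsPreconnected (E ∪ A \ {a, b}) :=
      IsPreconnected.subset_closure cmp_preconn Set.subset_union_left
        (Set.union_subset subset_closure (Set.sdiff_subset.trans hfull))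
    have hsub := subset_cmp (K := B ∪ C) hS (Or.inl hqE) (by
      rintro z (hz | ⟨hzA, hz⟩) (h | h)
      · exact cmp_not_mem hz (Or.inr h)
      · exact hEC z hz h
      · exact hz (hAB ⟨hzA, h⟩)
      · exact hz (hAC ⟨hzA, h⟩))
    exact cmp_eq_of_mem hz1' (hsub (Or.inr (int_of (Or.inl haB) (Or.inl hbB) hz1 (cmp_not_mem hz1'))))
  have hinter : (A ∪ C) ∩ (B ∪ C) = C := by
    rw [← Set.inter_union_distrib_right]
    apply Set.union_eq_right.mpr
    refine hAB.trans ?_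
    rintro z (rfl | rfl)
    · exact haC
    · exact hbC
  have hfin := janiszewski (hA.compact.union hC.compact) (hB.compact.union hC.compact)
    (by rw [hinter]; exact hC.preconn) (p := p) (q := q) (by simp [pA, pB, pC])
    (by simp [hqA, hqB, hqC]) k2 k1
  apply hpq
  have : q ∈ cmp (A ∪ C ∪ (B ∪ C)) p := by
    rw [hfin]; exact mem_cmp (by simp [hqA, hqB, hqC])
  refine cmp_mono ?_ p this
  rintro z (h | h)
  · exact Or.inl (Or.inl h)
  · exact Or.inr (Or.inl h)

end WhitneyAux

namespace WhitneyAux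

/-- `v` can be reached from `A` avoiding `S`. -/
inductive Av {V : Type*} (G : SimpleGraph V) (A S : Set V) : V → Prop
  | base (a : V) (ha : a ∈ A) (hS : a ∉ S) : Av G A S a
  | step (u v : V) (hu : Av G A S u) (huv : G.Adj u v) (hS : v ∉ S) : Av G A S v

section
variable {V : Type*} {G : SimpleGraph V} {A B S T : Set V}

lemma Av.not_mem {v : V} (h : Av G A S v) : v ∉ S := by
  cases h <;> assumption

lemma Av.mono {v : V} {G' : SimpleGraph V} (h : Av G A S v) (hG : G ≤ G') (hT : T ⊆ S) :
    Av G' A T v := by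
  induction h with
  | base a ha hS => exact .base a ha fun h => hS (hT h)
  | step u v _ huv hS ih => exact .step u v ih (hG huv) fun h => hS (hT h)

lemma Av.swap {v : V} (h : Av G A S v) (hv : Av G B S v) : ∃ a ∈ A, Av G B S a := by
  induction h with
  | base a ha hS => exact ⟨a, ha, hv⟩
  | step u v hu huv hS ih => exact ih (.step v u hv huv.symm hu.not_mem)

/-- first hit of `T` -/
lemma Av.first {v : V} (h : Av G A S v) (T : Set V) : Av G A (S ∪ T) v ∨
    ∃ t ∈ T, t ∉ S ∧ (t ∈ A ∨ ∃ u, Av G A (S ∪ T) u ∧ G.Adj u t) := by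
  induction h with
  | base a ha hS =>
    by_cases hT : a ∈ T
    · exact Or.inr ⟨a, hT, hS, Or.inl ha⟩
    · exact Or.inl (.base a ha (by simp [hS, hT]))
  | step u v hu huv hS ih =>
    rcases ih with ih | ih
    · by_cases hT : v ∈ T
      · exact Or.inr ⟨v, hT, hS, Or.inr ⟨u, ih, huv⟩⟩
      · exact Or.inl (.step u v ih huv (by simp [hS, hT]))
    · exact Or.inr ih

/-- leaving a set -/
lemma Av.exit {v : V} (h : Av G A S v) (U : Set V) (hA : ∀ a ∈ A, a ∉ S → a ∈ U) (hv : v ∉ U) :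
    ∃ u w, u ∈ U ∧ w ∉ U ∧ G.Adj u w ∧ w ∉ S ∧ u ∉ S := by
  induction h with
  | base a ha hS => exact absurd (hA a ha hS) hv
  | step u v hu huv hS ih =>
    by_cases h : u ∈ U
    · exact ⟨u, v, h, hv, huv, hS, hu.not_mem⟩
    · exact ih h

lemma Av.inside {v : V} (h : Av G A S v) (U : Set V) (hU : ∀ u, Av G A S u → u ∈ U) :
    Av G A Uᶜ v := by
  induction h with
  | base a ha hS => exact .base a ha (by simpa using hU a (.base a ha hS))
  | step u v hu huv hS ih => exact .step u v ih huv (by simpa using hU v (.step u v hu huv hS))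

lemma Av.walk {v : V} (h : Av G A S v) : ∃ a ∈ A, ∃ w : G.Walk a v, ∀ u ∈ w.support, u ∉ S := by
  induction h with
  | base a ha hS => exact ⟨a, ha, .nil, by simpa using hS⟩
  | step u v hu huv hS ih =>
    obtain ⟨a, ha, w, hw⟩ := ih
    refine ⟨a, ha, w.concat huv, fun z hz => ?_⟩
    rw [SimpleGraph.Walk.support_concat] at hz
    simp only [List.mem_append, List.mem_singleton] at hz
    rcases hz with hz | rfl
    · exact hw z hz
    · exact hS

lemma Av.of_walk {u v : V} (w : G.Walk u v) (hw : ∀ z ∈ w.support, z ∉ S) (hu : Av G A S u) :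
    Av G A S v := by
  induction w with
  | nil => exact hu
  | cons h p ih =>
    exact ih (fun z hz => hw z (by simp [hz])) (.step _ _ hu h (hw _ (by simp)))

/-- Linkage of size `k`. -/
def Lk (G : SimpleGraph V) (A B : Set V) (k : ℕ) : Prop :=
  ∃ Q : Fin k → Set V, (∀ i j, i ≠ j → Disjoint (Q i) (Q j)) ∧
    ∀ i, ∃ b ∈ B, Av G A (Q i)ᶜ b

lemma Lk.symm {k : ℕ} (h : Lk G A B k) : Lk G B A k := by
  obtain ⟨Q, h1, h2⟩ := h
  refine ⟨Q, h1, fun i => ?_⟩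
  obtain ⟨b, hb, h⟩ := h2 i
  exact h.swap (.base b hb h.not_mem)

/-- all the small separators are excluded -/
def NoSep (G : SimpleGraph V) (A B : Set V) (k : ℕ) : Prop :=
  ∀ X : Finset V, X.card < k → ∃ b ∈ B, Av G A X b

lemma NoSep.symm {k : ℕ} (h : NoSep G A B k) : NoSep G B A k := by
  intro X hX
  obtain ⟨b, hb, h⟩ := h X hX
  exact h.swap (.base b hb h.not_mem)

lemma Lk.trim {k : ℕ} {T : Finset V} (h : Lk G A T k) (hT : T.card = k) :
    ∃ Q : V → Set V, (∀ i ∈ T, ∀ j ∈ T, i ≠ j → Disjoint (Q i) (Q j)) ∧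
      (∀ t ∈ T, Av G A (Q t)ᶜ t) ∧ (∀ t ∈ T, ∀ v ∈ Q t, v ∈ T → v = t) ∧
      ∀ t ∈ T, ∀ v ∈ Q t, v ∉ T → Av G A T v := by
  classical
  obtain ⟨Q, h1, h2⟩ := h
  have h3 : ∀ i, ∃ t ∈ T, t ∈ Q i ∧ (t ∈ A ∨ ∃ u, Av G A ((Q i)ᶜ ∪ T) u ∧ G.Adj u t) := by
    intro i
    obtain ⟨b, hb, h⟩ := h2 i
    rcases h.first (T : Set V) with h | ⟨t, ht, h, h'⟩
    · exact absurd (Or.inr hb) h.not_mem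
    · exact ⟨t, ht, by simpa using h, h'⟩
  choose t ht1 ht2 ht3 using h3
  have tinj : Function.Injective t := by
    intro i j hij
    by_contra hne
    exact Set.disjoint_left.mp (h1 i j hne) (ht2 i) (hij ▸ ht2 j)
  have himg : Finset.univ.image t = T := by
    apply Finset.eq_of_subset_of_card_le
    · intro z hz
      simp only [Finset.mem_image, Finset.mem_univ, true_and] at hz
      obtain ⟨i, rfl⟩ := hz
      exact ht1 i
    · rw [Finset.card_image_of_injective _ tinj]; simp [hT]
  have hsur : ∀ s ∈ T, ∃ i, t i = s := by
    intro s hs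
    rw [← himg] at hs
    simpa using hs
  let Q' : V → Set V := fun s => {v | ∃ i, t i = s ∧ (v = s ∨ Av G A ((Q i)ᶜ ∪ T) v)}
  have hsub : ∀ i v, v ∈ Q' (t i) → v ∈ Q i := by
    rintro i v ⟨j, hj, hv⟩
    obtain rfl := tinj hj
    rcases hv with rfl | hv
    · exact ht2 j
    · by_contra hc
      exact hv.not_mem (Or.inl hc)
  refine ⟨Q', ?_, ?_, ?_, ?_⟩
  · intro s hs s' hs' hne
    obtain ⟨i, rfl⟩ := hsur s hs
    obtain ⟨j, rfl⟩ := hsur s' hs'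
    rw [Set.disjoint_left]
    intro v hv hv'
    exact Set.disjoint_left.mp (h1 i j (fun h => hne (h ▸ rfl))) (hsub i v hv) (hsub j v hv')
  · intro s hs
    obtain ⟨i, rfl⟩ := hsur s hs
    rcases ht3 i with h | ⟨u, hu, hut⟩
    · exact .base _ h (by simpa using ⟨i, rfl, Or.inl rfl⟩)
    · exact .step u _ (hu.inside _ fun v hv => ⟨i, rfl, Or.inr hv⟩) hut
        (by simpa using ⟨i, rfl, Or.inl rfl⟩)
  · rintro s hs v ⟨i, rfl, rfl | hv⟩ hvT
    · rfl
    · exact absurd (Or.inr hvT) hv.not_mem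
  · rintro s hs v ⟨i, rfl, rfl | hv⟩ hvT
    · exact absurd hs hvT
    · exact hv.mono le_rfl Set.subset_union_right

lemma menger_half {k : ℕ} {G' : SimpleGraph V} {x y : V} {S : Finset V} [DecidableEq V]
    (hG : ∀ u v, G.Adj u v → ¬ G'.Adj u v → (u = x ∧ v = y) ∨ (u = y ∧ v = x))
    (hno : NoSep G A B k) (hS : ∀ b ∈ B, ¬ Av G' A S b) (hy : ¬ Av G' A S y) :
    NoSep G' A (insert x S : Finset V) k := by
  intro Z hZ
  by_contra hcon
  push Not at hcon
  obtain ⟨b, hb, hav⟩ := hno Z hZ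
  obtain ⟨u, v, hu, hv, huv, hvZ, huZ⟩ := hav.exit
    {v | Av G' A ((insert x S : Finset V) ∪ Z : Set V) v} (by
      intro a ha haZ
      refine .base a ha ?_
      rintro (h | h)
      · exact hcon a h (.base a ha haZ)
      · exact haZ h) (by
      intro h
      refine hS b hb (h.mono le_rfl ?_)
      intro z hz
      left; simpa using Or.inr hz)
  have hu : Av G' A ((insert x S : Finset V) ∪ Z : Set V) u := hu
  have hv : ¬ Av G' A ((insert x S : Finset V) ∪ Z : Set V) v := hv
  by_cases hadj : G'.Adj u v
  · by_cases hvT : v ∈ (insert x S : Finset V)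
    · exact hcon v hvT (.step u v (hu.mono le_rfl Set.subset_union_right) hadj hvZ)
    · refine hv (.step u v hu hadj ?_)
      rintro (h | h)
      · exact hvT h
      · exact hvZ h
  · rcases hG u v huv hadj with ⟨rfl, rfl⟩ | ⟨rfl, rfl⟩
    · exact hu.not_mem (Or.inl (by simp))
    · refine hy (hu.mono le_rfl ?_)
      intro z hz
      left; simpa using Or.inr hz

/-- Menger's theorem. -/
theorem menger [Finite V] {k : ℕ} (G : SimpleGraph V) :
    ∀ A B : Set V, NoSep G A B k → Lk G A B k := by
  classical
  have := Fintype.ofFinite V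
  induction G using WellFoundedLT.induction with
  | ind G ih =>
  intro A B hno
  by_cases hbot : G = ⊥
  · subst hbot
    have hk : k ≤ (A ∩ B).toFinset.card := by
      by_contra hlt
      push Not at hlt
      obtain ⟨b, hb, h⟩ := hno _ hlt
      cases h with
      | base _ ha hS => exact hS (by simp [ha, hb])
      | step u _ hu huv hS => exact huv
    obtain ⟨f, hf⟩ : ∃ f : Fin k → V, Function.Injective f ∧ ∀ i, f i ∈ A ∩ B := by
      have e := (A ∩ B).toFinset.equivFin
      refine ⟨fun i => (e.symm (Fin.castLE hk i) : V), ?_, fun i => ?_⟩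
      · intro i j hij
        have := e.symm.injective (Subtype.ext hij)
        exact Fin.castLE_injective hk this
      · have := (e.symm (Fin.castLE hk i)).2
        rwa [Set.mem_toFinset] at this
    refine ⟨fun i => {f i}, fun i j hij => ?_, fun i => ⟨f i, (hf.2 i).2, .base _ (hf.2 i).1 (by simp)⟩⟩
    simpa using fun h => hij (hf.1 h)
  · obtain ⟨x₀, y₀, hadj₀⟩ : ∃ x y, G.Adj x y := by
      by_contra h
      push Not at h
      exact hbot (by ext u v; simpa using h u v)
    set G' := G.deleteEdges {s(x₀, y₀)} with hG'
    have hle : G' ≤ G := SimpleGraph.deleteEdges_le _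
    have hlt : G' < G := by
      refine lt_of_le_of_ne hle fun h => ?_
      have : G'.Adj x₀ y₀ := h ▸ hadj₀
      simp [hG'] at this
    have hG0 : ∀ u v, G.Adj u v → ¬ G'.Adj u v → (u = x₀ ∧ v = y₀) ∨ (u = y₀ ∧ v = x₀) := by
      intro u v h h'
      simp only [hG', SimpleGraph.deleteEdges_adj, Set.mem_singleton_iff, not_and, not_not] at h'
      simpa using h' h
    have key := ih G' hlt
    by_cases hno' : NoSep G' A B k
    · obtain ⟨Q, h1, h2⟩ := key A B hno'
      refine ⟨Q, h1, fun i => ?_⟩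
      obtain ⟨b, hb, h⟩ := h2 i
      exact ⟨b, hb, h.mono hle subset_rfl⟩
    simp only [NoSep, not_forall, not_exists, not_and] at hno'
    obtain ⟨S, hSk, hS⟩ := hno'
    have hdisj : ∀ v, Av G' A S v → ¬ Av G' B S v := by
      intro v h1 h2
      obtain ⟨b, hb, h⟩ := h2.swap h1
      exact hS b hb h
    obtain ⟨x, y, hxA, hyB, hG⟩ : ∃ x y, Av G' A S x ∧ Av G' B S y ∧
        ∀ u v, G.Adj u v → ¬ G'.Adj u v → (u = x ∧ v = y) ∨ (u = y ∧ v = x) := by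
      obtain ⟨b, hb, hav⟩ := hno S hSk
      obtain ⟨u, v, hu, hv, huv, hvS, huS⟩ := hav.exit {v | Av G' A S v}
        (fun a ha haS => .base a ha haS) (hS b hb)
      obtain ⟨a, ha, hav'⟩ := hav.swap (.base b hb hav.not_mem)
      obtain ⟨u', v', hu', hv', huv', hvS', huS'⟩ := hav'.exit {v | Av G' B S v}
        (fun a ha haS => .base a ha haS) (hdisj a (.base a ha hav'.not_mem))
      have e1 := hG0 u v huv fun h => hv (Av.step u v hu h hvS)
      have e2 := hG0 u' v' huv' fun h => hv' (Av.step u' v' hu' h hvS')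
      have : u' = v ∧ v' = u := by
        rcases e1 with ⟨rfl, rfl⟩ | ⟨rfl, rfl⟩ <;> rcases e2 with ⟨rfl, rfl⟩ | ⟨rfl, rfl⟩
        · exact absurd hu' (hdisj _ hu)
        · exact ⟨rfl, rfl⟩
        · exact ⟨rfl, rfl⟩
        · exact absurd hu' (hdisj _ hu)
      obtain ⟨rfl, rfl⟩ := this
      refine ⟨v', u', hu, hu', fun a b h h' => ?_⟩
      rcases e1 with ⟨rfl, rfl⟩ | ⟨rfl, rfl⟩
      · exact hG0 a b h h'
      · exact (hG0 a b h h').symm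
    have hyA : ¬ Av G' A S y := fun h => hdisj _ h hyB
    have hxB : ¬ Av G' B S x := fun h => hdisj _ hxA h
    have hxy : x ≠ y := fun h => hyA (h ▸ hxA)
    have hxS : x ∉ S := hxA.not_mem
    have hyS : y ∉ S := hyB.not_mem
    have hadj : G.Adj x y := by
      by_contra h
      have : (x₀ = x ∧ y₀ = y) ∨ (x₀ = y ∧ y₀ = x) := hG x₀ y₀ hadj₀ (by simp [hG'])
      rcases this with ⟨rfl, rfl⟩ | ⟨rfl, rfl⟩
      · exact h hadj₀
      · exact h hadj₀.symm
    have n1 : NoSep G' A (insert x S : Finset V) k := menger_half hG hno hS hyA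
    have n2 : NoSep G' B (insert y S : Finset V) k := by
      refine menger_half (fun u v h h' => (hG u v h h').symm) hno.symm (fun a ha h => ?_) hxB
      exact hdisj a (.base a ha h.not_mem) h
    have hcard : ∀ z, z ∉ S → NoSep G' A (insert x S : Finset V) k → S.card + 1 = k := by
      intro z _ hz
      by_contra hne
      have : (insert x S).card < k := by
        rw [Finset.card_insert_of_notMem hxS]; omega
      obtain ⟨b, hb, h⟩ := hz _ this
      exact h.not_mem hb
    have hk := hcard x hxS n1
    obtain ⟨Q, q1, q2, q3, q4⟩ := (key A _ n1).trim (by rw [Finset.card_insert_of_notMem hxS, hk])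
    obtain ⟨R, r1, r2, r3, r4⟩ := (key B _ n2).trim (by rw [Finset.card_insert_of_notMem hyS, hk])
    let e : V → V := fun t => if t = x then y else t
    have he : ∀ t ∈ insert x S, e t ∈ insert y S := by
      intro t ht
      by_cases h : t = x
      · simp [e, h]
      · simp only [Finset.mem_insert, h, false_or] at ht
        simp [e, h, ht]
    have heinj : ∀ t ∈ insert x S, ∀ t' ∈ insert x S, e t = e t' → t = t' := by
      intro t ht t' ht' h
      simp only [e] at h
      simp only [Finset.mem_insert] at ht ht'
      split_ifs at h with h1 h2 h2
      · rw [h1, h2]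
      · subst h; exact absurd (ht'.resolve_left h2) hyS
      · subst h; exact absurd (ht.resolve_left h1) hyS
      · exact h
    have hSx : (S : Set V) ⊆ (insert x S : Finset V) := by intro z hz; simpa using Or.inr hz
    have hSy : (S : Set V) ⊆ (insert y S : Finset V) := by intro z hz; simpa using Or.inr hz
    have hQR : ∀ t ∈ insert x S, ∀ t' ∈ insert x S, t ≠ t' → Disjoint (Q t) (R (e t')) := by
      intro t ht t' ht' hne
      rw [Set.disjoint_left]
      intro v hv hv'
      by_cases hvT : v ∈ insert x S
      · obtain rfl := q3 t ht v hv hvT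
        by_cases hvx : v = x
        · subst hvx
          have : v ∉ insert y S := by simp [hxy, hxS]
          exact hxB ((r4 _ (he t' ht') v hv' this).mono le_rfl hSy)
        · have hvS : v ∈ S := by simpa [hvx] using hvT
          have h1 := r3 _ (he t' ht') v hv' (by simp [hvS])
          apply hne
          apply heinj v ht t' ht'
          rw [← h1]; simp [e, hvx]
      · have h1 := (q4 t ht v hv hvT).mono le_rfl hSx
        by_cases hvT' : v ∈ insert y S
        · simp only [Finset.mem_insert, not_or] at hvT hvT'
          rcases hvT' with rfl | h
          · exact hyA h1
          · exact hvT.2 h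
        · exact hdisj v h1 ((r4 _ (he t' ht') v hv' hvT').mono le_rfl hSy)
    have hcT : (insert x S).card = k := by rw [Finset.card_insert_of_notMem hxS, hk]
    let g := (Finset.equivFinOfCardEq hcT).symm
    refine ⟨fun i => Q (g i) ∪ R (e (g i)), fun i j hij => ?_, fun i => ?_⟩
    · have hne : (g i : V) ≠ g j := fun h => hij (g.injective (Subtype.ext h))
      have hi := (g i).2
      have hj := (g j).2
      have : e (g i) ≠ e (g j) := fun h => hne (heinj _ hi _ hj h)
      simp only [Set.disjoint_union_left, Set.disjoint_union_right]
      exact ⟨⟨q1 _ hi _ hj hne, (hQR _ hj _ hi hne.symm).symm⟩,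
        hQR _ hi _ hj hne, r1 _ (he _ hi) _ (he _ hj) this⟩
    · beta_reduce
      have hi := (g i).2
      generalize (g i : V) = t at hi
      set U := (Q t ∪ R (e t))ᶜ with hU
      have a1 : Av G A U t := (q2 t hi).mono hle (by rw [hU]; simp)
      have b1 : Av G B U (e t) := (r2 _ (he t hi)).mono hle (by rw [hU]; simp)
      have a2 : Av G A U (e t) := by
        by_cases htx : t = x
        · have : e t = y := by simp [e, htx]
          exact .step t _ a1 (by rw [this, htx]; exact hadj) b1.not_mem
        · have : e t = t := by simp [e, htx]
          rwa [this]
      exact b1.swap a2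

end

end WhitneyAux

namespace WhitneyAux

section
variable {V : Type*} {G : SimpleGraph V}

/-- A cycle with vertex set `Vs` and edge set `E` split into two paths. -/
structure Spl (Vs : Set V) (E : Set (Sym2 V)) {a b : V} (p q : G.Walk a b) : Prop where
  ne : a ≠ b
  pp : p.IsPath
  pq : q.IsPath
  sup : ∀ z ∈ p.support, z ∈ q.support → z = a ∨ z = b
  edg : ∀ e ∈ p.edges, e ∉ q.edges
  hV : Vs = {z | z ∈ p.support ∨ z ∈ q.support}
  hE : E = {e | e ∈ p.edges ∨ e ∈ q.edges}

/-- The vertex set and edge set of a cycle. -/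
def Cyc (G : SimpleGraph V) (Vs : Set V) (E : Set (Sym2 V)) : Prop :=
  ∃ v, ∃ w : G.Walk v v, w.IsCycle ∧ Vs = {z | z ∈ w.support} ∧ E = {e | e ∈ w.edges}

lemma Spl.cyc {Vs : Set V} {E : Set (Sym2 V)} {a b : V} {p q : G.Walk a b} (h : Spl Vs E p q) :
    Cyc G Vs E := by
  refine ⟨a, p.append q.reverse, ?_, ?_, ?_⟩
  · refine h.pp.isCycle_append h.pq.reverse ?_ ?_
    · intro z hz hz'
      have h1 := List.mem_of_mem_tail hz
      have h2 := List.mem_of_mem_tail hz'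
      rw [SimpleGraph.Walk.support_reverse, List.mem_reverse] at h2
      rcases h.sup z h1 h2 with rfl | rfl
      · have := h.pp.support_nodup
        rw [← SimpleGraph.Walk.cons_tail_support] at this
        exact (List.nodup_cons.mp this).1 hz
      · have := h.pq.reverse.support_nodup
        rw [← SimpleGraph.Walk.cons_tail_support] at this
        exact (List.nodup_cons.mp this).1 hz'
    · by_contra hc
      push Not at hc
      obtain ⟨h1, h2⟩ := hc
      rw [SimpleGraph.Walk.length_reverse] at h2
      have := h.edg
      cases p with
      | nil => exact h.ne rfl
      | cons e p' =>
        cases p' with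
        | cons _ _ => simp at h1
        | nil =>
          cases q with
          | nil => exact h.ne rfl
          | cons e q' =>
            cases q' with
            | cons _ _ => simp at h2
            | nil => simp at this
  · rw [h.hV]; ext z; simp [SimpleGraph.Walk.mem_support_append_iff]
  · rw [h.hE]; ext z; simp [SimpleGraph.Walk.edges_append]

lemma Cyc.split {Vs : Set V} {E : Set (Sym2 V)} (h : Cyc G Vs E) {a b : V} (ha : a ∈ Vs)
    (hb : b ∈ Vs) (hab : a ≠ b) : ∃ p q : G.Walk a b, Spl Vs E p q := by
  classical
  obtain ⟨v, w, hw, rfl, rfl⟩ := h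
  have hc : (w.rotate a ha).IsCycle := by simpa using hw
  have hb' : b ∈ (w.rotate a ha).support := by
    rw [SimpleGraph.Walk.mem_support_rotate_iff]; exact hb
  have hs := (w.rotate a ha).take_spec hb'
  set p := (w.rotate a ha).takeUntil b hb'
  set q := (w.rotate a ha).dropUntil b hb'
  have hc' : (p.append q).IsCycle := by rw [hs]; exact hc
  refine ⟨p, q.reverse, hab, ?_, ?_, ?_, ?_, ?_, ?_⟩
  · exact hc'.isPath_of_append_left (SimpleGraph.Walk.not_nil_of_ne hab.symm)
  · exact (hc'.isPath_of_append_right (SimpleGraph.Walk.not_nil_of_ne hab)).reverse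
  · intro z hz hz'
    rw [SimpleGraph.Walk.support_reverse, List.mem_reverse] at hz'
    have hn := hc'.support_nodup
    rw [SimpleGraph.Walk.tail_support_append, List.nodup_append'] at hn
    by_contra hcon
    push Not at hcon
    rw [← SimpleGraph.Walk.cons_tail_support, List.mem_cons] at hz hz'
    exact hn.2.2 (hz.resolve_left hcon.1) (hz'.resolve_left hcon.2)
  · intro e he he'
    rw [SimpleGraph.Walk.edges_reverse, List.mem_reverse] at he'
    have := hc'.edges_nodup
    rw [SimpleGraph.Walk.edges_append, List.nodup_append'] at this
    exact this.2.2 he he'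
  · ext z
    have : z ∈ (p.append q).support ↔ z ∈ w.support := by
      rw [hs, SimpleGraph.Walk.mem_support_rotate_iff]
    rw [SimpleGraph.Walk.mem_support_append_iff] at this
    simp [this]
  · ext z
    have : z ∈ (p.append q).edges ↔ z ∈ w.edges := by
      rw [hs]; exact (w.rotate_edges a ha).mem_iff
    rw [SimpleGraph.Walk.edges_append, List.mem_append] at this
    simp [this]

lemma Cyc.edge_mem {Vs : Set V} {E : Set (Sym2 V)} (h : Cyc G Vs E) {a b : V} (hab : s(a, b) ∈ E) :
    a ∈ Vs ∧ b ∈ Vs ∧ G.Adj a b := by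
  obtain ⟨v, w, hw, rfl, rfl⟩ := h
  exact ⟨w.fst_mem_support_of_mem_edges hab, w.snd_mem_support_of_mem_edges hab,
    w.adj_of_mem_edges hab⟩

lemma Cyc.two {Vs : Set V} {E : Set (Sym2 V)} (h : Cyc G Vs E) : ∃ a ∈ Vs, ∃ b ∈ Vs, a ≠ b := by
  obtain ⟨v, w, hw, rfl, rfl⟩ := h
  cases w with
  | nil => exact absurd rfl hw.ne_nil
  | cons e p => exact ⟨_, by simp, _, by simp, e.ne⟩

lemma Cyc.map {Vs : Set V} {E : Set (Sym2 V)} (h : Cyc G Vs E) (α : G ≃g G) :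
    Cyc G (α '' Vs) (Sym2.map α '' E) := by
  obtain ⟨v, w, hw, rfl, rfl⟩ := h
  refine ⟨_, w.map (α : G →g G), ?_, ?_, ?_⟩
  · exact hw.map α.injective
  · ext z; simp [SimpleGraph.Walk.support_map]
  · ext z; simp [SimpleGraph.Walk.edges_map]

lemma path_nontrivial_inner {a b : V} {p : G.Walk a b} (hab : a ≠ b) (hp : p.IsPath)
    (hne : s(a, b) ∉ p.edges) : ∃ z ∈ p.support, z ≠ a ∧ z ≠ b := by
  cases p with
  | nil => exact absurd rfl hab
  | cons e q =>
    rename_i c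
    refine ⟨c, by simp, e.ne.symm, ?_⟩
    rintro rfl
    simp at hne

lemma conn3 [Finite V] (h3 : ThreeConnected G) {s : Set V} (hs : s.ncard ≤ 2) {u v : V} (hu : u ∉ s)
    (hv : v ∉ s) : Av G {u} s v := by
  obtain ⟨w⟩ := (h3.2 s s.toFinite hs).preconnected ⟨u, hu⟩ ⟨v, hv⟩
  refine Av.of_walk (w.map (SimpleGraph.Embedding.induce sᶜ).toHom) ?_ (.base u rfl hu)
  intro z hz
  have hz' := hz
  erw [SimpleGraph.Walk.support_map, List.mem_map] at hz'
  obtain ⟨y, -, rfl⟩ := hz'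
  exact y.2

lemma three_paths [Finite V] (h3 : ThreeConnected G) {x y : V} (hxy : x ≠ y) (hadj : ¬ G.Adj x y) :
    ∃ p : Fin 3 → G.Walk x y, (∀ i, (p i).IsPath) ∧
      ∀ i j, i ≠ j → ∀ z ∈ (p i).support, z ∈ (p j).support → z = x ∨ z = y := by
  classical
  let H : SimpleGraph V :=
    { Adj := fun u v => G.Adj u v ∧ (u ≠ x ∧ u ≠ y) ∧ (v ≠ x ∧ v ≠ y)
      symm := ⟨fun u v h => ⟨h.1.symm, h.2.2, h.2.1⟩⟩
      loopless := ⟨fun u h => h.1.ne rfl⟩ }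
  have hH : H ≤ G := fun u v h => h.1
  have hn : ∀ S v, Av H {z | G.Adj x z} S v → v ≠ x ∧ v ≠ y := by
    intro S v h
    cases h with
    | base a ha hS => exact ⟨ha.ne.symm, fun h => hadj (h ▸ ha)⟩
    | step u _ hu huv hS => exact huv.2.2
  have : NoSep H {z | G.Adj x z} {z | G.Adj y z} 3 := by
    intro X hX
    by_contra hcon
    push Not at hcon
    have hc := conn3 h3 (s := (X \ {x, y} : Finset V)) (by
      rw [Set.ncard_coe_finset]
      have := Finset.card_le_card (Finset.sdiff_subset (s := X) (t := {x, y}))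
      omega) (u := x) (v := y) (by simp) (by simp)
    obtain ⟨u, v, hu, hv, huv, hvS, huS⟩ := hc.exit
      ({v | Av H {z | G.Adj x z} X v} ∪ {x}) (by rintro a rfl _; simp) (by
        rintro (h | h)
        · exact (hn _ _ h).2 rfl
        · exact hxy h.symm)
    simp only [Set.mem_union, not_or] at hv
    obtain ⟨hv1, hv2⟩ := hv
    have hv2 : v ≠ x := hv2
    have hvX : v ≠ y → v ∉ X := by
      intro hy hX
      apply hvS
      simp [hX, hv2, hy]
    rcases hu with hu | hu
    · by_cases hvy : v = y
      · subst hvy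
        exact hcon u huv.symm hu
      · exact hv1 (Av.step u v hu ⟨huv, hn _ _ hu, hv2, hvy⟩ (hvX hvy))
    · obtain rfl : u = x := hu
      have hvy : v ≠ y := fun h => hadj (h ▸ huv)
      exact hv1 (Av.base v huv (hvX hvy))
  obtain ⟨Q, h1, h2⟩ := menger H _ _ this
  have h3 : ∀ i, ∃ w : G.Walk x y, w.IsPath ∧ ∀ z ∈ w.support, z = x ∨ z = y ∨ z ∈ Q i := by
    intro i
    obtain ⟨b, hb, h⟩ := h2 i
    obtain ⟨a, ha, w, hw⟩ := (h.mono hH subset_rfl).walk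
    have ha : G.Adj x a := ha
    have hb : G.Adj y b := hb
    refine ⟨((SimpleGraph.Walk.cons ha w).concat hb.symm).bypass,
      SimpleGraph.Walk.bypass_isPath _, fun z hz => ?_⟩
    have hz := SimpleGraph.Walk.support_bypass_subset_support _ hz
    rw [SimpleGraph.Walk.support_concat, SimpleGraph.Walk.support_cons] at hz
    simp only [List.cons_append, List.mem_cons, List.mem_append,
      List.not_mem_nil, or_false] at hz
    rcases hz with rfl | hz | rfl
    · simp
    · have := hw z hz
      simp only [Set.mem_compl_iff, not_not] at this
      exact Or.inr (Or.inr this)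
    · simp
  choose p hp hp' using h3
  refine ⟨p, hp, fun i j hij z hz hz' => ?_⟩
  rcases hp' i z hz with h | h | h
  · exact Or.inl h
  · exact Or.inr h
  rcases hp' j z hz' with h' | h' | h'
  · exact Or.inl h'
  · exact Or.inr h'
  exact absurd h' (Set.disjoint_left.mp (h1 i j hij) h)

end

end WhitneyAux

namespace WhitneyAux

section
variable {V : Type*} {G : SimpleGraph V} (emb : PlanarEmbedding G)

/-- Carrier of a set of edges. -/
def car (E : Set (Sym2 V)) : Set Pl :=
  {z | ∃ u v, ∃ h : G.Adj u v, s(u, v) ∈ E ∧ z ∈ emb.arc h}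

/-- Carrier of a walk. -/
def cw {a b : V} (p : G.Walk a b) : Set Pl := car emb {e | e ∈ p.edges}

lemma arcIs {u v : V} (h : G.Adj u v) : IsArc (emb.arc h) (emb.vpos u) (emb.vpos v) := by
  obtain ⟨f, h1, h2⟩ := emb.arc_isArc h
  rw [← h2]
  exact IsArc.of_path f h1

lemma arc_congr {u v u' v' : V} (h : G.Adj u v) (h' : G.Adj u' v') (he : s(u, v) = s(u', v')) :
    emb.arc h = emb.arc h' := by
  rw [Sym2.eq_iff] at he
  rcases he with ⟨rfl, rfl⟩ | ⟨rfl, rfl⟩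
  · rfl
  · exact emb.arc_symm h'

variable {emb} in
lemma arc_sub_car {E : Set (Sym2 V)} {u v : V} (h : G.Adj u v) (he : s(u, v) ∈ E) :
    emb.arc h ⊆ car emb E := fun _ hz => ⟨u, v, h, he, hz⟩

variable {emb} in
/-- a point of an arc on the carrier of other edges is an end -/
lemma arc_inter_car {E : Set (Sym2 V)} {u v : V} (h : G.Adj u v) (he : s(u, v) ∉ E) {z : Pl}
    (hz : z ∈ emb.arc h) (hz' : z ∈ car emb E) :
    ∃ w, z = emb.vpos w ∧ (w = u ∨ w = v) ∧ ∃ x ∈ E, w ∈ x := by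
  obtain ⟨u', v', h', he', hz'⟩ := hz'
  obtain ⟨w, ⟨hw1, hw2⟩, rfl⟩ := emb.arc_inter h h' (fun hc => he (hc ▸ he')) ⟨hz, hz'⟩
  refine ⟨w, rfl, hw1, _, he', ?_⟩
  simpa using hw2

variable {emb} in
lemma vpos_mem_car {E : Set (Sym2 V)} {w : V} (hz : emb.vpos w ∈ car emb E) : ∃ x ∈ E, w ∈ x := by
  obtain ⟨u', v', h', he', hz'⟩ := hz
  exact ⟨_, he', by simpa using emb.arc_vertex h' w hz'⟩

variable {emb} in
lemma cw_support {a b : V} {p : G.Walk a b} {w : V} (hz : emb.vpos w ∈ cw emb p) :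
    w ∈ p.support := by
  obtain ⟨x, hx, hw⟩ := vpos_mem_car hz
  obtain ⟨y, rfl⟩ := hw
  exact p.fst_mem_support_of_mem_edges hx

variable {emb} in
lemma support_cw {a b : V} {p : G.Walk a b} {w : V} (hab : a ≠ b) (hw : w ∈ p.support) :
    emb.vpos w ∈ cw emb p := by
  obtain ⟨x, hx, y, rfl⟩ :=
    (SimpleGraph.Walk.mem_support_iff_exists_mem_edges_of_not_nil
      (SimpleGraph.Walk.not_nil_of_ne hab)).mp hw
  exact arc_sub_car (p.adj_of_mem_edges hx) hx (arcIs emb _).left_mem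

variable {emb} in
lemma cw_cons {a c b : V} (h : G.Adj a c) (q : G.Walk c b) :
    cw emb (.cons h q) = emb.arc h ∪ cw emb q := by
  ext z
  constructor
  · rintro ⟨u, v, h', he, hz⟩
    have he : s(u, v) ∈ (SimpleGraph.Walk.cons h q).edges := he
    rw [SimpleGraph.Walk.edges_cons, List.mem_cons] at he
    rcases he with he | he
    · left; rwa [arc_congr emb h h' he.symm]
    · right; exact ⟨u, v, h', he, hz⟩
  · rintro (hz | ⟨u, v, h', he, hz⟩)
    · exact ⟨a, c, h, by simp, hz⟩
    · refine ⟨u, v, h', ?_, hz⟩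
      have he : s(u, v) ∈ q.edges := he
      show s(u, v) ∈ (SimpleGraph.Walk.cons h q).edges
      rw [SimpleGraph.Walk.edges_cons]
      exact List.mem_cons_of_mem _ he

variable {emb} in
lemma path_arc {a b : V} (p : G.Walk a b) (hp : p.IsPath) (hab : a ≠ b) :
    IsArc (cw emb p) (emb.vpos a) (emb.vpos b) := by
  induction p with
  | nil => exact absurd rfl hab
  | cons h q ih =>
    rename_i a c b
    rw [cw_cons]
    rw [SimpleGraph.Walk.cons_isPath_iff] at hp
    by_cases hcb : c = b
    · subst hcb
      obtain rfl := (SimpleGraph.Walk.isPath_iff_nil.mp hp.1).eq_nil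
      have : cw emb (.nil : G.Walk c c) = ∅ := by
        ext z; simp [cw, car]
      rw [this, Set.union_empty]
      exact arcIs emb h
    · refine (arcIs emb h).trans (ih hp.1 hcb) ?_
      rintro z ⟨hz, hz'⟩
      obtain ⟨w, rfl, hw, x, hx, y, rfl⟩ := arc_inter_car h
        (fun he => hp.2 (q.fst_mem_support_of_mem_edges he)) hz hz'
      rcases hw with rfl | rfl
      · exact absurd (q.fst_mem_support_of_mem_edges hx) hp.2
      · rfl

variable {emb} in
lemma cw_inter {a b c d : V} (p : G.Walk a b) (q : G.Walk c d) {S : Set V}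
    (hs : ∀ z ∈ p.support, z ∈ q.support → z ∈ S) (he : ∀ e ∈ p.edges, e ∉ q.edges) :
    cw emb p ∩ cw emb q ⊆ emb.vpos '' S := by
  rintro z ⟨⟨u, v, h, hp, hz⟩, hz'⟩
  obtain ⟨w, rfl, hw, x, hx, y, rfl⟩ := arc_inter_car h (he _ hp) hz hz'
  refine ⟨w, hs w ?_ (q.fst_mem_support_of_mem_edges hx), rfl⟩
  rcases hw with rfl | rfl
  · exact p.fst_mem_support_of_mem_edges hp
  · exact p.snd_mem_support_of_mem_edges hp

variable {emb} in
lemma cw_inter' {a b : V} (p q : G.Walk a b)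
    (hs : ∀ z ∈ p.support, z ∈ q.support → z = a ∨ z = b) (he : ∀ e ∈ p.edges, e ∉ q.edges) :
    cw emb p ∩ cw emb q ⊆ {emb.vpos a, emb.vpos b} := by
  refine (cw_inter p q (S := {a, b}) hs he).trans ?_
  rw [Set.image_pair]

variable {Vs : Set V} {E : Set (Sym2 V)} {emb}

lemma Spl.car_eq {a b : V} {p q : G.Walk a b} (h : Spl Vs E p q) :
    car emb E = cw emb p ∪ cw emb q := by
  ext z
  rw [h.hE]
  constructor
  · rintro ⟨u, v, h, he | he, hz⟩
    · exact Or.inl ⟨u, v, h, he, hz⟩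
    · exact Or.inr ⟨u, v, h, he, hz⟩
  · rintro (⟨u, v, h, he, hz⟩ | ⟨u, v, h, he, hz⟩)
    · exact ⟨u, v, h, Or.inl he, hz⟩
    · exact ⟨u, v, h, Or.inr he, hz⟩

lemma Spl.arcs {a b : V} {p q : G.Walk a b} (h : Spl Vs E p q) :
    IsArc (cw emb p) (emb.vpos a) (emb.vpos b) ∧ IsArc (cw emb q) (emb.vpos a) (emb.vpos b) ∧
    cw emb p ∩ cw emb q ⊆ {emb.vpos a, emb.vpos b} :=
  ⟨path_arc p h.pp h.ne, path_arc q h.pq h.ne, cw_inter' p q h.sup h.edg⟩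

lemma Cyc.split' (h : Cyc G Vs E) : ∃ a b, ∃ p q : G.Walk a b, Spl Vs E p q := by
  obtain ⟨a, ha, b, hb, hab⟩ := h.two
  obtain ⟨p, q, hs⟩ := h.split ha hb hab
  exact ⟨a, b, p, q, hs⟩

lemma Cyc.compact (h : Cyc G Vs E) : IsCompact (car emb E) := by
  obtain ⟨a, b, p, q, hs⟩ := h.split'
  rw [hs.car_eq]
  exact hs.arcs.1.compact.union hs.arcs.2.1.compact

lemma Cyc.closed (h : Cyc G Vs E) : IsClosed (car emb E) := (h.compact).isClosed

lemma Cyc.vpos_iff (h : Cyc G Vs E) {w : V} : emb.vpos w ∈ car emb E ↔ w ∈ Vs := by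
  constructor
  · intro hw
    obtain ⟨x, hx, y, rfl⟩ := vpos_mem_car hw
    exact (h.edge_mem hx).1
  · intro hw
    obtain ⟨a, b, p, q, hs⟩ := h.split'
    rw [hs.car_eq]
    rw [hs.hV] at hw
    rcases hw with hw | hw
    · exact Or.inl (support_cw hs.ne hw)
    · exact Or.inr (support_cw hs.ne hw)

lemma Cyc.two_faces (h : Cyc G Vs E) (p : Pl) : ∃ q, q ∉ car emb E ∧ p ∉ cmp (car emb E) q := by
  obtain ⟨a, b, p', q', hs⟩ := h.split'
  rw [hs.car_eq]
  exact jordan_two hs.arcs.1 hs.arcs.2.1 hs.arcs.2.2 p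

lemma Cyc.le_two (h : Cyc G Vs E) {p q r : Pl} (hp : p ∉ car emb E) (hq : q ∉ car emb E)
    (hr : r ∉ car emb E) (hpq : cmp (car emb E) p ≠ cmp (car emb E) q)
    (hpr : cmp (car emb E) p ≠ cmp (car emb E) r) : cmp (car emb E) q = cmp (car emb E) r := by
  obtain ⟨a, b, p', q', hs⟩ := h.split'
  rw [hs.car_eq] at *
  exact jordan_le_two hs.arcs.1 hs.arcs.2.1 hs.arcs.2.2 hp hq hr hpq hpr

lemma Cyc.full (h : Cyc G Vs E) {p : Pl} (hp : p ∉ car emb E) :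
    car emb E ⊆ closure (cmp (car emb E) p) := by
  obtain ⟨a, b, p', q', hs⟩ := h.split'
  rw [hs.car_eq] at *
  refine Set.union_subset (jordan_full hs.arcs.1 hs.arcs.2.1 hs.arcs.2.2 hp) ?_
  rw [Set.union_comm] at *
  exact jordan_full hs.arcs.2.1 hs.arcs.1 (by rw [Set.inter_comm]; exact hs.arcs.2.2) hp

lemma car_image : car emb E ⊆ emb.image := by
  rintro z ⟨u, v, h, -, hz⟩
  exact Or.inr (by simp only [Set.mem_iUnion]; exact ⟨u, v, h, hz⟩)

lemma vpos_image (v : V) : emb.vpos v ∈ emb.image := Or.inl ⟨v, rfl⟩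

lemma arc_image {u v : V} (h : G.Adj u v) : emb.arc h ⊆ emb.image := by
  intro z hz
  exact Or.inr (by simp only [Set.mem_iUnion]; exact ⟨u, v, h, hz⟩)

lemma image_cases {z : Pl} (hz : z ∈ emb.image) :
    (∃ v, z = emb.vpos v) ∨ ∃ u v, ∃ h : G.Adj u v, z ∈ emb.arc h := by
  rcases hz with ⟨v, rfl⟩ | hz
  · exact Or.inl ⟨v, rfl⟩
  · simp only [Set.mem_iUnion] at hz
    exact Or.inr hz

/-- an inner point of an arc off `E` -/
lemma arc_inner_off {u v : V} (h : G.Adj u v) (he : s(u, v) ∉ E) {z : Pl}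
    (hz : z ∈ emb.arc h) (hzu : z ≠ emb.vpos u) (hzv : z ≠ emb.vpos v) : z ∉ car emb E := by
  intro hc
  obtain ⟨w, rfl, rfl | rfl, -⟩ := arc_inter_car h he hz hc
  · exact hzu rfl
  · exact hzv rfl

lemma arc_inner_cmp {u v : V} (h : G.Adj u v) (he : s(u, v) ∉ E) {z : Pl}
    (hz : z ∈ emb.arc h) (hzu : z ≠ emb.vpos u) (hzv : z ≠ emb.vpos v) :
    emb.arc h \ {emb.vpos u, emb.vpos v} ⊆ cmp (car emb E) z := by
  refine subset_cmp (arcIs emb h).interior.1 ⟨hz, by simp [hzu, hzv]⟩ ?_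
  rintro y ⟨hy, hy'⟩
  simp only [Set.mem_insert_iff, Set.mem_singleton_iff, not_or] at hy'
  exact arc_inner_off h he hy hy'.1 hy'.2

lemma arc_side {u v : V} (h : G.Adj u v) (he : s(u, v) ∉ E) (hu : emb.vpos u ∉ car emb E) :
    emb.arc h \ {emb.vpos v} ⊆ cmp (car emb E) (emb.vpos u) := by
  refine subset_cmp (arcIs emb h).interior.2.2.2 ⟨(arcIs emb h).left_mem, ?_⟩ ?_
  · simpa using fun hc => h.ne (emb.vinj hc)
  · rintro y ⟨hy, hy'⟩
    by_cases hyu : y = emb.vpos u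
    · rwa [hyu]
    · exact arc_inner_off h he hy hyu hy'

lemma adj_side {u v : V} (h : G.Adj u v) (he : s(u, v) ∉ E) (hu : emb.vpos u ∉ car emb E)
    (hv : emb.vpos v ∉ car emb E) : emb.vpos v ∈ cmp (car emb E) (emb.vpos u) := by
  refine subset_cmp (arcIs emb h).preconn (arcIs emb h).left_mem ?_ (arcIs emb h).right_mem
  intro y hy
  by_cases hyu : y = emb.vpos u
  · rwa [hyu]
  · by_cases hyv : y = emb.vpos v
    · rwa [hyv]
    · exact arc_inner_off h he hy hyu hyv

lemma Cyc.edge_not (h : Cyc G Vs E) {u v : V} (hu : u ∉ Vs) : s(u, v) ∉ E :=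
  fun hc => hu (h.edge_mem hc).1

lemma Cyc.av_side (h : Cyc G Vs E) {x y : V} (hx : x ∉ Vs) (hxy : Av G {x} Vs y) :
    emb.vpos y ∈ cmp (car emb E) (emb.vpos x) := by
  induction hxy with
  | base a ha hS =>
    obtain rfl : a = x := ha
    exact mem_cmp (by rwa [h.vpos_iff])
  | step u v hu huv hS ih =>
    rw [cmp_eq ih]
    exact adj_side huv (h.edge_not hu.not_mem) (by rw [h.vpos_iff]; exact hu.not_mem)
      (by rwa [h.vpos_iff])

lemma Cyc.face (h : Cyc G Vs E) {p : Pl} (hp : p ∉ car emb E)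
    (hD : ∀ z ∈ cmp (car emb E) p, z ∉ emb.image) :
    cmp emb.image p = cmp (car emb E) p ∧ p ∉ emb.image ∧
      emb.boundaryEdges (cmp (car emb E) p) = E := by
  refine ⟨?_, hD p (mem_cmp hp), ?_⟩
  · exact (cmp_mono car_image p).antisymm (subset_cmp cmp_preconn (mem_cmp hp) hD)
  · ext x
    constructor
    · rintro ⟨u, v, huv, rfl, hsub⟩
      by_contra he
      obtain ⟨z, hz, hz'⟩ := (arcIs emb huv).interior.2.1
      simp only [Set.mem_insert_iff, Set.mem_singleton_iff, not_or] at hz'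
      have hzE := arc_inner_off huv he hz hz'.1 hz'.2
      exact hD z (mem_cmp_of_closure h.closed (hsub hz) hzE) (arc_image huv hz)
    · intro hx
      induction x with
      | _ u v =>
      exact ⟨u, v, (h.edge_mem hx).2.2, rfl, (arc_sub_car _ hx).trans (h.full hp)⟩

/-- Peripheral cycles bound faces. -/
lemma Cyc.peripheral_face (h : Cyc G Vs E) (hind : ∀ a ∈ Vs, ∀ b ∈ Vs, G.Adj a b → s(a, b) ∈ E)
    (hns : ∀ x ∉ Vs, ∀ y ∉ Vs, Av G {x} Vs y) (emb : PlanarEmbedding G) :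
    ∃ F, emb.IsFace F ∧ emb.boundaryEdges F = E := by
  obtain ⟨p, hp, hD⟩ : ∃ p ∉ car emb E, ∀ z ∈ cmp (car emb E) p, z ∉ emb.image := by
    by_cases hx : ∃ x, x ∉ Vs
    · obtain ⟨x, hx⟩ := hx
      obtain ⟨q, hq, hqx⟩ := h.two_faces (emb := emb) (emb.vpos x)
      have hxE : emb.vpos x ∉ car emb E := by rwa [h.vpos_iff]
      have hv : ∀ y, emb.vpos y ∉ cmp (car emb E) q := by
        intro y hy
        have hyV : y ∉ Vs := by rw [← h.vpos_iff (emb := emb)]; exact cmp_not_mem hy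
        have := h.av_side (emb := emb) hx (hns x hx y hyV)
        apply hqx
        rw [cmp_eq_of_mem hy this]
        exact mem_cmp hxE
      have ha : ∀ u v (huv : G.Adj u v), u ∉ Vs → ∀ z ∈ emb.arc huv, z ∉ cmp (car emb E) q := by
        intro u v huv hu z hz hzq
        by_cases hzv : z = emb.vpos v
        · exact hv v (hzv ▸ hzq)
        · have hzu := arc_side huv (h.edge_not hu) (by rwa [h.vpos_iff]) ⟨hz, hzv⟩
          apply hv u
          rw [cmp_eq_of_mem hzq hzu]
          exact mem_cmp (by rwa [h.vpos_iff])
      refine ⟨q, hq, fun z hz hzi => ?_⟩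
      rcases image_cases hzi with ⟨v, rfl⟩ | ⟨u, v, huv, hzuv⟩
      · exact hv v hz
      · by_cases hu : u ∈ Vs
        · by_cases hv' : v ∈ Vs
          · exact cmp_not_mem hz (arc_sub_car huv (hind u hu v hv' huv) hzuv)
          · exact ha v u huv.symm hv' z (by rwa [emb.arc_symm]) hz
        · exact ha u v huv hu z hzuv hz
    · push Not at hx
      obtain ⟨q, hq, -⟩ := h.two_faces (emb := emb) 0
      refine ⟨q, hq, fun z hz hzi => ?_⟩
      apply cmp_not_mem hz
      rcases image_cases hzi with ⟨v, rfl⟩ | ⟨u, v, huv, hzuv⟩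
      · rw [h.vpos_iff]; exact hx v
      · exact arc_sub_car huv (hind u (hx u) v (hx v) huv) hzuv
  obtain ⟨h1, h2, h3⟩ := h.face hp hD
  exact ⟨_, ⟨p, h2, h1.symm⟩, h3⟩

end

end WhitneyAux

namespace WhitneyAux

section
variable {V : Type*} {G : SimpleGraph V} {emb : PlanarEmbedding G}
variable {Vs : Set V} {E : Set (Sym2 V)}

lemma Av.trans_single {S : Set V} {a u v : V} (h1 : Av G {a} S u) (h2 : Av G {u} S v) :
    Av G {a} S v := by
  induction h2 with
  | base c hc hS => obtain rfl : c = u := hc; exact h1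
  | step c d _ hcd hS ih => exact .step c d ih hcd hS

lemma exists_nbr [Finite V] (h3 : ThreeConnected G) (u : V) : ∃ v, G.Adj u v := by
  have hcard : 3 < Nat.card V := h3.1.resolve_right (by rw [not_infinite_iff_finite]; infer_instance)
  have : Nontrivial V := (Finite.one_lt_card_iff_nontrivial).mp (by omega)
  obtain ⟨w, hw⟩ := exists_ne u
  have := conn3 h3 (s := ∅) (by simp) (u := u) (v := w) (by simp) (by simp)
  obtain ⟨a, v, ha, -, hav, -⟩ := this.exit {u} (by intro a ha _; exact ha) hw
  obtain rfl : a = u := ha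
  exact ⟨v, hav⟩

lemma chord_spl {a b : V} {p : G.Walk a b} (hp : p.IsPath) (h : G.Adj a b)
    (he : s(a, b) ∉ p.edges) :
    Spl {z | z ∈ p.support ∨ z ∈ h.toWalk.support} {e | e ∈ p.edges ∨ e ∈ h.toWalk.edges}
      p h.toWalk := by
  refine ⟨h.ne, hp, h.isPath_toWalk, ?_, ?_, rfl, rfl⟩
  · intro z _ hz
    simpa using hz
  · intro e hep heq
    simp only [SimpleGraph.Adj.toWalk, SimpleGraph.Walk.edges_cons, SimpleGraph.Walk.edges_nil,
      List.mem_singleton] at heq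
    exact he (heq ▸ hep)

lemma exists_cyc [Finite V] (h3 : ThreeConnected G) : ∃ Vs E, Cyc G Vs E := by
  classical
  have hcard : 3 < Nat.card V := h3.1.resolve_right (by rw [not_infinite_iff_finite]; infer_instance)
  have : Nontrivial V := (Finite.one_lt_card_iff_nontrivial).mp (by omega)
  obtain ⟨u, -⟩ := exists_pair_ne V
  obtain ⟨v, huv⟩ := exists_nbr h3 u
  obtain ⟨w, hw⟩ : ∃ w, w ∉ ({u, v} : Set V) := by
    by_contra hc
    push Not at hc
    have : (Set.univ : Set V).ncard ≤ ({u, v} : Set V).ncard :=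
      Set.ncard_le_ncard (fun z _ => hc z)
    rw [Set.ncard_univ] at this
    have := Set.ncard_insert_le u {v}
    rw [Set.ncard_singleton] at this
    omega
  simp only [Set.mem_insert_iff, Set.mem_singleton_iff, not_or] at hw
  obtain ⟨a, ha, p, hp⟩ := (conn3 h3 (s := {v}) (by simp) (u := u) (v := w)
    (by simpa using huv.ne) (by simpa using hw.2)).walk
  obtain ⟨b, hb, q, hq⟩ := (conn3 h3 (s := {u}) (by simp) (u := v) (v := w)
    (by simpa using huv.ne.symm) (by simpa using hw.1)).walk
  obtain rfl : a = u := ha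
  obtain rfl : b = v := hb
  refine ⟨_, _, (chord_spl (p := (p.append q.reverse).bypass)
    (SimpleGraph.Walk.bypass_isPath _) huv ?_).cyc⟩
  intro he
  have he := SimpleGraph.Walk.edges_bypass_subset_edges _ he
  rw [SimpleGraph.Walk.edges_append, SimpleGraph.Walk.edges_reverse, List.mem_append,
    List.mem_reverse] at he
  rcases he with he | he
  · exact hp _ (p.snd_mem_support_of_mem_edges he) rfl
  · exact hq _ (q.fst_mem_support_of_mem_edges he) rfl

/-- find an ear inside a region -/
lemma exists_ear [Finite V] (h3 : ThreeConnected G) (h : Cyc G Vs E) {x z : Pl}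
    (hz : z ∈ cmp (car emb E) x) (hzi : z ∈ emb.image) :
    ∃ c d, ∃ P : G.Walk c d, c ∈ Vs ∧ d ∈ Vs ∧ c ≠ d ∧ P.IsPath ∧
      (∀ w ∈ P.support, w ∈ Vs → w = c ∨ w = d) ∧ (∀ e ∈ P.edges, e ∉ E) ∧
      ∃ u v, ∃ huv : G.Adj u v, s(u, v) ∈ P.edges ∧ ∃ y ∈ emb.arc huv, y ∈ cmp (car emb E) x := by
  classical
  have hzE := cmp_not_mem hz
  obtain ⟨u, v, huv, hzuv⟩ : ∃ u v, ∃ huv : G.Adj u v, z ∈ emb.arc huv := by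
    rcases image_cases hzi with ⟨v, rfl⟩ | h
    · obtain ⟨w, hw⟩ := exists_nbr h3 v
      exact ⟨v, w, hw, (arcIs emb hw).left_mem⟩
    · exact h
  have huvE : s(u, v) ∉ E := fun he => hzE (arc_sub_car huv he hzuv)
  by_cases hb : u ∈ Vs ∧ v ∈ Vs
  · refine ⟨u, v, huv.toWalk, hb.1, hb.2, huv.ne, huv.isPath_toWalk, ?_, ?_, u, v, huv, ?_, z,
      hzuv, hz⟩
    · intro w hw _
      simpa using hw
    · intro e he
      simp only [SimpleGraph.Adj.toWalk, SimpleGraph.Walk.edges_cons, SimpleGraph.Walk.edges_nil,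
        List.mem_singleton] at he
      rwa [he]
    · simp
  obtain ⟨a, haV, haD⟩ : ∃ a, a ∉ Vs ∧ emb.vpos a ∈ cmp (car emb E) x := by
    have key : ∀ u v (huv : G.Adj u v), z ∈ emb.arc huv → s(u, v) ∉ E → u ∉ Vs →
        emb.vpos u ∈ cmp (car emb E) x := by
      intro u v huv hzuv he hu
      have hu' : emb.vpos u ∉ car emb E := by rwa [h.vpos_iff]
      have : z ∈ cmp (car emb E) (emb.vpos u) := by
        by_cases hzv : z = emb.vpos v
        · rw [hzv]
          exact adj_side huv he hu' (hzv ▸ hzE)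
        · exact arc_side huv he hu' ⟨hzuv, hzv⟩
      rw [cmp_eq_of_mem hz this]
      exact mem_cmp hu'
    by_cases hu : u ∈ Vs
    · have hv : v ∉ Vs := fun hv => hb ⟨hu, hv⟩
      exact ⟨v, hv, key v u huv.symm (by rwa [emb.arc_symm]) (by rwa [Sym2.eq_swap]) hv⟩
    · exact ⟨u, hu, key u v huv hzuv huvE hu⟩
  have nb : ∀ s : Set V, s.ncard ≤ 2 → s ⊆ Vs → (∃ y ∈ Vs, y ∉ s) →
      ∃ a', Av G {a} Vs a' ∧ ∃ c ∈ Vs, c ∉ s ∧ G.Adj a' c := by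
    rintro s hs hsV ⟨y, hy, hys⟩
    obtain ⟨u, v, hu, hv, huv, hvs, -⟩ := (conn3 h3 hs (u := a) (v := y)
      (fun hc => haV (hsV hc)) hys).exit {v | Av G {a} Vs v}
      (by rintro _ rfl _; exact .base _ rfl haV) (fun hc => Av.not_mem hc hy)
    refine ⟨u, hu, v, ?_, hvs, huv⟩
    by_contra hvV
    exact hv (Av.step u v hu huv hvV)
  obtain ⟨y1, hy1, y2, hy2, hy12⟩ := h.two
  obtain ⟨a1, ha1, c1, hc1, -, hac1⟩ := nb ∅ (by simp) (by simp) ⟨y1, hy1, by simp⟩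
  obtain ⟨a2, ha2, c2, hc2, hc12, hac2⟩ := nb {c1} (by simp) (by simpa using hc1) (by
    by_cases h : y1 = c1
    · exact ⟨y2, hy2, fun hc => hy12 (h.trans hc.symm)⟩
    · exact ⟨y1, hy1, h⟩)
  have hc12 : c2 ≠ c1 := hc12
  have hav : Av G {a1} Vs a2 := by
    obtain ⟨a', ha', hh⟩ := ha1.swap (.base (A := {a1}) a1 rfl ha1.not_mem)
    obtain rfl : a' = a := ha'
    exact hh.trans_single ha2
  obtain ⟨a', ha', w0, hw0⟩ := hav.walk
  obtain rfl : a' = a1 := ha'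
  set w := w0.bypass with hw
  have hwV : ∀ z ∈ w.support, z ∉ Vs := fun z hz =>
    hw0 z (SimpleGraph.Walk.support_bypass_subset_support _ hz)
  have hwp : w.IsPath := SimpleGraph.Walk.bypass_isPath _
  have hw2 : (w.concat hac2).IsPath := hwp.concat (fun hc => hwV _ hc hc2) hac2
  refine ⟨c1, c2, .cons hac1.symm (w.concat hac2), hc1, hc2, hc12.symm, ?_, ?_, ?_, c1, a', hac1.symm,
    ?_, emb.vpos a', (arcIs emb hac1.symm).right_mem, ?_⟩
  · refine hw2.cons ?_
    rw [SimpleGraph.Walk.support_concat]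
    simp only [List.mem_append, List.mem_singleton, not_or]
    exact ⟨fun hc => hwV _ hc hc1, hc12.symm⟩
  · intro y hy hyV
    rw [SimpleGraph.Walk.support_cons, SimpleGraph.Walk.support_concat] at hy
    simp only [List.mem_append, List.mem_cons, List.not_mem_nil, or_false] at hy
    rcases hy with hy | hy | hy
    · exact Or.inl hy
    · exact absurd hyV (hwV y hy)
    · exact Or.inr hy
  · intro e he heE
    rw [SimpleGraph.Walk.edges_cons, SimpleGraph.Walk.edges_concat] at he
    simp only [List.concat_eq_append, List.mem_append, List.mem_cons, List.not_mem_nil,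
      or_false] at he
    rcases he with rfl | he | rfl
    · exact ha1.not_mem (h.edge_mem heE).2.1
    · induction e with
      | _ s t => exact hwV _ (w.fst_mem_support_of_mem_edges he) (h.edge_mem heE).1
    · exact ha2.not_mem (h.edge_mem heE).1
  · rw [SimpleGraph.Walk.edges_cons]; exact List.mem_cons_self
  · rw [cmp_eq haD]
    exact h.av_side haV ha1

/-- the edges meeting the region of `x` -/
def meetE (emb : PlanarEmbedding G) (x : Pl) (E : Set (Sym2 V)) : Set (Sym2 V) :=
  {s | ∃ u v, ∃ huv : G.Adj u v, s = s(u, v) ∧ ∃ y ∈ emb.arc huv, y ∈ cmp (car emb E) x}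

lemma cyc_step [Finite V] {x : Pl} (hx : x ∉ emb.image) {c d : V} {p q P : G.Walk c d}
    (hs : Spl Vs E p q) (hP : P.IsPath) (hPV : ∀ w ∈ P.support, w ∈ Vs → w = c ∨ w = d)
    (hPE : ∀ e ∈ P.edges, e ∉ E) {u v : V} (huv : G.Adj u v) (huvP : s(u, v) ∈ P.edges)
    (hy : ∃ y ∈ emb.arc huv, y ∈ cmp (car emb E) x)
    (hth : ∀ z ∈ cw emb q, z ∉ cmp (cw emb p ∪ cw emb P) x) :
    ∃ Vs' E', Cyc G Vs' E' ∧ (meetE emb x E').ncard < (meetE emb x E).ncard := by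
  have hs' : Spl {z | z ∈ p.support ∨ z ∈ P.support} {e | e ∈ p.edges ∨ e ∈ P.edges} p P := by
    refine ⟨hs.ne, hs.pp, hP, ?_, ?_, rfl, rfl⟩
    · intro z hz hz'
      exact hPV z hz' (by rw [hs.hV]; exact Or.inl hz)
    · intro e he he'
      exact hPE e he' (by rw [hs.hE]; exact Or.inl he)
  refine ⟨_, _, hs'.cyc, Set.ncard_lt_ncard ?_⟩
  have hx' : ∀ E', x ∉ car emb E' := fun E' hc => hx (car_image hc)
  rw [Set.ssubset_iff_of_subset]
  · refine ⟨s(u, v), ⟨u, v, huv, rfl, hy⟩, ?_⟩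
    rintro ⟨u', v', huv', he, y, hy, hyD⟩
    exact cmp_not_mem hyD (arc_sub_car huv' (by rw [← he]; exact Or.inr huvP) hy)
  · rintro e ⟨u', v', huv', he, y, hy, hyD⟩
    refine ⟨u', v', huv', he, y, hy, ?_⟩
    revert y
    intro y _ hyD
    refine subset_cmp cmp_preconn (mem_cmp (hx' _)) ?_ hyD
    intro z hz hzE
    rw [hs.car_eq] at hzE
    rcases hzE with hzE | hzE
    · apply cmp_not_mem hz
      rw [hs'.car_eq]
      exact Or.inl hzE
    · rw [hs'.car_eq] at hz
      exact hth z hzE hz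

lemma exists_face_cyc [Finite V] (h3 : ThreeConnected G) {x : Pl} (hx : x ∉ emb.image) :
    ∃ Vs E, Cyc G Vs E ∧ ∀ z ∈ cmp (car emb E) x, z ∉ emb.image := by
  have key : ∀ n, ∀ Vs E, Cyc G Vs E → (meetE emb x E).ncard = n →
      ∃ Vs E, Cyc G Vs E ∧ ∀ z ∈ cmp (car emb E) x, z ∉ emb.image := by
    intro n
    induction n using Nat.strong_induction_on with
    | _ n ih =>
    intro Vs E h hn
    by_contra hcon
    have : ∃ z ∈ cmp (car emb E) x, z ∈ emb.image := by
      by_contra hc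
      push Not at hc
      exact hcon ⟨Vs, E, h, hc⟩
    obtain ⟨z, hz, hzi⟩ := this
    obtain ⟨c, d, P, hc, hd, hcd, hP, hPV, hPE, u, v, huv, huvP, y, hy, hyD⟩ :=
      exists_ear h3 h hz hzi
    obtain ⟨p, q, hs⟩ := h.split hc hd hcd
    have fin : ∀ Vs' E', Cyc G Vs' E' → (meetE emb x E').ncard < (meetE emb x E).ncard → False :=
      fun Vs' E' h' hlt => hcon (ih _ (hn ▸ hlt) Vs' E' h' rfl)
    have hx' : ∀ {a b : V} (r : G.Walk a b), x ∉ cw emb r := fun r hc => hx (car_image hc)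
    have hs2 : Spl Vs E q p := ⟨hs.ne, hs.pq, hs.pp, fun z h1 h2 => hs.sup z h2 h1,
      fun e h1 h2 => hs.edg e h2 h1, by rw [hs.hV]; ext; simp [or_comm],
      by rw [hs.hE]; ext; simp [or_comm]⟩
    have hpV : ∀ w ∈ p.support, w ∈ Vs := fun w hw => by rw [hs.hV]; exact Or.inl hw
    have hqV : ∀ w ∈ q.support, w ∈ Vs := fun w hw => by rw [hs.hV]; exact Or.inr hw
    have hpE : ∀ w ∈ p.edges, w ∈ E := fun w hw => by rw [hs.hE]; exact Or.inl hw
    have hqE : ∀ w ∈ q.edges, w ∈ E := fun w hw => by rw [hs.hE]; exact Or.inr hw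
    rcases theta hs.arcs.1 hs.arcs.2.1 (path_arc P hP hcd) hs.arcs.2.2
      (cw_inter' p P (fun z h1 h2 => hPV z h2 (hpV z h1)) (fun e h1 h2 => hPE e h2 (hpE e h1)))
      (cw_inter' q P (fun z h1 h2 => hPV z h2 (hqV z h1)) (fun e h1 h2 => hPE e h2 (hqE e h1)))
      (hx' p) (hx' q) (hx' P) with hth | hth | hth
    · rw [← hs.car_eq] at hth
      exact hth y (arc_sub_car huv huvP hy) hyD
    · obtain ⟨Vs', E', h1, h2⟩ := cyc_step hx hs hP hPV hPE huv huvP ⟨y, hy, hyD⟩ hth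
      exact fin _ _ h1 h2
    · obtain ⟨Vs', E', h1, h2⟩ := cyc_step hx hs2 hP hPV hPE huv huvP ⟨y, hy, hyD⟩ hth
      exact fin _ _ h1 h2
  obtain ⟨Vs, E, h⟩ := exists_cyc h3
  exact key _ Vs E h rfl

lemma face_induced [Finite V] (h3 : ThreeConnected G) (h : Cyc G Vs E) {x : Pl}
    (hx : x ∉ emb.image) (hD : ∀ z ∈ cmp (car emb E) x, z ∉ emb.image) :
    ∀ a ∈ Vs, ∀ b ∈ Vs, G.Adj a b → s(a, b) ∈ E := by
  intro a ha b hb hab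
  by_contra he
  obtain ⟨p, q, hs⟩ := h.split ha hb hab.ne
  have hpE : s(a, b) ∉ p.edges := fun hc => he (by rw [hs.hE]; exact Or.inl hc)
  have hqE : s(a, b) ∉ q.edges := fun hc => he (by rw [hs.hE]; exact Or.inr hc)
  obtain ⟨x0, hx0, hx0a, hx0b⟩ := path_nontrivial_inner hab.ne hs.pp hpE
  obtain ⟨y0, hy0, hy0a, hy0b⟩ := path_nontrivial_inner hab.ne hs.pq hqE
  have sp := chord_spl hs.pp hab hpE
  have sq := chord_spl hs.pq hab hqE
  set P := hab.toWalk with hPdef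
  have hPs : ∀ w, w ∈ P.support ↔ w = a ∨ w = b := by intro w; simp [hPdef]
  have hPe : ∀ e, e ∈ P.edges ↔ e = s(a, b) := by intro w; simp [hPdef]
  have cpP := sp.car_eq (emb := emb)
  have cqP := sq.car_eq (emb := emb)
  have xE : ∀ E', x ∉ car emb E' := fun E' hc => hx (car_image hc)
  have hx0q : x0 ∉ q.support := fun hc => by
    rcases hs.sup x0 hx0 hc with h | h
    · exact hx0a h
    · exact hx0b h
  set R := cmp (cw emb q ∪ cw emb P) (emb.vpos x0) with hR
  have offq : ∀ w, w ∉ q.support → w ≠ a → w ≠ b → emb.vpos w ∉ cw emb q ∪ cw emb P := by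
    rintro w h1 h2 h3 (hc | hc)
    · exact h1 (cw_support hc)
    · rcases (hPs w).mp (cw_support hc) with h | h
      · exact h2 h
      · exact h3 h
  have offp : ∀ w, w ∉ p.support → w ≠ a → w ≠ b → emb.vpos w ∉ cw emb p ∪ cw emb P := by
    rintro w h1 h2 h3 (hc | hc)
    · exact h1 (cw_support hc)
    · rcases (hPs w).mp (cw_support hc) with h | h
      · exact h2 h
      · exact h3 h
  obtain ⟨u, w, hu, hw, huw, hwab, huab⟩ := (conn3 h3 (s := {a, b}) (by
      have := Set.ncard_insert_le a {b}
      rw [Set.ncard_singleton] at this; omega) (u := x0) (v := y0)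
      (by simp [hx0a, hx0b]) (by simp [hy0a, hy0b])).exit {v | emb.vpos v ∈ R}
      (by rintro _ rfl _; exact mem_cmp (offq _ hx0q hx0a hx0b))
      (fun hc => cmp_not_mem hc (Or.inl (support_cw hab.ne hy0)))
  have hu : emb.vpos u ∈ R := hu
  have hw : emb.vpos w ∉ R := hw
  simp only [Set.mem_insert_iff, Set.mem_singleton_iff, not_or] at hwab huab
  have huqP := cmp_not_mem hu
  have huq : u ∉ q.support := fun hc => huqP (Or.inl (support_cw hab.ne hc))
  have huwab : s(u, w) ≠ s(a, b) := by
    intro hc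
    rw [Sym2.eq_iff] at hc
    rcases hc with hc | hc
    · exact huab.1 hc.1
    · exact huab.2 hc.1
  have heq : s(u, w) ∉ {e | e ∈ q.edges ∨ e ∈ P.edges} := by
    rintro (hc | hc)
    · exact huq (q.fst_mem_support_of_mem_edges hc)
    · exact huwab ((hPe _).mp hc)
  have hwq : w ∈ q.support := by
    by_contra hwq
    apply hw
    rw [hR, cmp_eq hu, ← cqP]
    exact adj_side huw heq (by rwa [cqP]) (by rw [cqP]; exact offq w hwq hwab.1 hwab.2)
  have hwp : w ∉ p.support := fun hc => by
    rcases hs.sup w hc hwq with h | h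
    · exact hwab.1 h
    · exact hwab.2 h
  have hep : s(u, w) ∉ {e | e ∈ p.edges ∨ e ∈ P.edges} := by
    rintro (hc | hc)
    · exact hwp (p.snd_mem_support_of_mem_edges hc)
    · exact huwab ((hPe _).mp hc)
  obtain ⟨z, hz, hz'⟩ := (arcIs emb huw).interior.2.1
  simp only [Set.mem_insert_iff, Set.mem_singleton_iff, not_or] at hz'
  have zp : z ∉ cw emb p := fun hc =>
    arc_inner_off huw hep hz hz'.1 hz'.2 (by rw [cpP]; exact Or.inl hc)
  have zP : z ∉ cw emb P := fun hc =>
    arc_inner_off huw hep hz hz'.1 hz'.2 (by rw [cpP]; exact Or.inr hc)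
  have zq : z ∉ cw emb q := fun hc =>
    arc_inner_off huw heq hz hz'.1 hz'.2 (by rw [cqP]; exact Or.inl hc)
  rcases theta hs.arcs.1 hs.arcs.2.1 sp.arcs.2.1 hs.arcs.2.2 sp.arcs.2.2 sq.arcs.2.2 zp zq zP
    with hth | hth | hth
  · rw [← hs.car_eq] at hth
    obtain ⟨y, hy, hy'⟩ := (arcIs emb hab).interior.2.1
    simp only [Set.mem_insert_iff, Set.mem_singleton_iff, not_or] at hy'
    have hyE := arc_inner_off hab he hy hy'.1 hy'.2
    have hzE : z ∉ car emb E := by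
      rw [hs.car_eq]; rintro (hc | hc)
      · exact zp hc
      · exact zq hc
    have hne : ∀ t, t ∉ car emb E → t ∈ emb.image → cmp (car emb E) x ≠ cmp (car emb E) t := by
      intro t ht hti hc
      exact hD t (by rw [hc]; exact mem_cmp ht) hti
    have := h.le_two (xE _) hzE hyE (hne z hzE (arc_image huw hz)) (hne y hyE (arc_image hab hy))
    refine hth y (arc_sub_car hab ((hPe _).mpr rfl) hy) ?_
    rw [this]
    exact mem_cmp hyE
  · refine hth (emb.vpos w) (support_cw hab.ne hwq) ?_
    have hwo := offp w hwp hwab.1 hwab.2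
    have : z ∈ cmp (cw emb p ∪ cw emb P) (emb.vpos w) := by
      rw [← cpP]
      exact arc_side huw.symm (by rwa [Sym2.eq_swap]) (by rwa [cpP])
        ⟨by rwa [emb.arc_symm], hz'.1⟩
    rw [← cmp_eq this]
    exact mem_cmp hwo
  · refine hth (emb.vpos x0) (support_cw hab.ne hx0) ?_
    have : z ∈ R := by
      rw [hR, cmp_eq hu, ← cqP]
      exact arc_side huw heq (by rwa [cqP]) ⟨hz, hz'.2⟩
    rw [← cmp_eq this]
    exact mem_cmp (offq _ hx0q hx0a hx0b)

lemma face_nonsep [Finite V] (h3 : ThreeConnected G) (h : Cyc G Vs E) {x : Pl}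
    (hx : x ∉ emb.image) (hD : ∀ z ∈ cmp (car emb E) x, z ∉ emb.image) :
    ∀ a ∉ Vs, ∀ b ∉ Vs, Av G {a} Vs b := by
  intro a ha b hb
  by_contra hcon
  have hab : a ≠ b := by rintro rfl; exact hcon (.base a rfl ha)
  have hadj : ¬ G.Adj a b := fun hc => hcon (.step a b (.base a rfl ha) hc hb)
  obtain ⟨p, hp, hpp⟩ := three_paths h3 hab hadj
  have hedg : ∀ i j, i ≠ j → ∀ e ∈ (p i).edges, e ∉ (p j).edges := by
    intro i j hij e he he'
    induction e with
    | _ s t =>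
    have hst := (p i).adj_of_mem_edges he
    have h1 := hpp i j hij s ((p i).fst_mem_support_of_mem_edges he)
      ((p j).fst_mem_support_of_mem_edges he')
    have h2 := hpp i j hij t ((p i).snd_mem_support_of_mem_edges he)
      ((p j).snd_mem_support_of_mem_edges he')
    rcases h1 with rfl | rfl <;> rcases h2 with rfl | rfl
    · exact hst.ne rfl
    · exact hadj hst
    · exact hadj hst.symm
    · exact hst.ne rfl
  have hinter : ∀ i j, i ≠ j → cw emb (p i) ∩ cw emb (p j) ⊆ {emb.vpos a, emb.vpos b} :=
    fun i j hij => cw_inter' _ _ (hpp i j hij) (hedg i j hij)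
  have harc : ∀ i, IsArc (cw emb (p i)) (emb.vpos a) (emb.vpos b) := fun i =>
    path_arc _ (hp i) hab
  have hx' : ∀ i, x ∉ cw emb (p i) := fun i hc => hx (car_image hc)
  have key : ∀ i j k, i ≠ k → j ≠ k →
      ¬ ∀ z ∈ cw emb (p k), z ∉ cmp (cw emb (p i) ∪ cw emb (p j)) x := by
    intro i j k hik hjk hth
    obtain ⟨c, hc, hcV⟩ : ∃ c ∈ (p k).support, c ∈ Vs := by
      by_contra hcc
      push Not at hcc
      exact hcon (Av.of_walk (p k) hcc (.base a rfl ha))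
    have hca : c ≠ a := fun h => ha (h ▸ hcV)
    have hcb : c ≠ b := fun h => hb (h ▸ hcV)
    have hoff : ∀ i, i ≠ k → emb.vpos c ∉ cw emb (p i) := by
      intro i hik hi
      rcases hpp i k hik c (cw_support hi) hc with h | h
      · exact hca h
      · exact hcb h
    have hcl : IsClosed (cw emb (p i) ∪ cw emb (p j)) :=
      ((harc i).compact.union (harc j).compact).isClosed
    refine hth (emb.vpos c) (support_cw hab hc) (mem_cmp_of_closure hcl ?_ ?_)
    · have hsub : cmp (car emb E) x ⊆ cmp (cw emb (p i) ∪ cw emb (p j)) x := by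
        refine subset_cmp cmp_preconn (mem_cmp fun hc => hx (car_image hc)) ?_
        rintro z hz (hc | hc)
        · exact hD z hz (car_image hc)
        · exact hD z hz (car_image hc)
      refine closure_mono hsub (h.full (fun hc => hx (car_image hc)) ?_)
      rwa [h.vpos_iff]
    · rintro (hc | hc)
      · exact hoff i hik hc
      · exact hoff j hjk hc
  rcases theta (harc 0) (harc 1) (harc 2) (hinter 0 1 (by decide)) (hinter 0 2 (by decide))
    (hinter 1 2 (by decide)) (hx' 0) (hx' 1) (hx' 2) with hth | hth | hth
  · exact key 0 1 2 (by decide) (by decide) hth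
  · exact key 0 2 1 (by decide) (by decide) hth
  · exact key 1 2 0 (by decide) (by decide) hth

lemma Av.map {S : Set V} {a b : V} (h : Av G {a} S b) (α : G ≃g G) :
    Av G {α a} (α '' S) (α b) := by
  induction h with
  | base c hc hS =>
    obtain rfl : c = a := hc
    exact .base _ rfl (by simpa using hS)
  | step u v hu huv hS ih =>
    exact .step _ _ ih (α.map_rel_iff.mpr huv) (by simpa using hS)

end

end WhitneyAux

theorem whitney_automorphism_maps_faces
    {V : Type*} [Fintype V] (G : SimpleGraph V) (h3 : ThreeConnected G)
    (emb₁ emb₂ : PlanarEmbedding G) (α : G ≃g G) :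
    ∀ F : Set (ℝ × ℝ), emb₁.IsFace F → ∃ F' : Set (ℝ × ℝ),
      emb₂.IsFace F' ∧ emb₂.boundaryEdges F' = Sym2.map ⇑α '' emb₁.boundaryEdges F := by
  open WhitneyAux in
  rintro F ⟨x, hx, rfl⟩
  have hx : x ∉ emb₁.image := hx
  obtain ⟨Vs, E, h, hD⟩ := exists_face_cyc h3 hx
  obtain ⟨h1, -, h2⟩ := h.face (fun hc => hx (car_image hc)) hD
  have hind := face_induced h3 h hx hD
  have hns := face_nonsep h3 h hx hD
  have hb : emb₁.boundaryEdges (connectedComponentIn emb₁.imageᶜ x) = E := by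
    have : connectedComponentIn emb₁.imageᶜ x = cmp emb₁.image x := rfl
    rw [this, h1, h2]
  rw [hb]
  refine (h.map α).peripheral_face ?_ ?_ emb₂
  · rintro _ ⟨a, ha, rfl⟩ _ ⟨b, hb, rfl⟩ hab
    exact ⟨s(a, b), hind a ha b hb (α.map_rel_iff.mp hab), by simp⟩
  · intro a ha b hb
    obtain ⟨a, rfl⟩ := α.surjective a
    obtain ⟨b, rfl⟩ := α.surjective b
    exact (hns a (fun hc => ha ⟨a, hc, rfl⟩) b (fun hc => hb ⟨b, hc, rfl⟩)).map α
end
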